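/- Let k ≥ 1 and s ≥ 1 be integers and F(y) = Σ_{j=1}^k a_j y^j with a_k ≠ 0; set A_k := max{ j·|a_j| : 1 ≤ j ≤ k }. There exists a constant c_s = c(s,k,|a_k|) > 0 such that for all constants c₀, C₀, C > 0 and every T > 0 there exists a constant C̃_s > 0 depending only on s, k, T, c₀, C₀, C and a_1,…,a_k with the following property: for every ε > 0, every Schwartz-class solution u of the KdV equation on [0,T] and every Schwartz-class solution U of the gKdV equation on [0,T] whose initial data u₀ := u(0) ≠ 0 and U₀ := U(0) ≠ 0 satisfy T ≤ c_s · min{ (A_k Σ_{j=1}^k ‖U₀‖_{H^{s+1}}^j)^{-1}, ‖u₀‖_{H^{s+1}}^{-1} }, ‖u₀‖_{H^{s+1}} ≤ c₀ ε, ‖U₀‖_{H^{s+1}} ≤ C₀ ε, and ‖u₀ − U₀‖_{H^s} ≤ C·max{ε², ε^{k+1}}, one has sup_{t ∈ [0,T]} ‖u(t) − U(t)‖_{L^∞} ≤ sup_{t ∈ [0,T]} ‖u(t) − U(t)‖_{H^s} ≤ C̃_s·max{ε², ε^{k+1}}. -/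

import Mathlib

open MeasureTheory Real

/-- The Sobolev `H^s` norm of a function `f : ℝ → ℝ`. -/
noncomputable def hNorm (s : ℕ) (f : ℝ → ℝ) : ℝ :=
  Real.sqrt (∑ n ∈ Finset.range (s + 1), ∫ x : ℝ, (iteratedDeriv n f x) ^ 2)

/-- The `L^∞` (sup) norm of `f : ℝ → ℝ`. -/
noncomputable def linfNorm (f : ℝ → ℝ) : ℝ := ⨆ x : ℝ, |f x|

/-- A Schwartz-class solution of `∂ₜU + ∂ₓ³U + F(U) ∂ₓU = 0` on `[0,T]`. -/
def IsSchwartzSolution (F : ℝ → ℝ) (T : ℝ) (U : ℝ → SchwartzMap ℝ ℝ) : Prop :=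
  ContDiff ℝ (⊤ : ℕ∞) (fun p : ℝ × ℝ => U p.1 p.2) ∧
  ∀ t ∈ Set.Icc (0 : ℝ) T, ∀ x : ℝ,
    deriv (fun τ : ℝ => U τ x) t + iteratedDeriv 3 (⇑(U t)) x
      + F (U t x) * deriv (⇑(U t)) x = 0

/-- `A_k = max { j·|a_j| : 1 ≤ j ≤ k }`. -/
noncomputable def coefA (k : ℕ) (a : ℕ → ℝ) : ℝ :=
  (((Finset.Icc 1 k).sup fun j => (j : NNReal) * ‖a j‖₊) : NNReal).toReal

/-!
The energy method for `∂ₜU + ∂ₓ³U + F(U) ∂ₓU = 0` and the algebra property of `Hᵐ` give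
`d/dt ‖U‖²_{Hᵐ} ≲ ‖F(U)‖_{Hᵐ} ‖U‖²_{Hᵐ}`. On a time interval short relative to the data both
solutions therefore stay below twice their initial `H^{s+1}` norm, hence are `O(ε)`. The difference
`w = u - U` solves the forced Airy equation `∂ₜw + ∂ₓ³w = F(U) ∂ₓU - u ∂ₓu`, whose right-hand side
is `O(max(ε², ε^{k+1}))` in `Hˢ`, and the energy estimate integrates this over `[0, T]`.

The bootstrap needs `t ↦ ‖U(t)‖_{Hᵐ}` to be bounded on `[0, T]`, which does not follow from joint
smoothness and Schwartz time slices. Sublevel sets of Sobolev norms are closed, so by Baire the norm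
is bounded near some time in every interval; the conserved mass, the conserved `H¹` energy and a
modified `H²` energy propagate the bound from there. This is unconditional for KdV, and for gKdV it
applies as soon as `U` is bounded in `L^∞`, which is the case when `u - U` is.
-/

namespace GKdV

/-! ### Schwartz functions as a predicate -/

/-- `f` is the underlying function of a Schwartz function. Stated as a predicate on plain functions
so that `fun_prop` can close the regularity side conditions. -/
@[fun_prop]
def IsSchwartz (f : ℝ → ℝ) : Prop := ∃ g : SchwartzMap ℝ ℝ, ⇑g = f

namespace IsSchwartz

variable {f g : ℝ → ℝ}

@[fun_prop]
theorem coe (g : SchwartzMap ℝ ℝ) : IsSchwartz fun x => g x := ⟨g, rfl⟩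

@[fun_prop]
theorem zero : IsSchwartz fun _ => 0 := ⟨0, rfl⟩

@[fun_prop]
theorem add (hf : IsSchwartz f) (hg : IsSchwartz g) : IsSchwartz fun x => f x + g x := by
  obtain ⟨f, rfl⟩ := hf
  obtain ⟨g, rfl⟩ := hg
  exact ⟨f + g, rfl⟩

@[fun_prop]
theorem sub (hf : IsSchwartz f) (hg : IsSchwartz g) : IsSchwartz fun x => f x - g x := by
  obtain ⟨f, rfl⟩ := hf
  obtain ⟨g, rfl⟩ := hg
  exact ⟨f - g, rfl⟩

@[fun_prop]
theorem neg (hf : IsSchwartz f) : IsSchwartz fun x => -f x := by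
  obtain ⟨f, rfl⟩ := hf
  exact ⟨-f, rfl⟩

@[fun_prop]
theorem const_mul (c : ℝ) (hf : IsSchwartz f) : IsSchwartz fun x => c * f x := by
  obtain ⟨f, rfl⟩ := hf
  exact ⟨c • f, rfl⟩

@[fun_prop]
theorem mul (hf : IsSchwartz f) (hg : IsSchwartz g) : IsSchwartz fun x => f x * g x := by
  obtain ⟨f, rfl⟩ := hf
  obtain ⟨g, rfl⟩ := hg
  exact ⟨SchwartzMap.pairing (ContinuousLinearMap.mul ℝ ℝ) f g, by
    ext; simp [SchwartzMap.pairing_apply_apply]⟩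

@[fun_prop]
theorem pow_succ (hf : IsSchwartz f) (n : ℕ) : IsSchwartz fun x => f x ^ (n + 1) := by
  induction n with
  | zero => simpa using hf
  | succ n ih => simpa only [_root_.pow_succ _ (n + 1)] using ih.mul hf

@[fun_prop]
theorem deriv (hf : IsSchwartz f) : IsSchwartz fun x => deriv f x := by
  obtain ⟨f, rfl⟩ := hf
  exact ⟨SchwartzMap.derivCLM ℝ ℝ f, by ext; simp [SchwartzMap.derivCLM_apply]⟩

@[fun_prop]
theorem iteratedDeriv (hf : IsSchwartz f) (n : ℕ) : IsSchwartz fun x => iteratedDeriv n f x := by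
  induction n with
  | zero => simpa only [iteratedDeriv_zero] using hf
  | succ n ih => simpa only [iteratedDeriv_succ] using ih.deriv

theorem comp_add_const (hf : IsSchwartz f) (h : ℝ) : IsSchwartz fun x => f (x + h) := by
  obtain ⟨f, rfl⟩ := hf
  exact ⟨SchwartzMap.compSubConstCLM ℝ (-h) f, by ext; simp⟩

@[fun_prop]
theorem eval_mul (P : Polynomial ℝ) (hf : IsSchwartz f) (hg : IsSchwartz g) :
    IsSchwartz fun x => P.eval (f x) * g x := by
  induction P using Polynomial.induction_on' with
  | add p q hp hq => simpa only [Polynomial.eval_add, add_mul] using hp.add hq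
  | monomial n a =>
    cases n with
    | zero => simpa using hg.const_mul a
    | succ n => simpa [mul_assoc] using ((hf.pow_succ n).mul hg).const_mul a

theorem eval {P : Polynomial ℝ} (hP : P.eval 0 = 0) (hf : IsSchwartz f) :
    IsSchwartz fun x => P.eval (f x) := by
  obtain ⟨Q, rfl⟩ : Polynomial.X ∣ P := by
    rw [Polynomial.X_dvd_iff, Polynomial.coeff_zero_eq_eval_zero, hP]
  simpa [mul_comm] using eval_mul Q hf hf

@[fun_prop]
theorem contDiff (hf : IsSchwartz f) {n : ℕ∞} : ContDiff ℝ n f := by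
  obtain ⟨f, rfl⟩ := hf
  exact f.smooth n

@[fun_prop]
theorem differentiable (hf : IsSchwartz f) : Differentiable ℝ f :=
  hf.contDiff.differentiable (n := 1) one_ne_zero

@[fun_prop]
theorem differentiableAt (hf : IsSchwartz f) {x : ℝ} : DifferentiableAt ℝ f x :=
  hf.differentiable x

@[fun_prop]
theorem continuous (hf : IsSchwartz f) : Continuous f :=
  hf.differentiable.continuous

theorem hasDerivAt (hf : IsSchwartz f) (x : ℝ) : HasDerivAt f (_root_.deriv f x) x :=
  hf.differentiableAt.hasDerivAt

theorem integrable (hf : IsSchwartz f) : Integrable f := by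
  obtain ⟨f, rfl⟩ := hf
  exact f.integrable

theorem tendsto_cocompact (hf : IsSchwartz f) :
    Filter.Tendsto f (Filter.cocompact ℝ) (nhds 0) := by
  obtain ⟨f, rfl⟩ := hf
  exact f.tendsto_cocompact

theorem exists_abs_le (hf : IsSchwartz f) : ∃ C, 0 ≤ C ∧ ∀ x, |f x| ≤ C := by
  obtain ⟨f, rfl⟩ := hf
  exact ⟨SchwartzMap.seminorm ℝ 0 0 f, apply_nonneg _ _, f.norm_le_seminorm ℝ⟩

end IsSchwartz

/-! ### The `L²` norm -/

section L2Norm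

variable {f g : ℝ → ℝ}

/-- The norm of `f` in `L²(ℝ)`. -/
noncomputable def l2Norm (f : ℝ → ℝ) : ℝ := √(∫ x, f x ^ 2)

theorem l2Norm_nonneg (f : ℝ → ℝ) : 0 ≤ l2Norm f := Real.sqrt_nonneg _

theorem l2Norm_sq (f : ℝ → ℝ) : l2Norm f ^ 2 = ∫ x, f x ^ 2 :=
  Real.sq_sqrt (integral_nonneg fun _ => sq_nonneg _)

theorem l2Norm_eq_norm_toLp (f : SchwartzMap ℝ ℝ) : l2Norm f = ‖f.toLp 2‖ := by
  simp [l2Norm, SchwartzMap.norm_toLp', Real.sqrt_eq_rpow]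

theorem integral_abs_mul_le_l2Norm_mul (hf : IsSchwartz f) (hg : IsSchwartz g) :
    ∫ x, |f x * g x| ≤ l2Norm f * l2Norm g := by
  obtain ⟨f, rfl⟩ := hf
  obtain ⟨g, rfl⟩ := hg
  have hf2 := (f.memLp 2 (μ := volume)).norm
  have hg2 := (g.memLp 2 (μ := volume)).norm
  simpa [l2Norm, Real.sqrt_eq_rpow, abs_mul] using
    integral_mul_le_Lp_mul_Lq_of_nonneg Real.HolderConjugate.two_two
      (.of_forall fun x => norm_nonneg (f x)) (.of_forall fun x => norm_nonneg (g x))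
      (by simpa using hf2) (by simpa using hg2)

theorem l2Norm_add_le (hf : IsSchwartz f) (hg : IsSchwartz g) :
    l2Norm (fun x => f x + g x) ≤ l2Norm f + l2Norm g := by
  obtain ⟨f, rfl⟩ := hf
  obtain ⟨g, rfl⟩ := hg
  have hadd : (f + g).toLp 2 volume = f.toLp 2 volume + g.toLp 2 volume :=
    map_add (SchwartzMap.toLpCLM ℝ ℝ 2 volume) f g
  have hle := norm_add_le (f.toLp 2 volume) (g.toLp 2 volume)
  rw [← hadd] at hle
  simp only [← l2Norm_eq_norm_toLp] at hle
  exact hle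

theorem l2Norm_sub_le (hf : IsSchwartz f) (hg : IsSchwartz g) :
    l2Norm (fun x => f x - g x) ≤ l2Norm f + l2Norm g := by
  simpa [sub_eq_add_neg, l2Norm] using l2Norm_add_le hf hg.neg

theorem l2Norm_sum_le {ι : Type*} (s : Finset ι) {f : ι → ℝ → ℝ} (hf : ∀ i ∈ s, IsSchwartz (f i)) :
    l2Norm (fun x => ∑ i ∈ s, f i x) ≤ ∑ i ∈ s, l2Norm (f i) := by
  simpa only [Finset.sum_fn] using
    Finset.le_sum_of_subadditive_on_pred l2Norm IsSchwartz (by simp [l2Norm])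
      (fun _ _ => l2Norm_add_le) (fun _ _ => IsSchwartz.add) f hf

theorem l2Norm_const_mul (c : ℝ) (f : ℝ → ℝ) : l2Norm (fun x => c * f x) = |c| * l2Norm f := by
  simp only [l2Norm, mul_pow, integral_const_mul, Real.sqrt_mul (sq_nonneg c),
    Real.sqrt_sq_eq_abs]

theorem l2Norm_comp_add_const (f : ℝ → ℝ) (h : ℝ) : l2Norm (fun x => f (x + h)) = l2Norm f := by
  rw [l2Norm, integral_add_right_eq_self (fun x => f x ^ 2) h, l2Norm]

theorem l2Norm_mul_le {B : ℝ} (hf : IsSchwartz f) (hg : IsSchwartz g) (hB : ∀ x, |f x| ≤ B) :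
    l2Norm (fun x => f x * g x) ≤ B * l2Norm g := by
  have hB₀ : 0 ≤ B := (abs_nonneg _).trans (hB 0)
  rw [← abs_of_nonneg hB₀, ← l2Norm_const_mul]
  refine Real.sqrt_le_sqrt (integral_mono (IsSchwartz.integrable (by fun_prop))
    (IsSchwartz.integrable (by fun_prop)) fun x => sq_le_sq.2 ?_)
  rw [abs_mul, abs_mul, abs_of_nonneg hB₀]
  gcongr
  exact hB x

theorem l2Norm_mul_le' {B : ℝ} (hf : IsSchwartz f) (hg : IsSchwartz g) (hB : ∀ x, |g x| ≤ B) :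
    l2Norm (fun x => f x * g x) ≤ l2Norm f * B := by
  simpa only [mul_comm] using l2Norm_mul_le hg hf hB

theorem integral_mul_deriv (hf : IsSchwartz f) (hg : IsSchwartz g) :
    ∫ x, f x * deriv g x = -∫ x, deriv f x * g x :=
  integral_mul_deriv_eq_deriv_mul_of_integrable (fun x _ => hf.hasDerivAt x)
    (fun x _ => hg.hasDerivAt x) (hf.mul hg.deriv).integrable (hf.deriv.mul hg).integrable
    (hf.mul hg).integrable

theorem sq_le_l2Norm_mul_l2Norm_deriv (hf : IsSchwartz f) (x : ℝ) :
    f x ^ 2 ≤ l2Norm f * l2Norm (deriv f) := by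
  have hderiv (y : ℝ) : HasDerivAt (fun y => f y ^ 2) (2 * (f y * deriv f y)) y :=
    ((hf.hasDerivAt y).fun_pow 2).congr_deriv (by push_cast; ring)
  have hinteg : Integrable fun y => 2 * (f y * deriv f y) := IsSchwartz.integrable (by fun_prop)
  have hlim := (hf.pow_succ 1).tendsto_cocompact
  have hleft : ∫ y in Set.Iic x, 2 * (f y * deriv f y) = f x ^ 2 - 0 :=
    integral_Iic_of_hasDerivAt_of_tendsto' (fun y _ => hderiv y) hinteg.integrableOn
      (hlim.mono_left atBot_le_cocompact)
  have hright : ∫ y in Set.Ioi x, 2 * (f y * deriv f y) = 0 - f x ^ 2 :=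
    integral_Ioi_of_hasDerivAt_of_tendsto' (fun y _ => hderiv y) hinteg.integrableOn
      (hlim.mono_left atTop_le_cocompact)
  have hsplit := integral_add_compl (measurableSet_Iic (a := x)) hinteg.abs
  have htwo : ∫ y, |2 * (f y * deriv f y)| = 2 * ∫ y, |f y * deriv f y| := by
    simp only [abs_mul (2 : ℝ), abs_two, integral_const_mul]
  have hleft_le : f x ^ 2 ≤ ∫ y in Set.Iic x, |2 * (f y * deriv f y)| := by
    simpa only [hleft, sub_zero, abs_sq] using
      abs_integral_le_integral_abs (μ := volume.restrict (Set.Iic x))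
        (f := fun y => 2 * (f y * deriv f y))
  have hright_le : f x ^ 2 ≤ ∫ y in Set.Ioi x, |2 * (f y * deriv f y)| := by
    simpa only [hright, zero_sub, abs_neg, abs_sq] using
      abs_integral_le_integral_abs (μ := volume.restrict (Set.Ioi x))
        (f := fun y => 2 * (f y * deriv f y))
  rw [Set.compl_Iic] at hsplit
  linarith [integral_abs_mul_le_l2Norm_mul hf hf.deriv]

end L2Norm

/-! ### Sobolev norms of Schwartz functions -/

section SobolevNorm

variable {f g : ℝ → ℝ} {m n : ℕ}

theorem hNorm_nonneg (m : ℕ) (f : ℝ → ℝ) : 0 ≤ hNorm m f := Real.sqrt_nonneg _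

theorem hNorm_eq_sqrt_sum_l2Norm_sq (m : ℕ) (f : ℝ → ℝ) :
    hNorm m f = √(∑ n ∈ Finset.range (m + 1), l2Norm (iteratedDeriv n f) ^ 2) := by
  simp only [hNorm, l2Norm_sq]

theorem hNorm_sq (m : ℕ) (f : ℝ → ℝ) :
    hNorm m f ^ 2 = ∑ n ∈ Finset.range (m + 1), l2Norm (iteratedDeriv n f) ^ 2 := by
  rw [hNorm_eq_sqrt_sum_l2Norm_sq, Real.sq_sqrt (Finset.sum_nonneg fun _ _ => sq_nonneg _)]

theorem hNorm_one_sq (f : ℝ → ℝ) : hNorm 1 f ^ 2 = l2Norm f ^ 2 + l2Norm (deriv f) ^ 2 := by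
  simp only [hNorm_sq, Finset.sum_range_succ, Finset.sum_range_zero, iteratedDeriv_zero,
    iteratedDeriv_one, zero_add]

theorem hNorm_mono (h : n ≤ m) (f : ℝ → ℝ) : hNorm n f ≤ hNorm m f := by
  simp only [hNorm_eq_sqrt_sum_l2Norm_sq]
  gcongr

theorem l2Norm_iteratedDeriv_le_hNorm (h : n ≤ m) (f : ℝ → ℝ) :
    l2Norm (iteratedDeriv n f) ≤ hNorm m f := by
  rw [hNorm_eq_sqrt_sum_l2Norm_sq]
  refine Real.le_sqrt_of_sq_le ?_
  exact Finset.single_le_sum (f := fun n => l2Norm (iteratedDeriv n f) ^ 2)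
    (fun _ _ => sq_nonneg _) (Finset.mem_range.2 (by lia))

theorem l2Norm_le_hNorm (m : ℕ) (f : ℝ → ℝ) : l2Norm f ≤ hNorm m f := by
  simpa only [iteratedDeriv_zero] using l2Norm_iteratedDeriv_le_hNorm m.zero_le f

theorem hNorm_le_sum_l2Norm (m : ℕ) (f : ℝ → ℝ) :
    hNorm m f ≤ ∑ n ∈ Finset.range (m + 1), l2Norm (iteratedDeriv n f) := by
  rw [hNorm_eq_sqrt_sum_l2Norm_sq, Real.sqrt_le_left (Finset.sum_nonneg fun _ _ => l2Norm_nonneg _)]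
  exact Finset.sum_sq_le_sq_sum_of_nonneg fun _ _ => l2Norm_nonneg _

theorem hNorm_le_of_forall_l2Norm_le {B : ℝ} (h : ∀ n ≤ m, l2Norm (iteratedDeriv n f) ≤ B) :
    hNorm m f ≤ (m + 1) * B := by
  refine (hNorm_le_sum_l2Norm m f).trans ((Finset.sum_le_card_nsmul _ _ B fun n hn => ?_).trans ?_)
  · exact h n (Finset.mem_range_succ_iff.1 hn)
  · simp

theorem hNorm_succ_le (m : ℕ) (f : ℝ → ℝ) :
    hNorm (m + 1) f ≤ hNorm m f + l2Norm (iteratedDeriv (m + 1) f) := by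
  rw [hNorm_eq_sqrt_sum_l2Norm_sq, Finset.sum_range_succ, ← hNorm_sq]
  exact Real.sqrt_le_iff.2 ⟨add_nonneg (hNorm_nonneg _ _) (l2Norm_nonneg _), by
    nlinarith [mul_nonneg (hNorm_nonneg m f) (l2Norm_nonneg (iteratedDeriv (m + 1) f))]⟩

theorem hNorm_deriv_le (m : ℕ) (f : ℝ → ℝ) : hNorm m (deriv f) ≤ hNorm (m + 1) f := by
  simp only [hNorm_eq_sqrt_sum_l2Norm_sq, ← iteratedDeriv_succ']
  rw [Finset.sum_range_succ' _ (m + 1)]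
  exact Real.sqrt_le_sqrt (le_add_of_nonneg_right (sq_nonneg _))

theorem abs_iteratedDeriv_le_hNorm (h : n + 1 ≤ m) (hf : IsSchwartz f) (x : ℝ) :
    |iteratedDeriv n f x| ≤ hNorm m f := by
  refine abs_le_of_sq_le_sq ?_ (hNorm_nonneg _ _)
  calc iteratedDeriv n f x ^ 2
      ≤ l2Norm (iteratedDeriv n f) * l2Norm (iteratedDeriv (n + 1) f) := by
        simpa only [iteratedDeriv_succ] using sq_le_l2Norm_mul_l2Norm_deriv (hf.iteratedDeriv n) x
    _ ≤ hNorm m f * hNorm m f :=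
        mul_le_mul (l2Norm_iteratedDeriv_le_hNorm (by lia) f) (l2Norm_iteratedDeriv_le_hNorm h f)
          (l2Norm_nonneg _) (hNorm_nonneg _ _)
    _ = hNorm m f ^ 2 := (sq _).symm

theorem abs_le_hNorm (hm : 1 ≤ m) (hf : IsSchwartz f) (x : ℝ) : |f x| ≤ hNorm m f := by
  simpa only [iteratedDeriv_zero] using abs_iteratedDeriv_le_hNorm (n := 0) hm hf x

theorem hNorm_pos (hm : 1 ≤ m) (hf : IsSchwartz f) (hf₀ : f ≠ 0) : 0 < hNorm m f := by
  obtain ⟨x, hx⟩ := Function.ne_iff.1 hf₀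
  exact (abs_pos.2 hx).trans_le (abs_le_hNorm hm hf x)

theorem iteratedDeriv_add_eq (n : ℕ) (hf : IsSchwartz f) (hg : IsSchwartz g) :
    iteratedDeriv n (fun x => f x + g x) = fun x => iteratedDeriv n f x + iteratedDeriv n g x :=
  funext fun _ => iteratedDeriv_fun_add hf.contDiff.contDiffAt hg.contDiff.contDiffAt

theorem iteratedDeriv_const_mul_eq (n : ℕ) (c : ℝ) (f : ℝ → ℝ) :
    iteratedDeriv n (fun x => c * f x) = fun x => c * iteratedDeriv n f x :=
  funext fun _ => iteratedDeriv_const_mul_field c f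

theorem hNorm_add_le (m : ℕ) (hf : IsSchwartz f) (hg : IsSchwartz g) :
    hNorm m (fun x => f x + g x) ≤ hNorm m f + hNorm m g := by
  have hCS := Real.sum_mul_le_sqrt_mul_sqrt (Finset.range (m + 1))
    (fun n => l2Norm (iteratedDeriv n f)) fun n => l2Norm (iteratedDeriv n g)
  rw [← hNorm_eq_sqrt_sum_l2Norm_sq, ← hNorm_eq_sqrt_sum_l2Norm_sq] at hCS
  refine abs_le_of_sq_le_sq' ?_ (add_nonneg (hNorm_nonneg m f) (hNorm_nonneg m g)) |>.2
  calc hNorm m (fun x => f x + g x) ^ 2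
      ≤ ∑ n ∈ Finset.range (m + 1),
          (l2Norm (iteratedDeriv n f) + l2Norm (iteratedDeriv n g)) ^ 2 := by
        rw [hNorm_sq]
        refine Finset.sum_le_sum fun n _ => pow_le_pow_left₀ (l2Norm_nonneg _) ?_ 2
        rw [iteratedDeriv_add_eq n hf hg]
        exact l2Norm_add_le (hf.iteratedDeriv n) (hg.iteratedDeriv n)
    _ = hNorm m f ^ 2 + 2 * ∑ n ∈ Finset.range (m + 1),
          l2Norm (iteratedDeriv n f) * l2Norm (iteratedDeriv n g) + hNorm m g ^ 2 := by
        simp only [add_sq, Finset.sum_add_distrib, hNorm_sq, Finset.mul_sum, mul_assoc]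
    _ ≤ (hNorm m f + hNorm m g) ^ 2 := by linarith

theorem hNorm_const_mul (m : ℕ) (c : ℝ) (f : ℝ → ℝ) :
    hNorm m (fun x => c * f x) = |c| * hNorm m f := by
  simp only [hNorm_eq_sqrt_sum_l2Norm_sq, iteratedDeriv_const_mul_eq, l2Norm_const_mul, mul_pow,
    ← Finset.mul_sum, Real.sqrt_mul (sq_nonneg |c|), Real.sqrt_sq (abs_nonneg c)]

theorem hNorm_sub_le (m : ℕ) (hf : IsSchwartz f) (hg : IsSchwartz g) :
    hNorm m (fun x => f x - g x) ≤ hNorm m f + hNorm m g := by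
  have h := hNorm_add_le m hf (hg.const_mul (-1))
  rw [hNorm_const_mul] at h
  simpa [sub_eq_add_neg] using h

theorem hNorm_sum_le {ι : Type*} (m : ℕ) {s : Finset ι} {f : ι → ℝ → ℝ}
    (hf : ∀ i ∈ s, IsSchwartz (f i)) :
    hNorm m (fun x => ∑ i ∈ s, f i x) ≤ ∑ i ∈ s, hNorm m (f i) := by
  simpa only [Finset.sum_fn] using
    Finset.le_sum_of_subadditive_on_pred (hNorm m) IsSchwartz
      (le_of_eq <| by simpa [Pi.zero_def] using hNorm_const_mul m 0 0) (fun _ _ => hNorm_add_le m)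
      (fun _ _ => IsSchwartz.add) f hf

theorem iteratedDeriv_mul_eq_sum (hf : IsSchwartz f) (hg : IsSchwartz g) (n : ℕ) :
    iteratedDeriv n (fun x => f x * g x) = fun x => ∑ i ∈ Finset.range (n + 1),
      (n.choose i : ℝ) * (iteratedDeriv i f x * iteratedDeriv (n - i) g x) := by
  ext x
  rw [iteratedDeriv_fun_mul hf.contDiff.contDiffAt hg.contDiff.contDiffAt]
  simp only [mul_assoc]

theorem l2Norm_iteratedDeriv_mul_iteratedDeriv_le {i j : ℕ} (hf : IsSchwartz f)
    (hg : IsSchwartz g) (hm : 1 ≤ m) (hij : i + j ≤ m) :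
    l2Norm (fun x => iteratedDeriv i f x * iteratedDeriv j g x) ≤ hNorm m f * hNorm m g := by
  have hf₀ := hNorm_nonneg m f
  have hg₀ := hNorm_nonneg m g
  rcases Nat.lt_or_ge i m with hi | hi
  · refine (l2Norm_mul_le (by fun_prop) (by fun_prop) (abs_iteratedDeriv_le_hNorm hi hf)).trans ?_
    gcongr
    exact l2Norm_iteratedDeriv_le_hNorm (by lia) g
  · refine (l2Norm_mul_le' (by fun_prop) (by fun_prop)
      (abs_iteratedDeriv_le_hNorm (m := m) (by lia) hg)).trans ?_
    gcongr
    exact l2Norm_iteratedDeriv_le_hNorm (by lia) f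

theorem l2Norm_sum_choose_mul_le {s : Finset ℕ} {F : ℕ → ℝ → ℝ} {S : ℝ}
    (hs : s ⊆ Finset.range (n + 1)) (hF : ∀ i ∈ s, IsSchwartz (F i))
    (hS : ∀ i ∈ s, l2Norm (F i) ≤ S) (hS₀ : 0 ≤ S) :
    l2Norm (fun x => ∑ i ∈ s, (n.choose i : ℝ) * F i x) ≤ 2 ^ n * S := by
  calc l2Norm (fun x => ∑ i ∈ s, (n.choose i : ℝ) * F i x)
      ≤ ∑ i ∈ s, l2Norm fun x => (n.choose i : ℝ) * F i x :=
        l2Norm_sum_le s fun i hi => (hF i hi).const_mul _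
    _ ≤ ∑ i ∈ s, (n.choose i : ℝ) * S := by
        refine Finset.sum_le_sum fun i hi => ?_
        rw [l2Norm_const_mul, Nat.abs_cast]
        gcongr
        exact hS i hi
    _ ≤ ∑ i ∈ Finset.range (n + 1), (n.choose i : ℝ) * S := by gcongr
    _ = 2 ^ n * S := by rw [← Finset.sum_mul]; exact_mod_cast congr($(n.sum_range_choose) * S)

/-- The constant in the algebra property `‖fg‖_{Hᵐ} ≤ algebraConst m ‖f‖_{Hᵐ} ‖g‖_{Hᵐ}`. -/
noncomputable def algebraConst (m : ℕ) : ℝ := (m + 1) * 2 ^ m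

theorem one_le_algebraConst (m : ℕ) : 1 ≤ algebraConst m :=
  one_le_mul_of_one_le_of_one_le (by simp) (one_le_pow₀ one_le_two)

theorem hNorm_mul_le (hm : 1 ≤ m) (hf : IsSchwartz f) (hg : IsSchwartz g) :
    hNorm m (fun x => f x * g x) ≤ algebraConst m * (hNorm m f * hNorm m g) := by
  have hfg := mul_nonneg (hNorm_nonneg m f) (hNorm_nonneg m g)
  rw [algebraConst, mul_assoc]
  refine hNorm_le_of_forall_l2Norm_le fun n hn => ?_
  rw [iteratedDeriv_mul_eq_sum hf hg]
  refine (l2Norm_sum_choose_mul_le subset_rfl (fun i _ => by fun_prop) (fun i hi => ?_) hfg).trans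
    (by gcongr; norm_num)
  exact l2Norm_iteratedDeriv_mul_iteratedDeriv_le hf hg hm
    (by have := Finset.mem_range.1 hi; lia)

theorem hNorm_pow_succ_le (hm : 1 ≤ m) (hf : IsSchwartz f) (j : ℕ) :
    hNorm m (fun x => f x ^ (j + 1)) ≤ algebraConst m ^ j * hNorm m f ^ (j + 1) := by
  induction j with
  | zero => simp
  | succ j ih =>
    have hc := one_le_algebraConst m
    calc hNorm m (fun x => f x ^ (j + 1 + 1))
        ≤ algebraConst m * (hNorm m (fun x => f x ^ (j + 1)) * hNorm m f) := by
          simpa only [pow_succ _ (j + 1)] using hNorm_mul_le hm (hf.pow_succ j) hf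
      _ ≤ algebraConst m * (algebraConst m ^ j * hNorm m f ^ (j + 1) * hNorm m f) := by
          have := hNorm_nonneg m f
          gcongr
      _ = algebraConst m ^ (j + 1) * hNorm m f ^ (j + 1 + 1) := by ring

theorem hNorm_sum_mul_pow_le {k : ℕ} {a : ℕ → ℝ} {A : ℝ} (hm : 1 ≤ m) (hf : IsSchwartz f)
    (ha : ∀ j ∈ Finset.Icc 1 k, |a j| ≤ A) :
    hNorm m (fun x => ∑ j ∈ Finset.Icc 1 k, a j * f x ^ j) ≤
      algebraConst m ^ k * (A * ∑ j ∈ Finset.Icc 1 k, hNorm m f ^ j) := by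
  have hSchwartz : ∀ j ∈ Finset.Icc 1 k, IsSchwartz fun x => a j * f x ^ j := fun j hj => by
    obtain ⟨i, rfl⟩ := Nat.exists_eq_add_of_le' (Finset.mem_Icc.1 hj).1
    fun_prop
  refine (hNorm_sum_le m hSchwartz).trans ?_
  rw [← mul_assoc, Finset.mul_sum]
  refine Finset.sum_le_sum fun j hj => ?_
  have haj := ha j hj
  obtain ⟨i, rfl⟩ := Nat.exists_eq_add_of_le' (Finset.mem_Icc.1 hj).1
  have hik : i ≤ k := by have := (Finset.mem_Icc.1 hj).2; lia
  have hf₀ := hNorm_nonneg m f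
  have hc := one_le_algebraConst m
  have hA : 0 ≤ A := (abs_nonneg _).trans haj
  calc hNorm m (fun x => a (i + 1) * f x ^ (i + 1))
      ≤ |a (i + 1)| * (algebraConst m ^ i * hNorm m f ^ (i + 1)) := by
        rw [hNorm_const_mul]
        gcongr
        exact hNorm_pow_succ_le hm hf i
    _ ≤ A * (algebraConst m ^ k * hNorm m f ^ (i + 1)) := by gcongr
    _ = algebraConst m ^ k * A * hNorm m f ^ (i + 1) := by ring

theorem exists_hNorm_eval_mul_le (hm : 1 ≤ m) (P : Polynomial ℝ) (B : ℝ) :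
    ∃ L, 0 ≤ L ∧ ∀ f g, IsSchwartz f → IsSchwartz g → hNorm m f ≤ B →
      hNorm m (fun x => P.eval (f x) * g x) ≤ L * hNorm m g := by
  induction P using Polynomial.induction_on with
  | C a =>
    refine ⟨|a|, abs_nonneg a, fun f g _ _ _ => ?_⟩
    simpa only [Polynomial.eval_C] using (hNorm_const_mul m a g).le
  | add P Q hP hQ =>
    obtain ⟨L, hL, hP⟩ := hP
    obtain ⟨M, hM, hQ⟩ := hQ
    refine ⟨L + M, add_nonneg hL hM, fun f g hf hg hB => ?_⟩
    simp only [Polynomial.eval_add, add_mul]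
    exact (hNorm_add_le m (by fun_prop) (by fun_prop)).trans
      (add_le_add (hP f g hf hg hB) (hQ f g hf hg hB))
  | monomial n a ih =>
    obtain ⟨L, hL, ih⟩ := ih
    have hc := one_le_algebraConst m
    refine ⟨L * (algebraConst m * max B 0), by positivity, fun f g hf hg hB => ?_⟩
    have hg₀ := hNorm_nonneg m g
    have hshift (x : ℝ) : (Polynomial.C a * Polynomial.X ^ (n + 1)).eval (f x) * g x =
        (Polynomial.C a * Polynomial.X ^ n).eval (f x) * (f x * g x) := by
      simp only [Polynomial.eval_mul, Polynomial.eval_C, Polynomial.eval_pow, Polynomial.eval_X]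
      ring
    simp only [hshift]
    have hfg := (ih f _ hf (hf.mul hg) hB).trans
      (mul_le_mul_of_nonneg_left (hNorm_mul_le hm hf hg) hL)
    refine hfg.trans ?_
    rw [← mul_assoc (algebraConst m), ← mul_assoc L]
    gcongr
    exact hB.trans (le_max_left _ _)

theorem exists_hNorm_eval_le (hm : 1 ≤ m) {P : Polynomial ℝ} (hP : P.eval 0 = 0) (B : ℝ) :
    ∃ L, 0 ≤ L ∧ ∀ f, IsSchwartz f → hNorm m f ≤ B → hNorm m (fun x => P.eval (f x)) ≤ L := by
  obtain ⟨Q, rfl⟩ : Polynomial.X ∣ P := by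
    rw [Polynomial.X_dvd_iff, Polynomial.coeff_zero_eq_eval_zero, hP]
  obtain ⟨L, hL, h⟩ := exists_hNorm_eval_mul_le hm Q B
  refine ⟨L * max B 0, by positivity, fun f hf hB => ?_⟩
  simp only [Polynomial.eval_mul, Polynomial.eval_X, mul_comm (f _)]
  exact (h f f hf hf hB).trans (by gcongr; exact hB.trans (le_max_left _ _))

theorem deriv_eval_comp (P : Polynomial ℝ) (hf : IsSchwartz f) :
    deriv (fun x => P.eval (f x)) = fun x => P.derivative.eval (f x) * deriv f x :=
  funext fun x => ((P.hasDerivAt (f x)).comp x (hf.hasDerivAt x)).deriv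

/-- The estimate is linear in the top-order norm because one derivative falls on `f` alone. -/
theorem exists_hNorm_succ_eval_le (hm : 1 ≤ m) {P : Polynomial ℝ} (hP : P.eval 0 = 0) (B : ℝ) :
    ∃ L, 0 ≤ L ∧ ∀ f, IsSchwartz f → hNorm m f ≤ B →
      hNorm (m + 1) (fun x => P.eval (f x)) ≤ L * (1 + hNorm (m + 1) f) := by
  obtain ⟨L, hL, hlow⟩ := exists_hNorm_eval_le hm hP B
  obtain ⟨M, hM, htop⟩ := exists_hNorm_eval_mul_le hm P.derivative B
  refine ⟨L + M, add_nonneg hL hM, fun f hf hB => ?_⟩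
  have htop' : l2Norm (iteratedDeriv (m + 1) fun x => P.eval (f x)) ≤ M * hNorm (m + 1) f := by
    rw [iteratedDeriv_succ', deriv_eval_comp P hf]
    refine (l2Norm_iteratedDeriv_le_hNorm le_rfl _).trans ((htop f _ hf hf.deriv hB).trans ?_)
    gcongr
    exact hNorm_deriv_le m f
  have hf₀ := hNorm_nonneg (m + 1) f
  calc hNorm (m + 1) (fun x => P.eval (f x))
      ≤ L + M * hNorm (m + 1) f := (hNorm_succ_le m _).trans (add_le_add (hlow f hf hB) htop')
    _ ≤ (L + M) * (1 + hNorm (m + 1) f) := by nlinarith [mul_nonneg hL hf₀]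

end SobolevNorm

/-! ### Commutators with a transport term -/

section TransportCommutator

variable {b f : ℝ → ℝ} {m n : ℕ}

/-- The commutator `∂ₓⁿ(b ∂ₓf) - b ∂ₓⁿ⁺¹f`, in which `f` is differentiated at most `n` times. -/
noncomputable def transportCommutator (n : ℕ) (b f : ℝ → ℝ) (x : ℝ) : ℝ :=
  iteratedDeriv n (fun y => b y * deriv f y) x - b x * iteratedDeriv (n + 1) f x

@[fun_prop]
theorem IsSchwartz.transportCommutator (n : ℕ) (hb : IsSchwartz b) (hf : IsSchwartz f) :
    IsSchwartz fun x => transportCommutator n b f x := by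
  unfold GKdV.transportCommutator
  fun_prop

theorem transportCommutator_eq_sum (hb : IsSchwartz b) (hf : IsSchwartz f) :
    transportCommutator n b f = fun x => ∑ i ∈ Finset.Icc 1 n,
      (n.choose i : ℝ) * (iteratedDeriv i b x * iteratedDeriv (n - i + 1) f x) := by
  ext x
  rw [transportCommutator, iteratedDeriv_mul_eq_sum hb hf.deriv]
  simp only [← iteratedDeriv_succ']
  rw [Finset.range_eq_Ico, Finset.sum_eq_sum_Ico_succ_bot n.succ_pos, Nat.choose_zero_right,
    Nat.cast_one, one_mul, iteratedDeriv_zero, Nat.sub_zero, add_sub_cancel_left]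
  rfl

theorem l2Norm_transportCommutator_le {S : ℝ} (hb : IsSchwartz b) (hf : IsSchwartz f)
    (hS₀ : 0 ≤ S) (hS : ∀ i, 1 ≤ i → i ≤ n →
      l2Norm (fun x => iteratedDeriv i b x * iteratedDeriv (n - i + 1) f x) ≤ S) :
    l2Norm (transportCommutator n b f) ≤ 2 ^ n * S := by
  rw [transportCommutator_eq_sum hb hf]
  refine l2Norm_sum_choose_mul_le (fun i hi => ?_) (fun i _ => by fun_prop) (fun i hi => ?_) hS₀
  · exact Finset.mem_range_succ_iff.2 (Finset.mem_Icc.1 hi).2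
  · exact hS i (Finset.mem_Icc.1 hi).1 (Finset.mem_Icc.1 hi).2

theorem l2Norm_transportCommutator_le_hNorm (hnm : n ≤ m) (hm : 2 ≤ m) (hb : IsSchwartz b)
    (hf : IsSchwartz f) :
    l2Norm (transportCommutator n b f) ≤ 2 ^ n * (hNorm m b * hNorm m f) := by
  have hb₀ := hNorm_nonneg m b
  have hf₀ := hNorm_nonneg m f
  refine l2Norm_transportCommutator_le hb hf (by positivity) fun i hi hin => ?_
  rcases hi.eq_or_lt with rfl | hi
  · refine (l2Norm_mul_le (by fun_prop) (by fun_prop)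
      (abs_iteratedDeriv_le_hNorm (m := m) hm hb)).trans ?_
    gcongr
    exact l2Norm_iteratedDeriv_le_hNorm (by lia) f
  · refine (l2Norm_mul_le' (by fun_prop) (by fun_prop)
      (abs_iteratedDeriv_le_hNorm (m := m) (by lia) hf)).trans ?_
    gcongr
    exact l2Norm_iteratedDeriv_le_hNorm (by lia) b

theorem l2Norm_transportCommutator_succ_le_hNorm (hm : 2 ≤ m) (hb : IsSchwartz b)
    (hf : IsSchwartz f) :
    l2Norm (transportCommutator (m + 1) b f) ≤
      2 ^ (m + 1) * (hNorm m b * hNorm (m + 1) f + hNorm (m + 1) b * hNorm m f) := by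
  have hb₀ := hNorm_nonneg m b
  have hf₀ := hNorm_nonneg m f
  have hb₁ := hNorm_nonneg (m + 1) b
  have hf₁ := hNorm_nonneg (m + 1) f
  have hleft := mul_nonneg hb₀ hf₁
  have hright := mul_nonneg hb₁ hf₀
  refine l2Norm_transportCommutator_le hb hf (add_nonneg hleft hright) fun i hi him => ?_
  rcases hi.eq_or_lt with rfl | hi
  · refine (l2Norm_mul_le (by fun_prop) (by fun_prop)
      (abs_iteratedDeriv_le_hNorm hm hb)).trans (le_add_of_le_of_nonneg ?_ hright)
    gcongr
    exact l2Norm_iteratedDeriv_le_hNorm (by lia) f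
  rcases him.eq_or_lt with rfl | him
  · refine (l2Norm_mul_le' (by fun_prop) (by fun_prop)
      (abs_iteratedDeriv_le_hNorm (m := m) (by lia) hf)).trans (le_add_of_nonneg_of_le hleft ?_)
    gcongr
    exact l2Norm_iteratedDeriv_le_hNorm le_rfl b
  · refine (l2Norm_mul_le' (by fun_prop) (by fun_prop)
      (abs_iteratedDeriv_le_hNorm (m := m + 1) (by lia) hf)).trans
      (le_add_of_le_of_nonneg ?_ hright)
    gcongr
    exact l2Norm_iteratedDeriv_le_hNorm (by lia) b

end TransportCommutator

/-! ### Difference quotients -/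

section DiffQuot

variable {f : ℝ → ℝ}

/-- The forward difference quotient of `f` with step `h`. -/
noncomputable def diffQuot (h : ℝ) (f : ℝ → ℝ) (x : ℝ) : ℝ := h⁻¹ * (f (x + h) - f x)

theorem IsSchwartz.diffQuot (h : ℝ) (hf : IsSchwartz f) : IsSchwartz (diffQuot h f) :=
  ((hf.comp_add_const h).sub hf).const_mul _

theorem exists_diffQuot_eq_deriv (hf : IsSchwartz f) {h : ℝ} (hh : 0 < h) (x : ℝ) :
    ∃ y ∈ Set.Ioo x (x + h), diffQuot h f x = deriv f y := by
  obtain ⟨y, hy, hslope⟩ := exists_deriv_eq_slope f (lt_add_of_pos_right x hh)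
    hf.continuous.continuousOn hf.differentiable.differentiableOn
  refine ⟨y, hy, ?_⟩
  rw [hslope, add_sub_cancel_left, div_eq_inv_mul, diffQuot]

theorem IsSchwartz.exists_one_add_abs_mul_le (hf : IsSchwartz f) :
    ∃ C, ∀ x, (1 + |x|) * |f x| ≤ C := by
  obtain ⟨f, rfl⟩ := hf
  exact ⟨2 ^ 1 * ((Finset.Iic (1, 0)).sup fun m => SchwartzMap.seminorm ℝ m.1 m.2) f, fun x => by
    simpa using SchwartzMap.one_add_le_sup_seminorm_apply (𝕜 := ℝ) (m := (1, 0)) le_rfl le_rfl f x⟩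

theorem exists_diffQuot_sq_le (hf : IsSchwartz f) :
    ∃ C, ∀ h ∈ Set.Ioc (0 : ℝ) 1, ∀ x, diffQuot h f x ^ 2 ≤ C * (1 + x ^ 2)⁻¹ := by
  obtain ⟨C, hC⟩ := hf.deriv.exists_one_add_abs_mul_le
  refine ⟨(2 * C) ^ 2, fun h hh x => ?_⟩
  obtain ⟨y, hy, hxy⟩ := exists_diffQuot_eq_deriv hf hh.1 x
  have hxy' : 1 + |x| ≤ 2 * (1 + |y|) := by
    have hdist : |x - y| ≤ 1 := abs_le.2 ⟨by linarith [hy.2, hh.2], by linarith [hy.1]⟩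
    linarith [abs_sub_abs_le_abs_sub x y, abs_nonneg y]
  have hdecay : (1 + |x|) * |deriv f y| ≤ 2 * C := by
    linarith [hC y, mul_le_mul_of_nonneg_right hxy' (abs_nonneg (deriv f y))]
  rw [hxy, ← div_eq_mul_inv, le_div_iff₀ (by positivity)]
  calc deriv f y ^ 2 * (1 + x ^ 2) ≤ ((1 + |x|) * |deriv f y|) ^ 2 := by
        rw [mul_pow, sq_abs, mul_comm]
        gcongr
        linarith [sq_abs x, abs_nonneg x, add_sq 1 |x|]
    _ ≤ (2 * C) ^ 2 := by gcongr

theorem tendsto_l2Norm_diffQuot (hf : IsSchwartz f) :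
    Filter.Tendsto (fun h => l2Norm (diffQuot h f)) (nhdsWithin 0 (Set.Ioi 0))
      (nhds (l2Norm (deriv f))) := by
  obtain ⟨C, hC⟩ := exists_diffQuot_sq_le hf
  refine (Real.continuous_sqrt.tendsto _).comp (tendsto_integral_filter_of_dominated_convergence
    (fun x => C * (1 + x ^ 2)⁻¹) (.of_forall fun h => ?_) ?_
    (integrable_inv_one_add_sq.const_mul C) (.of_forall fun x => ?_))
  · exact ((hf.diffQuot h).pow_succ 1).continuous.aestronglyMeasurable
  · filter_upwards [Ioc_mem_nhdsGT one_pos] with h hh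
    exact .of_forall fun x => by simpa using hC h hh x
  · refine Filter.Tendsto.pow ?_ 2
    simpa only [diffQuot, smul_eq_mul] using
      (hf.hasDerivAt x).tendsto_slope_zero.mono_left (nhdsGT_le_nhdsNE 0)

theorem l2Norm_comp_add_nat_mul_sub_le (hf : IsSchwartz f) (δ : ℝ) (n : ℕ) :
    l2Norm (fun x => f (x + n * δ) - f x) ≤ n * l2Norm (fun x => f (x + δ) - f x) := by
  induction n with
  | zero => simp [l2Norm]
  | succ n ih =>
    have hstep : l2Norm (fun x => f (x + n * δ + δ) - f (x + n * δ)) =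
        l2Norm (fun x => f (x + δ) - f x) :=
      l2Norm_comp_add_const (fun x => f (x + δ) - f x) (n * δ)
    calc l2Norm (fun x => f (x + (n + 1 : ℕ) * δ) - f x)
        = l2Norm (fun x => (f (x + n * δ + δ) - f (x + n * δ)) + (f (x + n * δ) - f x)) := by
          congr 1
          ext x
          rw [sub_add_sub_cancel]
          congr 2
          push_cast
          ring
      _ ≤ l2Norm (fun x => f (x + δ) - f x) + l2Norm (fun x => f (x + n * δ) - f x) := by
          rw [← hstep]
          exact l2Norm_add_le (((hf.comp_add_const δ).sub hf).comp_add_const _)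
            ((hf.comp_add_const _).sub hf)
      _ ≤ (n + 1 : ℕ) * l2Norm (fun x => f (x + δ) - f x) := by push_cast; linarith

theorem l2Norm_diffQuot_le (hf : IsSchwartz f) {h : ℝ} (hh : 0 < h) :
    l2Norm (diffQuot h f) ≤ l2Norm (deriv f) := by
  -- `diffQuot h f` is an average of translates of the quotients of step `h / (n + 1)`.
  have hrefine (n : ℕ) : l2Norm (diffQuot h f) ≤ l2Norm (diffQuot (h / (n + 1 : ℕ)) f) := by
    have hn : (0 : ℝ) < (n + 1 : ℕ) := by positivity
    have hsub := l2Norm_comp_add_nat_mul_sub_le hf (h / (n + 1 : ℕ)) (n + 1)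
    rw [mul_div_cancel₀ _ hn.ne'] at hsub
    unfold diffQuot
    rw [l2Norm_const_mul, l2Norm_const_mul, abs_of_pos (by positivity), abs_of_pos (by positivity),
      inv_div, div_eq_inv_mul, mul_assoc]
    gcongr
  have hsteps : Filter.Tendsto (fun n : ℕ => h / ((n + 1 : ℕ) : ℝ)) Filter.atTop
      (nhdsWithin 0 (Set.Ioi 0)) :=
    tendsto_nhdsWithin_iff.2
      ⟨(tendsto_const_div_atTop_nhds_zero_nat h).comp (Filter.tendsto_add_atTop_nat 1),
        .of_forall fun n => div_pos hh (by positivity)⟩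
  exact ge_of_tendsto' ((tendsto_l2Norm_diffQuot hf).comp hsteps) hrefine

end DiffQuot

/-! ### Real-variable lemmas -/

section RealVariable

open Filter Set Topology

theorem bddAbove_image_of_isBoundedUnder_nhdsWithin {X α : Type*} [TopologicalSpace X]
    [SemilatticeSup α] [Nonempty α] {s : Set X} {f : X → α} (hs : IsCompact s)
    (h : ∀ x ∈ s, IsBoundedUnder (· ≤ ·) (𝓝[s] x) f) : BddAbove (f '' s) := by
  refine hs.induction_on (p := fun t => BddAbove (f '' t)) (by simp)
    (fun t u htu hu => hu.mono (image_mono htu))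
    (fun t u ht hu => by simpa only [image_union] using ht.union hu) fun x hx => ?_
  obtain ⟨M, hM⟩ := h x hx
  exact ⟨_, eventually_map.1 hM, M, by rintro _ ⟨y, hy, rfl⟩; exact hy⟩

theorem isOpen_setOf_isBoundedUnder_nhdsWithin {X α : Type*} [TopologicalSpace X] [LE α]
    (s : Set X) (f : X → α) : IsOpen {x | IsBoundedUnder (· ≤ ·) (𝓝[s] x) f} := by
  refine isOpen_iff_mem_nhds.2 fun x ⟨M, hM⟩ => ?_
  filter_upwards [eventually_nhds_nhdsWithin.2 (eventually_map.1 hM)] with y hy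
  exact ⟨M, hy⟩

section Baire

variable {f : ℝ → ℝ} {a b : ℝ}

theorem bddAbove_image_uIcc_of_isBoundedUnder_ne
    (H : ∀ K, ∃ L, ∀ c ∈ Icc a b, ∀ d ∈ Icc a b, BddAbove (f '' uIcc c d) → f c ≤ K → f d ≤ L)
    {c d : ℝ} (hc : c ∈ Icc a b) (hd : d ∈ Icc a b)
    (h : ∀ s ∈ uIcc c d, s ≠ c → IsBoundedUnder (· ≤ ·) (𝓝[Icc a b] s) f) :
    BddAbove (f '' uIcc c d) := by
  obtain ⟨L, hL⟩ := H (f d)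
  have hbound (s : ℝ) (hs : s ∈ uIcc c d) (hsc : s ≠ c) : f s ≤ L := by
    have hsub : uIcc d s ⊆ uIcc c d := uIcc_subset_uIcc right_mem_uIcc hs
    have hcd : uIcc c d ⊆ Icc a b := uIcc_subset_Icc hc hd
    refine hL d hd s (hcd hs) (bddAbove_image_of_isBoundedUnder_nhdsWithin isCompact_uIcc
      fun r hr => ?_) le_rfl
    refine (h r (hsub hr) ?_).mono (nhdsWithin_mono _ (hsub.trans hcd))
    rintro rfl
    exact hsc (by grind [mem_uIcc])
  refine ⟨max (f c) L, ?_⟩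
  rintro _ ⟨s, hs, rfl⟩
  rcases eq_or_ne s c with rfl | hsc
  · exact le_max_left _ _
  · exact (hbound s hs hsc).trans (le_max_right _ _)

theorem exists_mem_ball_forall_le {E : Set ℝ} (hE : IsClosed E) (hne : E.Nonempty)
    (hf : ∀ K, IsClosed {t ∈ E | f t ≤ K}) :
    ∃ t₀ ∈ E, ∃ δ > 0, ∃ K, ∀ t ∈ E, dist t t₀ < δ → f t ≤ K := by
  have := hE.completeSpace_coe
  have := hne.to_subtype
  have hclosed (n : ℕ) : IsClosed {t : E | f t ≤ n} := by
    convert (hf n).preimage (continuous_subtype_val (p := (· ∈ E))) using 1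
    exact ext fun t => (and_iff_right t.2).symm
  obtain ⟨n, t₀, ht₀⟩ := nonempty_interior_of_iUnion_of_closed hclosed
    (iUnion_eq_univ_iff.2 fun t => exists_nat_ge (f t))
  obtain ⟨δ, hδ, hball⟩ := Metric.mem_nhds_iff.1 (mem_interior_iff_mem_nhds.1 ht₀)
  exact ⟨t₀, t₀.2, δ, hδ, n, fun t ht htδ => @hball ⟨t, ht⟩ htδ⟩

/-- By Baire's theorem `f` is bounded on a portion of the closed set of points near which it is
unbounded, and `H` propagates this bound to a neighbourhood, a contradiction. -/
theorem bddAbove_image_Icc_of_isClosed_le (hf : ∀ K, IsClosed {t ∈ Icc a b | f t ≤ K})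
    (H : ∀ K, ∃ L, ∀ c ∈ Icc a b, ∀ d ∈ Icc a b, BddAbove (f '' uIcc c d) → f c ≤ K → f d ≤ L) :
    BddAbove (f '' Icc a b) := by
  refine bddAbove_image_of_isBoundedUnder_nhdsWithin isCompact_Icc ?_
  by_contra! hbad
  set E := {t ∈ Icc a b | ¬IsBoundedUnder (· ≤ ·) (𝓝[Icc a b] t) f}
  have hE : IsClosed E :=
    isClosed_Icc.inter (isOpen_setOf_isBoundedUnder_nhdsWithin (Icc a b) f).isClosed_compl
  obtain ⟨t₀, ht₀, δ, hδ, K, hK⟩ := exists_mem_ball_forall_le (f := f) hE hbad fun K => by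
    convert hE.inter (hf K) using 1
    grind
  obtain ⟨L, hL⟩ := H K
  refine ht₀.2 ⟨L, eventually_map.2 ?_⟩
  filter_upwards [self_mem_nhdsWithin, mem_nhdsWithin_of_mem_nhds (Metric.ball_mem_nhds t₀ hδ)]
    with t ht htδ
  obtain ⟨α, ⟨hαE, hαt⟩, hmin⟩ := (isCompact_uIcc.inter_left hE).exists_isMinOn
    ⟨t₀, ht₀, left_mem_uIcc⟩
    (continuous_const.dist continuous_id : Continuous (dist t)).continuousOn
  refine hL α hαE.1 t ht (bddAbove_image_uIcc_of_isBoundedUnder_ne H hαE.1 ht fun s hs hsα => ?_)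
    (hK α hαE ?_)
  · by_contra hsE
    have hle := hmin ⟨⟨uIcc_subset_Icc hαE.1 ht hs, hsE⟩,
      uIcc_subset_uIcc hαt right_mem_uIcc hs⟩
    simp only [mem_ofPred_eq, Real.dist_eq] at hle
    grind [mem_uIcc]
  · simp only [Metric.mem_ball, Real.dist_eq] at htδ ⊢
    grind [mem_uIcc]

end Baire

section Gronwall

variable {y : ℝ → ℝ} {C c d : ℝ}

theorem one_add_le_two_mul_of_abs_sub_le (hC : 0 ≤ C) (hy : ∀ τ ∈ uIcc c d, 0 ≤ y τ)
    (hbdd : BddAbove (y '' uIcc c d))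
    (H : ∀ e ∈ uIcc c d, ∀ K, (∀ τ ∈ uIcc c d, y τ ≤ K) → |y e - y c| ≤ C * |e - c| * (1 + K))
    (hcd : 2 * C * |d - c| ≤ 1) : 1 + y d ≤ 2 * (1 + y c) := by
  set S := sSup (y '' uIcc c d)
  have hS (τ : ℝ) (hτ : τ ∈ uIcc c d) : y τ ≤ S := le_csSup hbdd (mem_image_of_mem y hτ)
  have hS₀ : 0 ≤ S := (hy d right_mem_uIcc).trans (hS d right_mem_uIcc)
  have hSc : S ≤ y c + (1 + S) / 2 := by
    refine csSup_le (nonempty_uIcc.image y) ?_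
    rintro _ ⟨e, he, rfl⟩
    have hlen : C * |e - c| ≤ 1 / 2 := by
      linarith [mul_le_mul_of_nonneg_left (abs_sub_left_of_mem_uIcc he) hC]
    have hmul : C * |e - c| * (1 + S) ≤ 1 / 2 * (1 + S) := by gcongr
    linarith [le_abs_self (y e - y c), H e he S hS]
  linarith [hS d right_mem_uIcc]

theorem one_add_le_two_pow_mul_of_abs_sub_le (n : ℕ) (hC : 0 ≤ C) (hy : ∀ τ ∈ uIcc c d, 0 ≤ y τ)
    (hbdd : BddAbove (y '' uIcc c d))
    (H : ∀ p ∈ uIcc c d, ∀ q ∈ uIcc c d, ∀ K, (∀ τ ∈ uIcc p q, y τ ≤ K) →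
      |y q - y p| ≤ C * |q - p| * (1 + K))
    (hcd : 2 * C * |d - c| ≤ n + 1) : 1 + y d ≤ 2 ^ (n + 1) * (1 + y c) := by
  induction n generalizing c with
  | zero =>
    simpa using one_add_le_two_mul_of_abs_sub_le hC hy hbdd (fun e he K hK =>
      H c left_mem_uIcc e he K fun τ hτ => hK τ (uIcc_subset_uIcc left_mem_uIcc he hτ))
      (by simpa using hcd)
  | succ n ih =>
    set e := AffineMap.lineMap c d (1 / (n + 2 : ℝ)) with he_def
    have hn : (0 : ℝ) < n + 2 := by positivity
    have hec : e - c = (d - c) / (n + 2) := by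
      rw [he_def, AffineMap.lineMap_apply_ring]; field_simp; ring
    have hde : d - e = (d - c) * ((n + 1) / (n + 2)) := by
      rw [he_def, AffineMap.lineMap_apply_ring]; field_simp; ring
    have he : e ∈ uIcc c d := (convex_uIcc c d).lineMap_mem left_mem_uIcc right_mem_uIcc
      ⟨by positivity, div_le_one_of_le₀ (by linarith) hn.le⟩
    push_cast at hcd
    have hfst : uIcc c e ⊆ uIcc c d := uIcc_subset_uIcc left_mem_uIcc he
    have hsnd : uIcc e d ⊆ uIcc c d := uIcc_subset_uIcc he right_mem_uIcc
    have hce := one_add_le_two_mul_of_abs_sub_le hC (fun τ hτ => hy τ (hfst hτ))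
      (hbdd.mono (image_mono hfst)) (fun r hr K hK => H c left_mem_uIcc r (hfst hr) K
        fun τ hτ => hK τ (uIcc_subset_uIcc left_mem_uIcc hr hτ))
      (by rw [hec, abs_div, abs_of_pos hn, ← mul_div_assoc, div_le_one hn]; linarith)
    have hed := ih (fun τ hτ => hy τ (hsnd hτ)) (hbdd.mono (image_mono hsnd))
      (fun p hp q hq => H p (hsnd hp) q (hsnd hq))
      (by
        rw [hde, abs_mul, abs_of_nonneg (a := (n + 1 : ℝ) / (n + 2)) (by positivity), ← mul_assoc,
          ← mul_div_assoc, div_le_iff₀ hn, mul_comm]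
        gcongr
        linarith)
    calc 1 + y d ≤ 2 ^ (n + 1) * (2 * (1 + y c)) := hed.trans (by gcongr)
      _ = 2 ^ (n + 1 + 1) * (1 + y c) := by ring

end Gronwall

/-- Otherwise compare `f` with `b` at the first time when `f` reaches `b`. -/
theorem lt_of_continuousOn_of_forall_le_imp_lt {f : ℝ → ℝ} {a b B t : ℝ}
    (hf : ContinuousOn f (Icc a b)) (ha : f a < B)
    (H : ∀ d ∈ Icc a b, (∀ τ ∈ Icc a d, f τ ≤ B) → f d < B) (ht : t ∈ Icc a b) : f t < B := by
  by_contra! hB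
  obtain ⟨d, ⟨hd, hBd⟩, hleast⟩ := (isCompact_Icc.of_isClosed_subset
    (hf.preimage_isClosed_of_isClosed isClosed_Icc isClosed_Ici) inter_subset_left).exists_isLeast
    ⟨t, ht, hB⟩
  obtain ⟨e, he, rfl⟩ := intermediate_value_Icc hd.1 (hf.mono (Icc_subset_Icc_right hd.2))
    ⟨ha.le, hBd⟩
  obtain rfl : e = d := le_antisymm he.2 (hleast ⟨⟨he.1, he.2.trans hd.2⟩, le_refl (f e)⟩)
  refine (H e hd fun τ hτ => ?_).false
  rcases hτ.2.eq_or_lt with rfl | hlt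
  · exact le_rfl
  · by_contra! hcon
    exact hlt.not_ge (hleast ⟨⟨hτ.1, hτ.2.trans hd.2⟩, hcon.le⟩)

end RealVariable

/-! ### Spacetime-smooth functions and conservation laws -/

section Spacetime

open Set Filter Topology
open scoped ContDiff

/-- Joint smoothness of `(t, x) ↦ W t x`, as a predicate on the curried function. -/
def SpacetimeSmooth (W : ℝ → ℝ → ℝ) : Prop :=
  ContDiff ℝ ∞ fun p : ℝ × ℝ => W p.1 p.2

/-- The partial derivative `∂ₜ W`. -/
noncomputable def timeDeriv (W : ℝ → ℝ → ℝ) (t x : ℝ) : ℝ :=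
  deriv (fun τ => W τ x) t

namespace SpacetimeSmooth

variable {W : ℝ → ℝ → ℝ}

theorem hasFDerivAt (hW : SpacetimeSmooth W) (p : ℝ × ℝ) :
    HasFDerivAt (fun p : ℝ × ℝ => W p.1 p.2) (fderiv ℝ (fun p : ℝ × ℝ => W p.1 p.2) p) p :=
  (ContDiff.differentiable hW (by simp) p).hasFDerivAt

theorem contDiff_fderiv (hW : SpacetimeSmooth W) :
    ContDiff ℝ ∞ (fderiv ℝ fun p : ℝ × ℝ => W p.1 p.2) :=
  ContDiff.fderiv_right hW (by simp)

theorem deriv_eq_fderiv (hW : SpacetimeSmooth W) (t x : ℝ) :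
    _root_.deriv (W t) x = fderiv ℝ (fun p : ℝ × ℝ => W p.1 p.2) (t, x) (0, 1) :=
  ((hW.hasFDerivAt (t, x)).comp_hasDerivAt (f := fun y => (t, y)) x
    ((hasDerivAt_const x t).prodMk (hasDerivAt_id x))).deriv

theorem hasDerivAt_fderiv (hW : SpacetimeSmooth W) (t x : ℝ) :
    HasDerivAt (fun τ => W τ x) (fderiv ℝ (fun p : ℝ × ℝ => W p.1 p.2) (t, x) (1, 0)) t :=
  (hW.hasFDerivAt (t, x)).comp_hasDerivAt (f := fun τ => (τ, x)) t
    ((hasDerivAt_id t).prodMk (hasDerivAt_const t x))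

theorem timeDeriv_eq_fderiv (hW : SpacetimeSmooth W) (t x : ℝ) :
    GKdV.timeDeriv W t x = fderiv ℝ (fun p : ℝ × ℝ => W p.1 p.2) (t, x) (1, 0) :=
  (hW.hasDerivAt_fderiv t x).deriv

theorem hasDerivAt (hW : SpacetimeSmooth W) (t x : ℝ) :
    HasDerivAt (fun τ => W τ x) (GKdV.timeDeriv W t x) t := by
  simpa only [hW.timeDeriv_eq_fderiv] using hW.hasDerivAt_fderiv t x

theorem deriv (hW : SpacetimeSmooth W) : SpacetimeSmooth fun t x => deriv (W t) x := by
  simpa only [SpacetimeSmooth, hW.deriv_eq_fderiv] using hW.contDiff_fderiv.clm_apply contDiff_const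

theorem timeDeriv (hW : SpacetimeSmooth W) : SpacetimeSmooth (timeDeriv W) := by
  simpa only [SpacetimeSmooth, hW.timeDeriv_eq_fderiv] using
    hW.contDiff_fderiv.clm_apply contDiff_const

theorem iteratedDeriv (hW : SpacetimeSmooth W) (n : ℕ) :
    SpacetimeSmooth fun t x => iteratedDeriv n (W t) x := by
  induction n with
  | zero => simpa only [iteratedDeriv_zero] using hW
  | succ n ih => simpa only [iteratedDeriv_succ] using ih.deriv

theorem timeDeriv_deriv (hW : SpacetimeSmooth W) (t x : ℝ) :
    GKdV.timeDeriv (fun t x => _root_.deriv (W t) x) t x =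
      _root_.deriv (GKdV.timeDeriv W t) x := by
  have hdiff := hW.contDiff_fderiv.differentiable (by simp) (t, x)
  have hsymm : IsSymmSndFDerivAt ℝ (fun p : ℝ × ℝ => W p.1 p.2) (t, x) :=
    (ContDiff.contDiffAt hW).isSymmSndFDerivAt
      (by simpa using WithTop.coe_le_coe.2 (le_top : (2 : ℕ∞) ≤ ⊤))
  rw [hW.deriv.timeDeriv_eq_fderiv, hW.timeDeriv.deriv_eq_fderiv]
  simp only [hW.deriv_eq_fderiv, hW.timeDeriv_eq_fderiv]
  simp [fderiv_clm_apply hdiff (differentiableAt_const _), hsymm (1, 0) (0, 1)]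

theorem timeDeriv_iteratedDeriv (hW : SpacetimeSmooth W) (n : ℕ) (t x : ℝ) :
    GKdV.timeDeriv (fun t x => _root_.iteratedDeriv n (W t) x) t x =
      _root_.iteratedDeriv n (GKdV.timeDeriv W t) x := by
  induction n generalizing x with
  | zero => simp only [iteratedDeriv_zero]
  | succ n ih =>
    simp only [iteratedDeriv_succ, (hW.iteratedDeriv n).timeDeriv_deriv]
    exact congrArg (_root_.deriv · x) (funext ih)

theorem continuous (hW : SpacetimeSmooth W) : Continuous fun p : ℝ × ℝ => W p.1 p.2 :=
  ContDiff.continuous hW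

theorem continuous_right (hW : SpacetimeSmooth W) (t : ℝ) : Continuous (W t) :=
  hW.continuous.comp (Continuous.prodMk_right t)

theorem hasDerivAt_integral_mul (hW : SpacetimeSmooth W) {ψ : ℝ → ℝ} (hψ : Continuous ψ)
    (hψc : HasCompactSupport ψ) (t : ℝ) :
    HasDerivAt (fun τ => ∫ x, ψ x * W τ x) (∫ x, ψ x * GKdV.timeDeriv W t x) t := by
  have hcont : Continuous fun p : ℝ × ℝ => ψ p.2 * GKdV.timeDeriv W p.1 p.2 :=
    (hψ.comp continuous_snd).mul hW.timeDeriv.continuous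
  obtain ⟨M, hM⟩ := ((isCompact_Icc (a := t - 1) (b := t + 1)).prod
    hψc).exists_bound_of_continuousOn hcont.continuousOn
  refine (hasDerivAt_integral_of_dominated_loc_of_deriv_le (s := Icc (t - 1) (t + 1))
    (bound := (tsupport ψ).indicator fun _ => M) (F := fun τ x => ψ x * W τ x)
    (F' := fun τ x => ψ x * GKdV.timeDeriv W τ x) (Icc_mem_nhds (by simp) (by simp))
    (.of_forall fun τ => (hψ.mul (hW.continuous_right τ)).aestronglyMeasurable)
    ((hψ.mul (hW.continuous_right t)).integrable_of_hasCompactSupport hψc.mul_right)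
    (hψ.mul (hW.timeDeriv.continuous_right t)).aestronglyMeasurable
    (.of_forall fun x τ hτ => ?_)
    ((integrable_indicator_iff (isClosed_tsupport ψ).measurableSet).2
      (continuousOn_const.integrableOn_compact hψc))
    (.of_forall fun x τ _ => (hW.hasDerivAt τ x).const_mul _)).2
  by_cases hx : x ∈ tsupport ψ
  · simpa only [indicator_of_mem hx] using hM (τ, x) ⟨hτ, hx⟩
  · simp [indicator_of_notMem hx, image_eq_zero_of_notMem_tsupport hx]

end SpacetimeSmooth

theorem IsSchwartz.of_hasCompactSupport {f : ℝ → ℝ} (hf : ContDiff ℝ ∞ f)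
    (hc : HasCompactSupport f) : IsSchwartz f :=
  ⟨hc.toSchwartzMap hf, rfl⟩

theorem exists_cutoff : ∃ φ : ℝ → ℝ, ContDiff ℝ ∞ φ ∧ HasCompactSupport φ ∧ φ 0 = 1 ∧
    ∀ x, |φ x| ≤ 1 := by
  let B : ContDiffBump (0 : ℝ) := ⟨1, 2, by norm_num, by norm_num⟩
  exact ⟨B, B.contDiff, B.hasCompactSupport, B.one_of_mem_closedBall (by simp [B]),
    fun x => (abs_of_nonneg B.nonneg).trans_le B.le_one⟩

theorem tendsto_integral_cutoff_mul {φ f : ℝ → ℝ} (hφ : Continuous φ) (hφ₀ : φ 0 = 1)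
    (hφ₁ : ∀ x, |φ x| ≤ 1) (hf : Integrable f) :
    Tendsto (fun δ => ∫ x, φ (δ * x) * f x) (𝓝 0) (𝓝 (∫ x, f x)) := by
  refine tendsto_integral_filter_of_dominated_convergence (fun x => ‖f x‖)
    (.of_forall fun δ => Continuous.aestronglyMeasurable (by fun_prop) |>.mul hf.1)
    (.of_forall fun δ => .of_forall fun x => ?_) hf.norm (.of_forall fun x => ?_)
  · simpa only [norm_mul, Real.norm_eq_abs] using mul_le_of_le_one_left (abs_nonneg _) (hφ₁ _)
  · have hcont : Continuous fun δ => φ (δ * x) * f x := by fun_prop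
    simpa [hφ₀] using hcont.tendsto 0

theorem integral_mul_iteratedDeriv_three {f g : ℝ → ℝ} (hf : IsSchwartz f) (hg : IsSchwartz g) :
    ∫ x, f x * iteratedDeriv 3 g x = -∫ x, iteratedDeriv 3 f x * g x := by
  simp only [iteratedDeriv_succ, iteratedDeriv_zero]
  rw [integral_mul_deriv hf (by fun_prop), integral_mul_deriv (by fun_prop) (by fun_prop),
    integral_mul_deriv (by fun_prop) hg, neg_neg]

theorem abs_integral_mul_le {f g : ℝ → ℝ} {B : ℝ} (hf : IsSchwartz f) (hg : IsSchwartz g)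
    (hB : ∀ x, |f x| ≤ B) : |∫ x, f x * g x| ≤ B * ∫ x, |g x| := by
  rw [← integral_const_mul]
  refine abs_integral_le_integral_abs.trans (integral_mono (hf.mul hg).integrable.abs
    (hg.integrable.abs.const_mul B) fun x => ?_)
  simpa only [abs_mul] using mul_le_mul_of_nonneg_right (hB x) (abs_nonneg _)

theorem abs_integral_mul_le_of_flux_eq {ψ w q p ρ : ℝ → ℝ} {α β : ℝ} (hψ : IsSchwartz ψ)
    (hq : IsSchwartz q) (hp : IsSchwartz p) (hρ : IsSchwartz ρ)
    (heq : ∀ x, w x + deriv q x + iteratedDeriv 3 p x = ρ x) (hψ₀ : ∀ x, |ψ x| ≤ 1)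
    (hψ₁ : ∀ x, |deriv ψ x| ≤ α) (hψ₃ : ∀ x, |iteratedDeriv 3 ψ x| ≤ β) :
    |∫ x, ψ x * w x| ≤ α * (∫ x, |q x|) + β * (∫ x, |p x|) + ∫ x, |ρ x| := by
  have hsplit : ∫ x, ψ x * w x = (∫ x, deriv ψ x * q x) + (∫ x, iteratedDeriv 3 ψ x * p x) +
      ∫ x, ψ x * ρ x := by
    have hw (x : ℝ) : ψ x * w x = ψ x * ρ x - ψ x * deriv q x - ψ x * iteratedDeriv 3 p x := by
      rw [← heq x]; ring
    simp only [hw]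
    rw [integral_sub (IsSchwartz.integrable (by fun_prop)) (IsSchwartz.integrable (by fun_prop)),
      integral_sub (IsSchwartz.integrable (by fun_prop)) (IsSchwartz.integrable (by fun_prop)),
      integral_mul_deriv hψ hq, integral_mul_iteratedDeriv_three hψ hp]
    ring
  rw [hsplit]
  refine (abs_add_three _ _ _).trans (add_le_add_three (abs_integral_mul_le (by fun_prop) hq hψ₁)
    (abs_integral_mul_le (by fun_prop) hp hψ₃) ?_)
  simpa only [one_mul] using abs_integral_mul_le hψ hρ hψ₀

/-- Test the flux identity against `φ(δ x)` and let `δ → 0`. Integrating it directly would require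
bounds on the derivatives of the fluxes that are uniform in time. -/
theorem abs_integral_sub_le_of_flux_eq {e Q P R : ℝ → ℝ → ℝ} {c d K r : ℝ}
    (he : SpacetimeSmooth e) (hes : ∀ t, IsSchwartz (e t))
    (hQ : ∀ t, IsSchwartz (Q t)) (hP : ∀ t, IsSchwartz (P t)) (hR : ∀ t, IsSchwartz (R t))
    (heq : ∀ t ∈ uIcc c d, ∀ x,
      timeDeriv e t x + deriv (Q t) x + iteratedDeriv 3 (P t) x = R t x)
    (hQK : ∀ t ∈ uIcc c d, ∫ x, |Q t x| ≤ K) (hPK : ∀ t ∈ uIcc c d, ∫ x, |P t x| ≤ K)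
    (hRr : ∀ t ∈ uIcc c d, ∫ x, |R t x| ≤ r) :
    |(∫ x, e d x) - ∫ x, e c x| ≤ r * |d - c| := by
  obtain ⟨φ, hφ, hφc, hφ₀, hφ₁⟩ := exists_cutoff
  have hφs : IsSchwartz φ := .of_hasCompactSupport hφ hφc
  obtain ⟨C₁, hC₁, hC₁φ⟩ := (hφs.iteratedDeriv 1).exists_abs_le
  obtain ⟨C₃, hC₃, hC₃φ⟩ := (hφs.iteratedDeriv 3).exists_abs_le
  have hest (δ : ℝ) (hδ : 0 < δ) : |(∫ x, φ (δ * x) * e d x) - ∫ x, φ (δ * x) * e c x| ≤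
      (δ * C₁ * K + δ ^ 3 * C₃ * K + r) * |d - c| := by
    have hψ : ContDiff ℝ ∞ fun x => φ (δ * x) := by fun_prop
    have hψc : HasCompactSupport fun x => φ (δ * x) := hφc.comp_homeomorph (.mulLeft₀ δ hδ.ne')
    have hψd (n : ℕ) : iteratedDeriv n (fun x => φ (δ * x)) =
        fun x => δ ^ n * iteratedDeriv n φ (δ * x) :=
      iteratedDeriv_comp_const_mul (hφs.contDiff (n := n)) δ
    refine (convex_uIcc c d).norm_image_sub_le_of_norm_hasDerivWithin_le
      (fun t _ => (he.hasDerivAt_integral_mul hψ.continuous hψc t).hasDerivWithinAt)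
      (fun t ht => ?_) left_mem_uIcc right_mem_uIcc
    refine (abs_integral_mul_le_of_flux_eq (α := δ * C₁) (β := δ ^ 3 * C₃)
      (.of_hasCompactSupport hψ hψc) (hQ t) (hP t) (hR t) (heq t ht) (fun x => hφ₁ _)
      (fun x => ?_) fun x => ?_).trans ?_
    · rw [← iteratedDeriv_one, hψd, pow_one, abs_mul, abs_of_pos hδ]
      exact mul_le_mul_of_nonneg_left (hC₁φ _) hδ.le
    · rw [hψd, abs_mul, abs_of_pos (by positivity)]
      exact mul_le_mul_of_nonneg_left (hC₃φ _) (by positivity)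
    · have := hQK t ht
      have := hPK t ht
      have := hRr t ht
      gcongr
  have hlim (t : ℝ) := (tendsto_integral_cutoff_mul hφ.continuous hφ₀ hφ₁
    (hes t).integrable).mono_left (nhdsWithin_le_nhds (s := Ioi 0))
  refine le_of_tendsto_of_tendsto ((hlim d).sub (hlim c)).abs ?_
    (eventually_mem_nhdsWithin.mono hest)
  have hcont : Continuous fun δ : ℝ => (δ * C₁ * K + δ ^ 3 * C₃ * K + r) * |d - c| := by fun_prop
  simpa using (hcont.tendsto 0).mono_left nhdsWithin_le_nhds

theorem iteratedDeriv_three_sq {f : ℝ → ℝ} (hf : IsSchwartz f) (x : ℝ) :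
    iteratedDeriv 3 (fun x => f x ^ 2) x =
      2 * (f x * iteratedDeriv 3 f x) + 6 * (deriv f x * iteratedDeriv 2 f x) := by
  simp only [sq, iteratedDeriv_mul_eq_sum hf hf, Finset.sum_range_succ, Finset.sum_range_zero,
    Nat.choose, Nat.reduceSub, iteratedDeriv_zero, iteratedDeriv_one]
  ring

theorem timeDeriv_sq {v : ℝ → ℝ → ℝ} (hv : SpacetimeSmooth v) (t x : ℝ) :
    timeDeriv (fun t x => v t x ^ 2) t x = 2 * (v t x * timeDeriv v t x) := by
  simpa [timeDeriv, mul_assoc] using ((hv.hasDerivAt t x).fun_pow 2).deriv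

theorem integral_abs_sq (f : ℝ → ℝ) : ∫ x, |f x ^ 2| = l2Norm f ^ 2 := by
  simp only [l2Norm_sq, abs_sq]

theorem integral_abs_mul_sq_le {b f : ℝ → ℝ} {B : ℝ} (hb : IsSchwartz b) (hf : IsSchwartz f)
    (hB : ∀ x, |b x| ≤ B) : ∫ x, |b x * f x ^ 2| ≤ B * l2Norm f ^ 2 := by
  rw [l2Norm_sq, ← integral_const_mul]
  refine integral_mono (IsSchwartz.integrable (by fun_prop)).abs
    (IsSchwartz.integrable (by fun_prop)) fun x => ?_
  simpa only [abs_mul, abs_sq] using mul_le_mul_of_nonneg_right (hB x) (sq_nonneg (f x))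

theorem integral_abs_add_le {f g : ℝ → ℝ} (hf : IsSchwartz f) (hg : IsSchwartz g) :
    ∫ x, |f x + g x| ≤ (∫ x, |f x|) + ∫ x, |g x| := by
  rw [← integral_add hf.integrable.abs hg.integrable.abs]
  exact integral_mono (hf.add hg).integrable.abs (hf.integrable.abs.add hg.integrable.abs)
    fun x => abs_add_le _ _

theorem integral_abs_const_mul (c : ℝ) (f : ℝ → ℝ) : ∫ x, |c * f x| = |c| * ∫ x, |f x| := by
  simp only [abs_mul, integral_const_mul]

theorem abs_l2Norm_sq_sub_le_of_timeDeriv_eq {v b g : ℝ → ℝ → ℝ} {B Y Z c d p r : ℝ}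
    (hv : SpacetimeSmooth v) (hvs : ∀ t, IsSchwartz (v t)) (hbs : ∀ t, IsSchwartz (b t))
    (hgs : ∀ t, IsSchwartz (g t))
    (heq : ∀ t ∈ uIcc c d, ∀ x,
      timeDeriv v t x = -(iteratedDeriv 3 (v t) x + b t x * deriv (v t) x + g t x))
    (hY : ∀ t ∈ uIcc c d, l2Norm (v t) ≤ Y) (hZ : ∀ t ∈ uIcc c d, l2Norm (deriv (v t)) ≤ Z)
    (hB : ∀ t ∈ uIcc c d, ∀ x, |b t x| ≤ B) (hp : ∀ t ∈ uIcc c d, ∀ x, |deriv (b t) x| ≤ p)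
    (hr : ∀ t ∈ uIcc c d, l2Norm (g t) ≤ r) :
    |l2Norm (v d) ^ 2 - l2Norm (v c) ^ 2| ≤ (p * Y ^ 2 + 2 * (Y * r)) * |d - c| := by
  have hc : c ∈ uIcc c d := left_mem_uIcc
  have hY₀ : 0 ≤ Y := (l2Norm_nonneg _).trans (hY c hc)
  have hB₀ : 0 ≤ B := (abs_nonneg _).trans (hB c hc 0)
  have hp₀ : 0 ≤ p := (abs_nonneg _).trans (hp c hc 0)
  have hY2 (t : ℝ) (ht : t ∈ uIcc c d) : l2Norm (v t) ^ 2 ≤ Y ^ 2 :=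
    pow_le_pow_left₀ (l2Norm_nonneg _) (hY t ht) 2
  have hZ2 (t : ℝ) (ht : t ∈ uIcc c d) : l2Norm (deriv (v t)) ^ 2 ≤ Z ^ 2 :=
    pow_le_pow_left₀ (l2Norm_nonneg _) (hZ t ht) 2
  rw [l2Norm_sq, l2Norm_sq]
  refine abs_integral_sub_le_of_flux_eq (e := fun t x => v t x ^ 2)
    (Q := fun t x => -3 * deriv (v t) x ^ 2 + b t x * v t x ^ 2) (P := fun t x => v t x ^ 2)
    (R := fun t x => deriv (b t) x * v t x ^ 2 + -2 * (v t x * g t x))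
    (K := 3 * Z ^ 2 + B * Y ^ 2 + Y ^ 2) (ContDiff.pow hv 2) (fun t => by fun_prop)
    (fun t => by fun_prop) (fun t => by fun_prop) (fun t => by fun_prop)
    (fun t ht x => ?_) (fun t ht => ?_) (fun t ht => ?_) (fun t ht => ?_)
  · rw [timeDeriv_sq hv, iteratedDeriv_three_sq (hvs t), heq t ht x]
    simp (disch := fun_prop) only [deriv_fun_mul, deriv_fun_add, deriv_fun_pow, deriv_const,
      iteratedDeriv_succ, iteratedDeriv_zero]
    ring
  · refine (integral_abs_add_le (by fun_prop) (by fun_prop)).trans ?_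
    rw [integral_abs_const_mul, integral_abs_sq, abs_neg, abs_of_pos three_pos]
    linarith [hZ2 t ht, integral_abs_mul_sq_le (hbs t) (hvs t) (hB t ht),
      mul_le_mul_of_nonneg_left (hY2 t ht) hB₀, sq_nonneg Y]
  · rw [integral_abs_sq]
    linarith [hY2 t ht, mul_nonneg hB₀ (sq_nonneg Y), sq_nonneg Z]
  · refine (integral_abs_add_le (by fun_prop) (by fun_prop)).trans ?_
    rw [integral_abs_const_mul, abs_neg, abs_of_pos two_pos]
    linarith [integral_abs_mul_sq_le (hbs t).deriv (hvs t) (hp t ht),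
      mul_le_mul_of_nonneg_left (hY2 t ht) hp₀, integral_abs_mul_le_l2Norm_mul (hvs t) (hgs t),
      mul_le_mul (hY t ht) (hr t ht) (l2Norm_nonneg _) hY₀]

end Spacetime

section Energy

open Set

theorem SpacetimeSmooth.comp_add_const {W : ℝ → ℝ → ℝ} (hW : SpacetimeSmooth W) (h : ℝ) :
    SpacetimeSmooth fun t x => W t (x + h) :=
  ContDiff.comp (g := fun p : ℝ × ℝ => W p.1 p.2) hW
    (contDiff_fst.prodMk (contDiff_snd.add contDiff_const))

theorem SpacetimeSmooth.diffQuot {W : ℝ → ℝ → ℝ} (hW : SpacetimeSmooth W) (h : ℝ) :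
    SpacetimeSmooth fun t => diffQuot h (W t) :=
  contDiff_const.mul (ContDiff.sub (hW.comp_add_const h) hW)

theorem timeDeriv_diffQuot {W : ℝ → ℝ → ℝ} (hW : SpacetimeSmooth W) (h t x : ℝ) :
    timeDeriv (fun t => diffQuot h (W t)) t x = diffQuot h (timeDeriv W t) x :=
  (((hW.hasDerivAt t (x + h)).sub (hW.hasDerivAt t x)).const_mul h⁻¹).deriv

theorem iteratedDeriv_diffQuot {f : ℝ → ℝ} (hf : IsSchwartz f) (h : ℝ) (n : ℕ) :
    iteratedDeriv n (diffQuot h f) = diffQuot h (iteratedDeriv n f) := by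
  have hfh := hf.comp_add_const h
  ext x
  unfold diffQuot
  simp only [iteratedDeriv_const_mul_eq,
    iteratedDeriv_fun_sub hfh.contDiff.contDiffAt hf.contDiff.contDiffAt,
    iteratedDeriv_comp_add_const]

theorem deriv_diffQuot {f : ℝ → ℝ} (hf : IsSchwartz f) (h : ℝ) :
    deriv (diffQuot h f) = diffQuot h (deriv f) := by
  simpa only [iteratedDeriv_one] using iteratedDeriv_diffQuot hf h 1

theorem l2Norm_diffQuot_le_abs_inv_mul {f : ℝ → ℝ} (hf : IsSchwartz f) (h : ℝ) :
    l2Norm (diffQuot h f) ≤ |h⁻¹| * (2 * l2Norm f) := by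
  unfold diffQuot
  rw [l2Norm_const_mul, two_mul]
  gcongr
  simpa only [l2Norm_comp_add_const] using l2Norm_sub_le (hf.comp_add_const h) hf

theorem abs_l2Norm_diffQuot_sq_sub_le_of_timeDeriv_eq {W b g : ℝ → ℝ → ℝ} {B Y c d p r η : ℝ}
    (hη : 0 < η) (hW : SpacetimeSmooth W) (hWs : ∀ t, IsSchwartz (W t))
    (hbs : ∀ t, IsSchwartz (b t)) (hgs : ∀ t, IsSchwartz (g t))
    (heq : ∀ t ∈ uIcc c d, ∀ x,
      timeDeriv W t x = -(iteratedDeriv 3 (W t) x + b t x * deriv (W t) x + g t x))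
    (hY : ∀ t ∈ uIcc c d, l2Norm (deriv (W t)) ≤ Y) (hB : ∀ t ∈ uIcc c d, ∀ x, |b t x| ≤ B)
    (hp : ∀ t ∈ uIcc c d, ∀ x, |deriv (b t) x| ≤ p)
    (hr : ∀ t ∈ uIcc c d, l2Norm (deriv (g t)) ≤ r) :
    |l2Norm (diffQuot η (W d)) ^ 2 - l2Norm (diffQuot η (W c)) ^ 2| ≤
      (3 * p * Y ^ 2 + 2 * (Y * r)) * |d - c| := by
  have hp₀ : 0 ≤ p := (abs_nonneg _).trans (hp c left_mem_uIcc 0)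
  have hdb (t : ℝ) := (hbs t).diffQuot η
  have hdg (t : ℝ) := (hgs t).diffQuot η
  refine (abs_l2Norm_sq_sub_le_of_timeDeriv_eq (b := fun t x => b t (x + η))
    (g := fun t x => diffQuot η (b t) x * deriv (W t) x + diffQuot η (g t) x)
    (Y := Y) (Z := |η⁻¹| * (2 * Y)) (p := p) (r := p * Y + r) (hW.diffQuot η)
    (fun t => (hWs t).diffQuot η)
    (fun t => (hbs t).comp_add_const η) (fun t => by fun_prop)
    (fun t ht x => ?_) (fun t ht => ?_) (fun t ht => ?_) (fun t ht x => hB t ht _)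
    (fun t ht x => ?_) (fun t ht => ?_)).trans_eq (by ring)
  · rw [timeDeriv_diffQuot hW, deriv_diffQuot (hWs t), iteratedDeriv_diffQuot (hWs t)]
    simp only [diffQuot, heq t ht]
    ring
  · exact (l2Norm_diffQuot_le (hWs t) hη).trans (hY t ht)
  · rw [deriv_diffQuot (hWs t)]
    refine (l2Norm_diffQuot_le_abs_inv_mul (hWs t).deriv η).trans ?_
    gcongr
    exact hY t ht
  · rw [deriv_comp_add_const]
    exact hp t ht _
  · refine (l2Norm_add_le (by fun_prop) (hdg t)).trans (add_le_add ?_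
      ((l2Norm_diffQuot_le (hgs t) hη).trans (hr t ht)))
    refine (l2Norm_mul_le (hdb t) (hWs t).deriv fun x => ?_).trans
      (mul_le_mul_of_nonneg_left (hY t ht) hp₀)
    obtain ⟨y, -, hy⟩ := exists_diffQuot_eq_deriv (hbs t) hη x
    exact hy ▸ hp t ht y

/-- The difference quotients of `W` obey an equation of the same form, so that no bound on second
derivatives of `W` is needed. -/
theorem abs_l2Norm_deriv_sq_sub_le_of_timeDeriv_eq {W b g : ℝ → ℝ → ℝ} {B Y c d p r : ℝ}
    (hW : SpacetimeSmooth W) (hWs : ∀ t, IsSchwartz (W t))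
    (hbs : ∀ t, IsSchwartz (b t)) (hgs : ∀ t, IsSchwartz (g t))
    (heq : ∀ t ∈ uIcc c d, ∀ x,
      timeDeriv W t x = -(iteratedDeriv 3 (W t) x + b t x * deriv (W t) x + g t x))
    (hY : ∀ t ∈ uIcc c d, l2Norm (deriv (W t)) ≤ Y) (hB : ∀ t ∈ uIcc c d, ∀ x, |b t x| ≤ B)
    (hp : ∀ t ∈ uIcc c d, ∀ x, |deriv (b t) x| ≤ p)
    (hr : ∀ t ∈ uIcc c d, l2Norm (deriv (g t)) ≤ r) :
    |l2Norm (deriv (W d)) ^ 2 - l2Norm (deriv (W c)) ^ 2| ≤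
      (3 * p * Y ^ 2 + 2 * (Y * r)) * |d - c| :=
  le_of_tendsto (((tendsto_l2Norm_diffQuot (hWs d)).pow 2).sub
    ((tendsto_l2Norm_diffQuot (hWs c)).pow 2)).abs (eventually_mem_nhdsWithin.mono fun _ hη =>
      abs_l2Norm_diffQuot_sq_sub_le_of_timeDeriv_eq hη hW hWs hbs hgs heq hY hB hp hr)

end Energy

theorem integral_le_of_tendsto {f : ℕ → ℝ → ℝ} {g : ℝ → ℝ} {K : ℝ} (hf : ∀ n, Integrable (f n))
    (hf₀ : ∀ n x, 0 ≤ f n x) (hg : Integrable g)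
    (hlim : ∀ x, Filter.Tendsto (f · x) Filter.atTop (nhds (g x))) (hK : ∀ n, ∫ x, f n x ≤ K) :
    ∫ x, g x ≤ K := by
  have hg₀ (x : ℝ) : 0 ≤ g x := ge_of_tendsto' (hlim x) (hf₀ · x)
  have hK₀ : 0 ≤ K := (integral_nonneg (hf₀ 0)).trans (hK 0)
  rw [integral_eq_lintegral_of_nonneg_ae (.of_forall hg₀) hg.1]
  refine ENNReal.toReal_le_of_le_ofReal hK₀ ?_
  calc ∫⁻ x, ENNReal.ofReal (g x)
      = ∫⁻ x, Filter.liminf (fun n => ENNReal.ofReal (f n x)) Filter.atTop :=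
        lintegral_congr fun x => (ENNReal.tendsto_ofReal (hlim x)).liminf_eq.symm
    _ ≤ Filter.liminf (fun n => ∫⁻ x, ENNReal.ofReal (f n x)) Filter.atTop :=
        lintegral_liminf_le' fun n => (hf n).1.aemeasurable.ennreal_ofReal
    _ ≤ ENNReal.ofReal K := Filter.liminf_le_of_frequently_le' (.of_forall fun n => by
        rw [← ofReal_integral_eq_lintegral_ofReal (hf n) (.of_forall (hf₀ n))]
        exact ENNReal.ofReal_le_ofReal (hK n))

theorem isClosed_setOf_hNorm_le {U : ℝ → ℝ → ℝ} (hU : SpacetimeSmooth U)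
    (hUs : ∀ t, IsSchwartz (U t)) (m : ℕ) {s : Set ℝ} (hs : IsClosed s) (K : ℝ) :
    IsClosed {t ∈ s | hNorm m (U t) ≤ K} := by
  refine IsSeqClosed.isClosed fun τ t hτ hlim =>
    ⟨hs.mem_of_tendsto hlim (.of_forall fun n => (hτ n).1), ?_⟩
  have hK : 0 ≤ K := (hNorm_nonneg _ _).trans (hτ 0).2
  have hinteg (t : ℝ) (n : ℕ) : Integrable fun x => iteratedDeriv n (U t) x ^ 2 :=
    IsSchwartz.integrable (by fun_prop)
  have hsq (t : ℝ) : hNorm m (U t) ^ 2 =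
      ∫ x, ∑ n ∈ Finset.range (m + 1), iteratedDeriv n (U t) x ^ 2 := by
    simp only [hNorm_sq, integral_finsetSum _ fun n _ => hinteg t n, l2Norm_sq]
  refine le_of_sq_le_sq ?_ hK
  rw [hsq]
  refine integral_le_of_tendsto (fun n => integrable_finsetSum _ fun i _ => hinteg (τ n) i)
    (fun n x => by positivity) (integrable_finsetSum _ fun i _ => hinteg t i)
    (fun x => tendsto_finsetSum _ fun i _ =>
      ((((hU.iteratedDeriv i).hasDerivAt t x).continuousAt.tendsto.comp hlim).pow 2)) fun n => ?_
  rw [← hsq]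
  exact pow_le_pow_left₀ (hNorm_nonneg _ _) (hτ n).2 2

section Solution

open Set

theorem deriv_transportCommutator {b f : ℝ → ℝ} (n : ℕ) (hb : IsSchwartz b) (hf : IsSchwartz f) :
    deriv (transportCommutator n b f) = fun x =>
      transportCommutator (n + 1) b f x - deriv b x * iteratedDeriv (n + 1) f x := by
  ext x
  unfold transportCommutator
  simp (disch := fun_prop) only [deriv_fun_sub, deriv_fun_mul, iteratedDeriv_succ]
  ring

theorem timeDeriv_iteratedDeriv_eq_of_timeDeriv_eq {W : ℝ → ℝ → ℝ} {g : ℝ → ℝ}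
    {t : ℝ} (hW : SpacetimeSmooth W) (hWt : IsSchwartz (W t)) (hg : IsSchwartz g)
    (heq : ∀ x, timeDeriv W t x = -(iteratedDeriv 3 (W t) x + g x)) (n : ℕ) (x : ℝ) :
    timeDeriv (fun t x => iteratedDeriv n (W t) x) t x =
      -(iteratedDeriv 3 (iteratedDeriv n (W t)) x + iteratedDeriv n g x) := by
  have hfun : timeDeriv W t = fun x => (-1) * (iteratedDeriv 3 (W t) x + g x) :=
    funext fun y => (heq y).trans (neg_one_mul _).symm
  rw [hW.timeDeriv_iteratedDeriv, hfun, iteratedDeriv_const_mul_eq,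
    iteratedDeriv_add_eq n (hWt.iteratedDeriv 3) hg]
  simp only [neg_one_mul, iteratedDeriv_eq_iterate, ← Function.iterate_add_apply, add_comm]

/-- `U` solves `∂ₜU + ∂ₓ³U + F(U) ∂ₓU = 0` on `[0, T]`, is jointly smooth and is Schwartz at each
time. The coefficient is a polynomial, and the time slices are plain functions, so that
derivatives and nonlinear expressions of `U` need no coercions. -/
structure IsGKdVSolution (F : Polynomial ℝ) (T : ℝ) (U : ℝ → ℝ → ℝ) : Prop where
  smooth : SpacetimeSmooth U
  isSchwartz (t : ℝ) : IsSchwartz (U t)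
  eval_zero : F.eval 0 = 0
  timeDeriv_eq : ∀ t ∈ Icc 0 T, ∀ x,
    timeDeriv U t x = -(iteratedDeriv 3 (U t) x + F.eval (U t x) * deriv (U t) x)

namespace IsGKdVSolution

variable {F : Polynomial ℝ} {T : ℝ} {U : ℝ → ℝ → ℝ}

theorem isSchwartz_eval (h : IsGKdVSolution F T U) (t : ℝ) :
    IsSchwartz fun x => F.eval (U t x) :=
  (h.isSchwartz t).eval h.eval_zero

theorem timeDeriv_iteratedDeriv_eq (h : IsGKdVSolution F T U) (n : ℕ) {t : ℝ} (ht : t ∈ Icc 0 T)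
    (x : ℝ) :
    timeDeriv (fun t x => iteratedDeriv n (U t) x) t x =
      -(iteratedDeriv 3 (iteratedDeriv n (U t)) x +
        iteratedDeriv n (fun x => F.eval (U t x) * deriv (U t) x) x) :=
  timeDeriv_iteratedDeriv_eq_of_timeDeriv_eq h.smooth (h.isSchwartz t)
    ((h.isSchwartz_eval t).mul (h.isSchwartz t).deriv) (h.timeDeriv_eq t ht) n x

theorem abs_l2Norm_iteratedDeriv_succ_sq_sub_le (h : IsGKdVSolution F T U) {c d p r Y : ℝ} {m : ℕ}
    (hcd : uIcc c d ⊆ Icc 0 T) (hp : ∀ t ∈ uIcc c d, hNorm 2 (fun x => F.eval (U t x)) ≤ p)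
    (hY : ∀ t ∈ uIcc c d, l2Norm (iteratedDeriv (m + 1) (U t)) ≤ Y)
    (hr : ∀ t ∈ uIcc c d,
      l2Norm (transportCommutator (m + 1) (fun x => F.eval (U t x)) (U t)) ≤ r) :
    |l2Norm (iteratedDeriv (m + 1) (U d)) ^ 2 - l2Norm (iteratedDeriv (m + 1) (U c)) ^ 2| ≤
      (5 * p * Y ^ 2 + 2 * (Y * r)) * |d - c| := by
  have hU := h.isSchwartz
  have hF := h.isSchwartz_eval
  have hp' (t : ℝ) (ht : t ∈ uIcc c d) (x : ℝ) : |deriv (fun x => F.eval (U t x)) x| ≤ p := by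
    simpa only [iteratedDeriv_one] using
      (abs_iteratedDeriv_le_hNorm le_rfl (hF t) x).trans (hp t ht)
  have hp₀ : 0 ≤ p := (hNorm_nonneg _ _).trans (hp c left_mem_uIcc)
  simp only [iteratedDeriv_succ (n := m)] at hY ⊢
  refine (abs_l2Norm_deriv_sq_sub_le_of_timeDeriv_eq
    (W := fun t x => iteratedDeriv m (U t) x) (b := fun t x => F.eval (U t x))
    (g := fun t => transportCommutator m (fun x => F.eval (U t x)) (U t))
    (Y := Y) (B := p) (p := p) (r := r + p * Y) (h.smooth.iteratedDeriv m)
    (fun t => (hU t).iteratedDeriv m) hF (fun t => (hF t).transportCommutator m (hU t))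
    (fun t ht x => ?_) hY
    (fun t ht x => (abs_le_hNorm one_le_two (hF t) x).trans (hp t ht)) hp'
    fun t ht => ?_).trans_eq (by ring)
  · rw [h.timeDeriv_iteratedDeriv_eq m (hcd ht), transportCommutator, iteratedDeriv_succ (n := m)]
    ring
  · rw [deriv_transportCommutator m (hF t) (hU t), iteratedDeriv_succ (n := m)]
    exact (l2Norm_sub_le ((hF t).transportCommutator (m + 1) (hU t))
      ((hF t).deriv.mul ((hU t).iteratedDeriv m).deriv)).trans (add_le_add (hr t ht)
        ((l2Norm_mul_le (hF t).deriv ((hU t).iteratedDeriv m).deriv (hp' t ht)).trans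
          (mul_le_mul_of_nonneg_left (hY t ht) hp₀)))

end IsGKdVSolution

end Solution

/-! ### Conserved and nearly conserved energies -/

section Polynomials

open Polynomial

theorem exists_derivative_eq (F : ℝ[X]) : ∃ G : ℝ[X], G.derivative = F ∧ G.eval 0 = 0 := by
  induction F using Polynomial.induction_on' with
  | add p q hp hq =>
    obtain ⟨G, hGp, hG₀⟩ := hp
    obtain ⟨H, hHq, hH₀⟩ := hq
    exact ⟨G + H, by rw [derivative_add, hGp, hHq], by rw [eval_add, hG₀, hH₀, add_zero]⟩
  | monomial n a =>
    refine ⟨monomial (n + 1) (a / (n + 1)), ?_, by simp [eval_monomial]⟩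
    rw [derivative_monomial, Nat.add_sub_cancel, Nat.cast_succ,
      div_mul_cancel₀ a (Nat.cast_add_one_ne_zero n)]

theorem exists_eq_X_sq_mul {P : ℝ[X]} (h₀ : P.eval 0 = 0) (h₁ : P.derivative.eval 0 = 0) :
    ∃ Q, P = X ^ 2 * Q := by
  refine X_pow_dvd_iff.2 fun n hn => ?_
  rw [← coeff_zero_eq_eval_zero] at h₀ h₁
  rw [coeff_derivative] at h₁
  interval_cases n
  · exact h₀
  · simpa using h₁

theorem exists_forall_abs_eval_le (P : ℝ[X]) (B : ℝ) :
    ∃ C, 0 ≤ C ∧ ∀ y, |y| ≤ B → |P.eval y| ≤ C := by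
  obtain ⟨C, hC⟩ := isCompact_Icc.exists_bound_of_continuousOn (s := Set.Icc (-B) B)
    P.continuous.continuousOn
  exact ⟨max C 0, le_max_right _ _, fun y hy => (hC y (abs_le.1 hy)).trans (le_max_left _ _)⟩

theorem exists_integral_abs_eval_le {P : ℝ[X]} (h₀ : P.eval 0 = 0) (h₁ : P.derivative.eval 0 = 0)
    (B : ℝ) : ∃ C, 0 ≤ C ∧ ∀ f, IsSchwartz f → (∀ x, |f x| ≤ B) →
      ∫ x, |P.eval (f x)| ≤ C * l2Norm f ^ 2 := by
  obtain ⟨Q, hQ⟩ := exists_eq_X_sq_mul h₀ h₁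
  obtain ⟨C, hC, hCQ⟩ := exists_forall_abs_eval_le Q B
  refine ⟨C, hC, fun f hf hB => ?_⟩
  rw [l2Norm_sq, ← integral_const_mul]
  refine integral_mono (hf.eval h₀).integrable.abs (IsSchwartz.integrable (by fun_prop))
    fun x => ?_
  simpa only [hQ, eval_mul, eval_pow, eval_X, abs_mul, abs_sq, mul_comm (f x ^ 2)] using
    mul_le_mul_of_nonneg_right (hCQ _ (hB x)) (sq_nonneg (f x))

end Polynomials

/-- The slices `W t`, `t ∈ s`, are Schwartz and bounded in `H¹`. Products of such families are
again of this kind, and also satisfy `BoundedL1On`. -/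
def BoundedH1On (s : Set ℝ) (W : ℝ → ℝ → ℝ) : Prop :=
  (∀ t, IsSchwartz (W t)) ∧ ∃ K, ∀ t ∈ s, hNorm 1 (W t) ≤ K

/-- The slices `W t`, `t ∈ s`, are Schwartz and bounded in `L¹`, as required of the fluxes in a
conservation law. -/
def BoundedL1On (s : Set ℝ) (W : ℝ → ℝ → ℝ) : Prop :=
  (∀ t, IsSchwartz (W t)) ∧ ∃ K, ∀ t ∈ s, ∫ x, |W t x| ≤ K

section Bounded

variable {s : Set ℝ} {V W : ℝ → ℝ → ℝ}

theorem BoundedH1On.add (hV : BoundedH1On s V) (hW : BoundedH1On s W) :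
    BoundedH1On s fun t x => V t x + W t x := by
  obtain ⟨hVs, K, hK⟩ := hV
  obtain ⟨hWs, L, hL⟩ := hW
  exact ⟨fun t => (hVs t).add (hWs t), K + L, fun t ht =>
    (hNorm_add_le 1 (hVs t) (hWs t)).trans (add_le_add (hK t ht) (hL t ht))⟩

theorem BoundedH1On.mul (hV : BoundedH1On s V) (hW : BoundedH1On s W) :
    BoundedH1On s fun t x => V t x * W t x := by
  obtain ⟨hVs, K, hK⟩ := hV
  obtain ⟨hWs, L, hL⟩ := hW
  refine ⟨fun t => (hVs t).mul (hWs t), algebraConst 1 * (K * L), fun t ht =>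
    (hNorm_mul_le le_rfl (hVs t) (hWs t)).trans ?_⟩
  exact mul_le_mul_of_nonneg_left (mul_le_mul (hK t ht) (hL t ht) (hNorm_nonneg _ _)
    ((hNorm_nonneg _ _).trans (hK t ht))) (zero_le_one.trans (one_le_algebraConst 1))

theorem BoundedH1On.eval_mul (P : Polynomial ℝ) (hV : BoundedH1On s V) (hW : BoundedH1On s W) :
    BoundedH1On s fun t x => P.eval (V t x) * W t x := by
  obtain ⟨hVs, K, hK⟩ := hV
  obtain ⟨hWs, L, hL⟩ := hW
  obtain ⟨M, hM, hMP⟩ := exists_hNorm_eval_mul_le le_rfl P K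
  exact ⟨fun t => (hVs t).eval_mul P (hWs t), M * L, fun t ht =>
    (hMP _ _ (hVs t) (hWs t) (hK t ht)).trans (mul_le_mul_of_nonneg_left (hL t ht) hM)⟩

theorem BoundedH1On.eval {P : Polynomial ℝ} (hP : P.eval 0 = 0) (hV : BoundedH1On s V) :
    BoundedH1On s fun t x => P.eval (V t x) := by
  obtain ⟨hVs, K, hK⟩ := hV
  obtain ⟨M, -, hMP⟩ := exists_hNorm_eval_le le_rfl hP K
  exact ⟨fun t => (hVs t).eval hP, M, fun t ht => hMP _ (hVs t) (hK t ht)⟩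

theorem BoundedH1On.mul_boundedL1On (hV : BoundedH1On s V) (hW : BoundedH1On s W) :
    BoundedL1On s fun t x => V t x * W t x := by
  obtain ⟨hVs, K, hK⟩ := hV
  obtain ⟨hWs, L, hL⟩ := hW
  refine ⟨fun t => (hVs t).mul (hWs t), K * L, fun t ht =>
    (integral_abs_mul_le_l2Norm_mul (hVs t) (hWs t)).trans ?_⟩
  exact mul_le_mul ((l2Norm_le_hNorm 1 _).trans (hK t ht)) ((l2Norm_le_hNorm 1 _).trans (hL t ht))
    (l2Norm_nonneg _) ((hNorm_nonneg _ _).trans (hK t ht))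

theorem BoundedH1On.eval_boundedL1On {P : Polynomial ℝ} (h₀ : P.eval 0 = 0)
    (h₁ : P.derivative.eval 0 = 0) (hV : BoundedH1On s V) :
    BoundedL1On s fun t x => P.eval (V t x) := by
  obtain ⟨Q, rfl⟩ := exists_eq_X_sq_mul h₀ h₁
  simpa only [Polynomial.eval_mul, Polynomial.eval_pow, Polynomial.eval_X, sq, mul_assoc,
    mul_comm (V _ _) (Q.eval _)] using hV.mul_boundedL1On (hV.eval_mul Q hV)

theorem BoundedL1On.add (hV : BoundedL1On s V) (hW : BoundedL1On s W) :
    BoundedL1On s fun t x => V t x + W t x := by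
  obtain ⟨hVs, K, hK⟩ := hV
  obtain ⟨hWs, L, hL⟩ := hW
  exact ⟨fun t => (hVs t).add (hWs t), K + L, fun t ht =>
    (integral_abs_add_le (hVs t) (hWs t)).trans (add_le_add (hK t ht) (hL t ht))⟩

theorem BoundedL1On.const_mul (a : ℝ) (hV : BoundedL1On s V) :
    BoundedL1On s fun t x => a * V t x := by
  obtain ⟨hVs, K, hK⟩ := hV
  exact ⟨fun t => (hVs t).const_mul a, |a| * K, fun t ht =>
    (integral_abs_const_mul a (V t)).trans_le (mul_le_mul_of_nonneg_left (hK t ht) (abs_nonneg a))⟩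

theorem hNorm_iteratedDeriv_le (m n : ℕ) (f : ℝ → ℝ) :
    hNorm m (iteratedDeriv n f) ≤ hNorm (m + n) f := by
  induction n generalizing f with
  | zero => rw [iteratedDeriv_zero, add_zero]
  | succ n ih =>
    rw [iteratedDeriv_succ']
    exact (ih (deriv f)).trans (hNorm_deriv_le (m + n) f)

theorem BoundedH1On.iteratedDeriv_of_hNorm_le {M : ℝ} {m n : ℕ} (hn : n + 1 ≤ m)
    (hV : ∀ t, IsSchwartz (V t)) (hM : ∀ t ∈ s, hNorm m (V t) ≤ M) :
    BoundedH1On s fun t => iteratedDeriv n (V t) :=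
  ⟨fun t => (hV t).iteratedDeriv n, M, fun t ht => (hNorm_iteratedDeriv_le 1 n (V t)).trans
    ((hNorm_mono (by omega) _).trans (hM t ht))⟩

theorem abs_integral_sub_le_of_boundedL1On {e Q P R : ℝ → ℝ → ℝ} {c d r : ℝ}
    (he : SpacetimeSmooth e) (hes : ∀ t, IsSchwartz (e t)) (hQ : BoundedL1On (Set.uIcc c d) Q)
    (hP : BoundedL1On (Set.uIcc c d) P) (hR : ∀ t, IsSchwartz (R t))
    (heq : ∀ t ∈ Set.uIcc c d, ∀ x,
      timeDeriv e t x + deriv (Q t) x + iteratedDeriv 3 (P t) x = R t x)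
    (hRr : ∀ t ∈ Set.uIcc c d, ∫ x, |R t x| ≤ r) :
    |(∫ x, e d x) - ∫ x, e c x| ≤ r * |d - c| := by
  obtain ⟨hQs, K, hK⟩ := hQ
  obtain ⟨hPs, L, hL⟩ := hP
  exact abs_integral_sub_le_of_flux_eq he hes hQs hPs hR heq
    (fun t ht => (hK t ht).trans (le_max_left K L)) (fun t ht => (hL t ht).trans (le_max_right K L))
    hRr

theorem integral_eq_of_boundedL1On {e Q P : ℝ → ℝ → ℝ} {c d : ℝ} (he : SpacetimeSmooth e)
    (hes : ∀ t, IsSchwartz (e t)) (hQ : BoundedL1On (Set.uIcc c d) Q)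
    (hP : BoundedL1On (Set.uIcc c d) P)
    (heq : ∀ t ∈ Set.uIcc c d, ∀ x,
      timeDeriv e t x + deriv (Q t) x + iteratedDeriv 3 (P t) x = 0) :
    ∫ x, e d x = ∫ x, e c x := by
  have h := abs_integral_sub_le_of_boundedL1On (r := 0) he hes hQ hP (fun _ => IsSchwartz.zero) heq
    (by simp)
  rw [zero_mul] at h
  exact sub_eq_zero.1 (abs_nonpos_iff.1 h)

end Bounded

section Conservation

open Set

theorem SpacetimeSmooth.eval {W : ℝ → ℝ → ℝ} (P : Polynomial ℝ) (hW : SpacetimeSmooth W) :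
    SpacetimeSmooth fun t x => P.eval (W t x) :=
  (P.contDiff_aeval _).comp hW

theorem SpacetimeSmooth.hasDerivAt_eval {W : ℝ → ℝ → ℝ} (P : Polynomial ℝ) (hW : SpacetimeSmooth W)
    (t x : ℝ) :
    HasDerivAt (fun τ => P.eval (W τ x)) (P.derivative.eval (W t x) * GKdV.timeDeriv W t x) t :=
  HasDerivAt.comp (h₂ := fun y => P.eval y) t (P.hasDerivAt (W t x)) (hW.hasDerivAt t x)

namespace IsGKdVSolution

variable {F : Polynomial ℝ} {T M c d : ℝ} {U : ℝ → ℝ → ℝ}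

theorem boundedH1On_iteratedDeriv (h : IsGKdVSolution F T U)
    (hM : ∀ t ∈ uIcc c d, hNorm 4 (U t) ≤ M) {n : ℕ} (hn : n ≤ 3) :
    BoundedH1On (uIcc c d) fun t => iteratedDeriv n (U t) :=
  .iteratedDeriv_of_hNorm_le (by omega) h.isSchwartz hM

theorem boundedH1On (h : IsGKdVSolution F T U) (hM : ∀ t ∈ uIcc c d, hNorm 4 (U t) ≤ M) :
    BoundedH1On (uIcc c d) U := by
  simpa only [iteratedDeriv_zero] using h.boundedH1On_iteratedDeriv hM (Nat.zero_le 3)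

theorem boundedH1On_deriv (h : IsGKdVSolution F T U) (hM : ∀ t ∈ uIcc c d, hNorm 4 (U t) ≤ M) :
    BoundedH1On (uIcc c d) fun t => deriv (U t) := by
  simpa only [iteratedDeriv_one] using h.boundedH1On_iteratedDeriv hM (n := 1) (by norm_num)

theorem l2Norm_eq (h : IsGKdVSolution F T U) (hcd : uIcc c d ⊆ Icc 0 T)
    (hM : ∀ t ∈ uIcc c d, hNorm 4 (U t) ≤ M) : l2Norm (U d) = l2Norm (U c) := by
  obtain ⟨H, hH, hH₀⟩ := exists_derivative_eq (Polynomial.X * F)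
  have hU := h.isSchwartz
  have b₀ := h.boundedH1On hM
  have b₁ := h.boundedH1On_deriv hM
  have hconserved := integral_eq_of_boundedL1On (e := fun t x => U t x ^ 2)
    (Q := fun t x => -3 * (deriv (U t) x * deriv (U t) x) + 2 * H.eval (U t x))
    (P := fun t x => U t x ^ 2) (h.smooth.pow 2) (fun t => (hU t).pow_succ 1)
    (((b₁.mul_boundedL1On b₁).const_mul (-3)).add
      ((b₀.eval_boundedL1On hH₀ (by simp [hH])).const_mul 2))
    (by simpa only [sq] using b₀.mul_boundedL1On b₀) fun t ht x => ?_
  · simpa only [← l2Norm_sq, sq_eq_sq₀, l2Norm_nonneg] using hconserved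
  have := hU t
  have := (hU t).eval hH₀
  rw [timeDeriv_sq h.smooth, h.timeDeriv_eq t (hcd ht), iteratedDeriv_three_sq (hU t)]
  simp (disch := fun_prop) only [iteratedDeriv_succ, iteratedDeriv_zero, deriv_fun_add,
    deriv_fun_mul, deriv_const, deriv_eval_comp, hH, Polynomial.eval_mul, Polynomial.eval_X]
  ring

theorem timeDeriv_deriv_eq (h : IsGKdVSolution F T U) {t : ℝ} (ht : t ∈ Icc 0 T) (x : ℝ) :
    timeDeriv (fun t x => deriv (U t) x) t x =
      -(deriv (fun x => iteratedDeriv 3 (U t) x + F.eval (U t x) * deriv (U t) x) x) := by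
  have hU := h.isSchwartz t
  have heq := h.timeDeriv_iteratedDeriv_eq 1 ht x
  simp only [iteratedDeriv_one] at heq
  rw [heq, deriv_fun_add (by fun_prop) (by fun_prop), ← iteratedDeriv_succ,
    ← iteratedDeriv_succ' (n := 3)]

theorem l2Norm_deriv_sq_sub_integral_eq (h : IsGKdVSolution F T U) {G : Polynomial ℝ}
    (hG : G.derivative.derivative = F) (hG₀ : G.eval 0 = 0) (hG₁ : G.derivative.eval 0 = 0)
    (hcd : uIcc c d ⊆ Icc 0 T) (hM : ∀ t ∈ uIcc c d, hNorm 4 (U t) ≤ M) :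
    l2Norm (deriv (U d)) ^ 2 - 2 * ∫ x, G.eval (U d x) =
      l2Norm (deriv (U c)) ^ 2 - 2 * ∫ x, G.eval (U c x) := by
  have hU := h.isSchwartz
  have hF := h.isSchwartz_eval
  have hGU (t : ℝ) := (hU t).eval hG₀
  have hGU' (t : ℝ) := (hU t).eval hG₁
  have b₁ := h.boundedH1On_deriv hM
  have bN := (h.boundedH1On_iteratedDeriv hM le_rfl).add ((h.boundedH1On hM).eval_mul F b₁)
  have bA := (h.boundedH1On_iteratedDeriv hM (n := 2) (by norm_num)).add
    ((h.boundedH1On hM).eval hG₁)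
  have hconserved := integral_eq_of_boundedL1On
    (e := fun t x => deriv (U t) x ^ 2 - 2 * G.eval (U t x))
    (Q := fun t x =>
      2 * (deriv (U t) x * (iteratedDeriv 3 (U t) x + F.eval (U t x) * deriv (U t) x)) +
       -1 * ((iteratedDeriv 2 (U t) x + G.derivative.eval (U t x)) *
        (iteratedDeriv 2 (U t) x + G.derivative.eval (U t x))))
    (P := fun _ _ => 0) ((h.smooth.deriv.pow 2).sub (contDiff_const.mul (h.smooth.eval G)))
    (fun t => by fun_prop)
    (((b₁.mul_boundedL1On bN).const_mul 2).add ((bA.mul_boundedL1On bA).const_mul (-1)))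
    ⟨fun _ => IsSchwartz.zero, 0, by simp⟩ fun t ht x => ?_
  · have hsplit (t : ℝ) : ∫ x, (deriv (U t) x ^ 2 - 2 * G.eval (U t x)) =
        l2Norm (deriv (U t)) ^ 2 - 2 * ∫ x, G.eval (U t x) := by
      rw [integral_sub (IsSchwartz.integrable (by fun_prop)) (IsSchwartz.integrable (by fun_prop)),
        integral_const_mul, l2Norm_sq]
    simpa only [hsplit] using hconserved
  have he : timeDeriv (fun t x => deriv (U t) x ^ 2 - 2 * G.eval (U t x)) t x =
      2 * (deriv (U t) x * timeDeriv (fun t x => deriv (U t) x) t x) -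
        2 * (G.derivative.eval (U t x) * timeDeriv U t x) := by
    refine HasDerivAt.deriv ((((h.smooth.deriv.hasDerivAt t x).fun_pow 2).fun_sub
      ((h.smooth.hasDerivAt_eval G t x).const_mul 2)).congr_deriv ?_)
    ring
  have := hU t
  have := hF t
  have := hGU' t
  rw [he, h.timeDeriv_deriv_eq (hcd ht), h.timeDeriv_eq t (hcd ht)]
  simp (disch := fun_prop) only [iteratedDeriv_succ, iteratedDeriv_zero, deriv_fun_add,
    deriv_fun_mul, deriv_const', deriv_eval_comp, hG]
  ring

end IsGKdVSolution

end Conservation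

section ModifiedEnergy

open Set

/-- The density of the modified `H²` energy `∫ f''² - 5/3 F(f) f'²`; the cubic term cancels the
part of the time derivative of `∫ f''²` that `‖f''‖²` does not control linearly. -/
noncomputable def modifiedEnergyDensity (F : Polynomial ℝ) (f : ℝ → ℝ) (x : ℝ) : ℝ :=
  iteratedDeriv 2 f x ^ 2 - 5 / 3 * (F.eval (f x) * deriv f x ^ 2)

/-- The flux of the modified `H²` energy along the flow of gKdV, apart from the third derivative
of `f''²`. -/
noncomputable def modifiedEnergyFlux (F : Polynomial ℝ) (f : ℝ → ℝ) (x : ℝ) : ℝ :=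
  -3 * (iteratedDeriv 3 f x * iteratedDeriv 3 f x) +
    8 / 3 * (F.eval (f x) * iteratedDeriv 2 f x * iteratedDeriv 2 f x) +
    1 / 12 * (F.derivative.derivative.eval (f x) * (deriv f x * deriv f x) *
      (deriv f x * deriv f x)) +
    -10 / 3 * (F.eval (f x) * deriv f x * iteratedDeriv 3 f x) +
    5 / 3 * (F.derivative.eval (f x) * (deriv f x * deriv f x) * iteratedDeriv 2 f x) +
    -5 / 3 * (F.eval (f x) * deriv f x * (F.eval (f x) * deriv f x))

/-- The source term in the balance law of the modified `H²` energy along the flow of gKdV. -/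
noncomputable def modifiedEnergySource (F : Polynomial ℝ) (f : ℝ → ℝ) (x : ℝ) : ℝ :=
  (1 / 12 * (F.derivative.derivative.derivative.eval (f x) * deriv f x ^ 3) +
    5 / 3 * ((F * F.derivative).eval (f x) * deriv f x)) * deriv f x ^ 2

section Slice

variable {F : Polynomial ℝ} {f : ℝ → ℝ}

theorem IsSchwartz.modifiedEnergyDensity (hF : F.eval 0 = 0) (hf : IsSchwartz f) :
    IsSchwartz (modifiedEnergyDensity F f) := by
  have := hf.eval hF
  unfold GKdV.modifiedEnergyDensity
  fun_prop

theorem integral_modifiedEnergyDensity (hF : F.eval 0 = 0) (hf : IsSchwartz f) :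
    ∫ x, modifiedEnergyDensity F f x =
      l2Norm (iteratedDeriv 2 f) ^ 2 - 5 / 3 * ∫ x, F.eval (f x) * deriv f x ^ 2 := by
  have := hf.eval hF
  unfold modifiedEnergyDensity
  rw [integral_sub (IsSchwartz.integrable (by fun_prop)) (IsSchwartz.integrable (by fun_prop)),
    integral_const_mul, l2Norm_sq]

theorem abs_integral_modifiedEnergyDensity_sub_l2Norm_sq_le {C : ℝ} (hF : F.eval 0 = 0)
    (hf : IsSchwartz f) (hC : ∀ x, |F.eval (f x)| ≤ C) :
    |(∫ x, modifiedEnergyDensity F f x) - l2Norm (iteratedDeriv 2 f) ^ 2| ≤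
      5 / 3 * (C * l2Norm (deriv f) ^ 2) := by
  rw [integral_modifiedEnergyDensity hF hf, sub_sub_cancel_left, abs_neg, abs_mul,
    abs_of_pos (a := 5 / 3) (by norm_num)]
  gcongr
  exact abs_integral_le_integral_abs.trans (integral_abs_mul_sq_le (hf.eval hF) hf.deriv hC)

theorem IsSchwartz.modifiedEnergySource (F : Polynomial ℝ) (hf : IsSchwartz f) :
    IsSchwartz (modifiedEnergySource F f) := by
  unfold GKdV.modifiedEnergySource
  fun_prop

theorem exists_integral_abs_modifiedEnergySource_le (F : Polynomial ℝ) (B : ℝ) :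
    ∃ C, 0 ≤ C ∧ ∀ f, IsSchwartz f → (∀ x, |f x| ≤ B) → ∫ x, |modifiedEnergySource F f x| ≤
      C * (1 + l2Norm (deriv f) ^ 2 * l2Norm (iteratedDeriv 2 f) ^ 2) * l2Norm (deriv f) ^ 2 := by
  obtain ⟨C, hC, hC'⟩ := exists_forall_abs_eval_le F.derivative.derivative.derivative B
  obtain ⟨D, hD, hD'⟩ := exists_forall_abs_eval_le (F * F.derivative) B
  refine ⟨1 / 12 * C + 5 / 3 * D, by positivity, fun f hf hB => ?_⟩
  refine integral_abs_mul_sq_le (by fun_prop) hf.deriv fun x => ?_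
  have hα := abs_nonneg (deriv f x)
  have hsq : |deriv f x| ^ 2 ≤ l2Norm (deriv f) * l2Norm (iteratedDeriv 2 f) := by
    rw [sq_abs, iteratedDeriv_succ (n := 1), iteratedDeriv_one]
    exact sq_le_l2Norm_mul_l2Norm_deriv hf.deriv x
  have hfour : |deriv f x| ^ 4 ≤ l2Norm (deriv f) ^ 2 * l2Norm (iteratedDeriv 2 f) ^ 2 := by
    rw [← mul_pow, pow_mul (|deriv f x|) 2 2]
    exact pow_le_pow_left₀ (sq_nonneg _) hsq 2
  have hone : |deriv f x| ≤ 1 + |deriv f x| ^ 4 := by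
    nlinarith [sq_nonneg (|deriv f x| - 1), sq_nonneg (|deriv f x| ^ 2 - 1)]
  have hthree : |deriv f x| ^ 3 ≤ 1 + |deriv f x| ^ 4 := by
    nlinarith [sq_nonneg (|deriv f x| ^ 2 - |deriv f x|), sq_nonneg (|deriv f x| ^ 2 - 1)]
  have hcub := mul_le_mul (hC' _ (hB x)) (hthree.trans (add_le_add_right hfour 1))
    (pow_nonneg hα 3) hC
  have hlin := mul_le_mul (hD' _ (hB x)) (hone.trans (add_le_add_right hfour 1)) hα hD
  refine (abs_add_le _ _).trans ?_
  rw [abs_mul (1 / 12), abs_mul (5 / 3), abs_mul, abs_mul, abs_pow,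
    abs_of_pos (a := 1 / 12) (by norm_num), abs_of_pos (a := 5 / 3) (by norm_num)]
  linarith

end Slice

theorem BoundedL1On.modifiedEnergyFlux {s : Set ℝ} {W : ℝ → ℝ → ℝ} (F : Polynomial ℝ)
    (h₀ : BoundedH1On s W) (h₁ : BoundedH1On s fun t => deriv (W t))
    (h₂ : BoundedH1On s fun t => iteratedDeriv 2 (W t))
    (h₃ : BoundedH1On s fun t => iteratedDeriv 3 (W t)) :
    BoundedL1On s fun t => modifiedEnergyFlux F (W t) :=
  (((((((h₃.mul_boundedL1On h₃).const_mul (-3)).add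
    (((h₀.eval_mul F h₂).mul_boundedL1On h₂).const_mul (8 / 3))).add
    (((h₀.eval_mul F.derivative.derivative (h₁.mul h₁)).mul_boundedL1On
      (h₁.mul h₁)).const_mul (1 / 12))).add
    (((h₀.eval_mul F h₁).mul_boundedL1On h₃).const_mul (-10 / 3))).add
    (((h₀.eval_mul F.derivative (h₁.mul h₁)).mul_boundedL1On h₂).const_mul (5 / 3))).add
    (((h₀.eval_mul F h₁).mul_boundedL1On (h₀.eval_mul F h₁)).const_mul (-5 / 3)))

namespace IsGKdVSolution

variable {F : Polynomial ℝ} {T M c d : ℝ} {U : ℝ → ℝ → ℝ}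

theorem modifiedEnergyDensity_balance (h : IsGKdVSolution F T U) {t : ℝ} (ht : t ∈ Icc 0 T)
    (x : ℝ) :
    timeDeriv (fun t => modifiedEnergyDensity F (U t)) t x + deriv (modifiedEnergyFlux F (U t)) x +
      iteratedDeriv 3 (fun x => iteratedDeriv 2 (U t) x ^ 2) x =
    modifiedEnergySource F (U t) x := by
  have hU := h.isSchwartz t
  have hF := h.isSchwartz_eval t
  have hdensity : timeDeriv (fun t => modifiedEnergyDensity F (U t)) t x =
      2 * (iteratedDeriv 2 (U t) x * timeDeriv (fun t x => iteratedDeriv 2 (U t) x) t x) -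
        5 / 3 * (F.derivative.eval (U t x) * timeDeriv U t x * deriv (U t) x ^ 2 +
          F.eval (U t x) * (2 * (deriv (U t) x * timeDeriv (fun t x => deriv (U t) x) t x))) := by
    refine HasDerivAt.deriv (((((h.smooth.iteratedDeriv 2).hasDerivAt t x).fun_pow 2).fun_sub
      (((h.smooth.hasDerivAt_eval F t x).fun_mul
        ((h.smooth.deriv.hasDerivAt t x).fun_pow 2)).const_mul (5 / 3))).congr_deriv ?_)
    ring
  rw [hdensity, h.timeDeriv_deriv_eq ht, h.timeDeriv_iteratedDeriv_eq 2 ht, h.timeDeriv_eq t ht,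
    iteratedDeriv_three_sq (hU.iteratedDeriv 2), iteratedDeriv_mul_eq_sum hF hU.deriv]
  unfold modifiedEnergyFlux modifiedEnergySource
  simp (disch := fun_prop) only [iteratedDeriv_succ, iteratedDeriv_zero, Finset.sum_range_succ,
    Finset.sum_range_zero, Nat.choose, Nat.reduceSub, deriv_fun_add, deriv_fun_mul, deriv_const,
    deriv_eval_comp, Polynomial.eval_mul]
  ring

theorem abs_integral_modifiedEnergyDensity_sub_le (h : IsGKdVSolution F T U) {r : ℝ}
    (hcd : uIcc c d ⊆ Icc 0 T) (hM : ∀ t ∈ uIcc c d, hNorm 4 (U t) ≤ M)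
    (hr : ∀ t ∈ uIcc c d, ∫ x, |modifiedEnergySource F (U t) x| ≤ r) :
    |(∫ x, modifiedEnergyDensity F (U d) x) - ∫ x, modifiedEnergyDensity F (U c) x| ≤
      r * |d - c| := by
  have h₂ := h.boundedH1On_iteratedDeriv hM (n := 2) (by norm_num)
  refine abs_integral_sub_le_of_boundedL1On (e := fun t => modifiedEnergyDensity F (U t))
    (P := fun t x => iteratedDeriv 2 (U t) x ^ 2)
    (((h.smooth.iteratedDeriv 2).pow 2).sub
      (contDiff_const.mul ((h.smooth.eval F).mul (h.smooth.deriv.pow 2))))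
    (fun t => (h.isSchwartz t).modifiedEnergyDensity h.eval_zero)
    (BoundedL1On.modifiedEnergyFlux F (h.boundedH1On hM) (h.boundedH1On_deriv hM) h₂
      (h.boundedH1On_iteratedDeriv hM le_rfl))
    (by simpa only [sq] using h₂.mul_boundedL1On h₂)
    (fun t => (h.isSchwartz t).modifiedEnergySource F)
    (fun t ht => h.modifiedEnergyDensity_balance (hcd ht)) hr

end IsGKdVSolution

end ModifiedEnergy

section SobolevBounds

open Set

theorem exists_forall_le_mul_of_abs_sub_le {C : ℝ} (hC : 0 ≤ C) (T : ℝ) :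
    ∃ L, 0 ≤ L ∧ ∀ (z E : ℝ → ℝ) (δ c d : ℝ), uIcc c d ⊆ Icc 0 T → (∀ t, 0 ≤ z t) →
      BddAbove (z '' uIcc c d) → (∀ t ∈ uIcc c d, |E t - z t| ≤ δ) →
      (∀ p ∈ uIcc c d, ∀ q ∈ uIcc c d, ∀ A, 0 ≤ A → (∀ t ∈ uIcc p q, z t ≤ A) →
        |E q - E p| ≤ C * (1 + A) * |q - p|) → z d ≤ L * (1 + z c + 2 * δ) := by
  obtain ⟨n, hn⟩ := exists_nat_ge (2 * C * T)
  refine ⟨2 ^ (n + 1), by positivity, fun z E δ c d hcd hz hbdd hE H => ?_⟩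
  have hc := hcd left_mem_uIcc
  have hd := hcd right_mem_uIcc
  have hlen : |d - c| ≤ T := abs_sub_le_iff.2 ⟨by linarith [hc.1, hd.2], by linarith [hd.1, hc.2]⟩
  have hEz (t : ℝ) (ht : t ∈ uIcc c d) : z t ≤ E t + δ ∧ E t + δ ≤ z t + 2 * δ := by
    have := abs_le.1 (hE t ht)
    constructor <;> linarith
  have hbdd' : BddAbove ((fun t => E t + δ) '' uIcc c d) := by
    obtain ⟨M, hM⟩ := hbdd
    refine ⟨M + 2 * δ, ?_⟩
    rintro _ ⟨t, ht, rfl⟩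
    exact (hEz t ht).2.trans (add_le_add_left (hM (mem_image_of_mem z ht)) _)
  have hgrowth : 1 + (E d + δ) ≤ 2 ^ (n + 1) * (1 + (E c + δ)) := by
    refine one_add_le_two_pow_mul_of_abs_sub_le (y := fun t => E t + δ) n hC
      (fun t ht => (hz t).trans (hEz t ht).1) hbdd' (fun p hp q hq A hA => ?_)
      (by linarith [mul_le_mul_of_nonneg_left hlen (mul_nonneg zero_le_two hC)])
    rw [add_sub_add_right_eq_sub, mul_right_comm]
    have hzA (t : ℝ) (ht : t ∈ uIcc p q) : z t ≤ A :=
      (hEz t (uIcc_subset_uIcc hp hq ht)).1.trans (hA t ht)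
    exact H p hp q hq A ((hz p).trans (hzA p left_mem_uIcc)) hzA
  have hdz := (hEz d right_mem_uIcc).1
  have hcz : (2 : ℝ) ^ (n + 1) * (1 + (E c + δ)) ≤ 2 ^ (n + 1) * (1 + z c + 2 * δ) :=
    mul_le_mul_of_nonneg_left (by linarith [(hEz c left_mem_uIcc).2]) (by positivity)
  linarith

theorem bddAbove_image_sq {ι : Type*} {f : ι → ℝ} {s : Set ι} {M : ℝ} (h₀ : ∀ i, 0 ≤ f i)
    (hM : ∀ i ∈ s, f i ≤ M) : BddAbove ((fun i => f i ^ 2) '' s) := by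
  refine ⟨M ^ 2, ?_⟩
  rintro _ ⟨i, hi, rfl⟩
  exact pow_le_pow_left₀ (h₀ i) (hM i hi) 2

namespace IsGKdVSolution

variable {F : Polynomial ℝ} {T : ℝ} {U : ℝ → ℝ → ℝ}

theorem exists_hNorm_one_le (h : IsGKdVSolution F T U) (B K : ℝ) :
    ∃ L, ∀ c d M, uIcc c d ⊆ Icc 0 T → (∀ t ∈ uIcc c d, hNorm 4 (U t) ≤ M) →
      (∀ t ∈ uIcc c d, ∀ x, |U t x| ≤ B) → hNorm 1 (U c) ≤ K → hNorm 1 (U d) ≤ L := by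
  obtain ⟨G', hG', hG₁⟩ := exists_derivative_eq F
  obtain ⟨G, hG, hG₀⟩ := exists_derivative_eq G'
  obtain ⟨C, hC, hCG⟩ := exists_integral_abs_eval_le hG₀ (by rw [hG, hG₁]) B
  refine ⟨√((1 + 4 * C) * K ^ 2), fun c d M hcd hM hB hK => Real.le_sqrt_of_sq_le ?_⟩
  have hmass := h.l2Norm_eq hcd hM
  have henergy := h.l2Norm_deriv_sq_sub_integral_eq (by rw [hG, hG']) hG₀ (by rw [hG, hG₁]) hcd hM
  have hpot (t : ℝ) (ht : t ∈ uIcc c d) : |∫ x, G.eval (U t x)| ≤ C * l2Norm (U t) ^ 2 :=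
    abs_integral_le_integral_abs.trans (hCG _ (h.isSchwartz t) (hB t ht))
  have hc := abs_le.1 (hpot c left_mem_uIcc)
  have hd := abs_le.1 (hpot d right_mem_uIcc)
  have hKsq := pow_le_pow_left₀ (hNorm_nonneg _ _) hK 2
  simp only [hNorm_one_sq] at hKsq ⊢
  have hmassK : C * l2Norm (U c) ^ 2 ≤ C * K ^ 2 :=
    mul_le_mul_of_nonneg_left (by linarith [sq_nonneg (l2Norm (deriv (U c)))]) hC
  rw [hmass] at hd ⊢
  linarith

theorem exists_l2Norm_iteratedDeriv_two_le (h : IsGKdVSolution F T U) (B K : ℝ) :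
    ∃ L, ∀ c d M, uIcc c d ⊆ Icc 0 T → (∀ t ∈ uIcc c d, hNorm 4 (U t) ≤ M) →
      (∀ t ∈ uIcc c d, ∀ x, |U t x| ≤ B) → (∀ t ∈ uIcc c d, l2Norm (deriv (U t)) ≤ K) →
      l2Norm (iteratedDeriv 2 (U c)) ≤ K → l2Norm (iteratedDeriv 2 (U d)) ≤ L := by
  obtain ⟨C, hC, hsource⟩ := exists_integral_abs_modifiedEnergySource_le F B
  obtain ⟨D, hD, hFD⟩ := exists_forall_abs_eval_le F B
  have hCK : 0 ≤ C * (1 + K ^ 2) * K ^ 2 := by positivity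
  obtain ⟨L, hL₀, hL⟩ := exists_forall_le_mul_of_abs_sub_le hCK T
  refine ⟨√(L * (1 + K ^ 2 + 2 * (5 / 3 * (D * K ^ 2)))), fun c d M hcd hM hB hK hKc =>
    Real.le_sqrt_of_sq_le ?_⟩
  refine (hL (fun t => l2Norm (iteratedDeriv 2 (U t)) ^ 2)
    (fun t => ∫ x, modifiedEnergyDensity F (U t) x) (5 / 3 * (D * K ^ 2)) c d hcd
    (fun t => sq_nonneg _) (bddAbove_image_sq (fun t => l2Norm_nonneg _) fun t ht =>
      (l2Norm_iteratedDeriv_le_hNorm (by norm_num) (U t)).trans (hM t ht))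
    (fun t ht => ?_) fun p hp q hq A hA₀ hA => ?_).trans ?_
  · refine (abs_integral_modifiedEnergyDensity_sub_l2Norm_sq_le h.eval_zero (h.isSchwartz t)
      fun x => hFD _ (hB t ht x)).trans ?_
    gcongr
    exacts [l2Norm_nonneg _, hK t ht]
  · have hpq : uIcc p q ⊆ uIcc c d := uIcc_subset_uIcc hp hq
    refine h.abs_integral_modifiedEnergyDensity_sub_le (hpq.trans hcd)
      (fun t ht => hM t (hpq ht)) fun t ht => ?_
    calc _ ≤ C * (1 + l2Norm (deriv (U t)) ^ 2 * l2Norm (iteratedDeriv 2 (U t)) ^ 2) *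
          l2Norm (deriv (U t)) ^ 2 := hsource _ (h.isSchwartz t) (hB t (hpq ht))
      _ ≤ C * (1 + K ^ 2 * A) * K ^ 2 := by
        gcongr
        exacts [l2Norm_nonneg _, hK t (hpq ht), hA t ht, l2Norm_nonneg _, hK t (hpq ht)]
      _ ≤ C * ((1 + K ^ 2) * (1 + A)) * K ^ 2 := by
        gcongr
        linarith [sq_nonneg K]
      _ = C * (1 + K ^ 2) * K ^ 2 * (1 + A) := by ring
  · gcongr
    exact l2Norm_nonneg _

theorem exists_hNorm_two_le (h : IsGKdVSolution F T U) (B K : ℝ) :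
    ∃ L, ∀ c d M, uIcc c d ⊆ Icc 0 T → (∀ t ∈ uIcc c d, hNorm 4 (U t) ≤ M) →
      (∀ t ∈ uIcc c d, ∀ x, |U t x| ≤ B) → hNorm 2 (U c) ≤ K → hNorm 2 (U d) ≤ L := by
  obtain ⟨L₁, hL₁⟩ := h.exists_hNorm_one_le B K
  obtain ⟨L₂, hL₂⟩ := h.exists_l2Norm_iteratedDeriv_two_le B (max L₁ K)
  refine ⟨L₁ + L₂, fun c d M hcd hM hB hK => ?_⟩
  have hone (t : ℝ) (ht : t ∈ uIcc c d) : hNorm 1 (U t) ≤ L₁ := by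
    have hct : uIcc c t ⊆ uIcc c d := uIcc_subset_uIcc_left ht
    exact hL₁ c t M (hct.trans hcd) (fun τ hτ => hM τ (hct hτ)) (fun τ hτ => hB τ (hct hτ))
      ((hNorm_mono one_le_two _).trans hK)
  have hderiv (t : ℝ) (ht : t ∈ uIcc c d) : l2Norm (deriv (U t)) ≤ max L₁ K := by
    simpa only [iteratedDeriv_one] using (l2Norm_iteratedDeriv_le_hNorm (n := 1) le_rfl (U t)).trans
      ((hone t ht).trans (le_max_left L₁ K))
  refine (hNorm_succ_le 1 _).trans (add_le_add (hone d right_mem_uIcc)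
    (hL₂ c d M hcd hM hB hderiv ?_))
  exact (l2Norm_iteratedDeriv_le_hNorm le_rfl _).trans (hK.trans (le_max_right L₁ K))

theorem exists_l2Norm_transportCommutator_succ_le (h : IsGKdVSolution F T U) {m : ℕ} (hm : 2 ≤ m)
    (B : ℝ) : ∃ D, 0 ≤ D ∧ ∀ t Y, hNorm m (U t) ≤ B → l2Norm (iteratedDeriv (m + 1) (U t)) ≤ Y →
      l2Norm (transportCommutator (m + 1) (fun x => F.eval (U t x)) (U t)) ≤ D * (1 + Y) := by
  obtain ⟨L, hL, hlow⟩ := exists_hNorm_eval_le (m := m) (by lia) h.eval_zero B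
  obtain ⟨L', hL', htop⟩ := exists_hNorm_succ_eval_le (m := m) (by lia) h.eval_zero B
  rcases lt_or_ge B 0 with hB₀ | hB₀
  · exact ⟨0, le_rfl, fun t Y ht => absurd ((hNorm_nonneg _ _).trans ht) hB₀.not_ge⟩
  refine ⟨2 ^ (m + 1) * ((L + L' * B) * (1 + B)), by positivity, fun t Y ht hY => ?_⟩
  have hU := h.isSchwartz t
  have hY₀ : 0 ≤ Y := (l2Norm_nonneg _).trans hY
  have hfull : 1 + hNorm (m + 1) (U t) ≤ (1 + B) * (1 + Y) := by
    linarith [hNorm_succ_le m (U t), mul_nonneg hB₀ hY₀]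
  calc l2Norm (transportCommutator (m + 1) (fun x => F.eval (U t x)) (U t))
      ≤ 2 ^ (m + 1) * (hNorm m (fun x => F.eval (U t x)) * hNorm (m + 1) (U t) +
          hNorm (m + 1) (fun x => F.eval (U t x)) * hNorm m (U t)) :=
        l2Norm_transportCommutator_succ_le_hNorm hm (h.isSchwartz_eval t) hU
    _ ≤ 2 ^ (m + 1) * (L * (1 + hNorm (m + 1) (U t)) + L' * (1 + hNorm (m + 1) (U t)) * B) := by
        have := hNorm_nonneg (m + 1) (U t)
        gcongr
        exacts [hlow _ hU ht, by linarith, hNorm_nonneg _ _, htop _ hU ht]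
    _ = 2 ^ (m + 1) * ((L + L' * B) * (1 + hNorm (m + 1) (U t))) := by ring
    _ ≤ 2 ^ (m + 1) * ((L + L' * B) * ((1 + B) * (1 + Y))) := by gcongr
    _ = 2 ^ (m + 1) * ((L + L' * B) * (1 + B)) * (1 + Y) := by ring

theorem exists_l2Norm_iteratedDeriv_succ_le (h : IsGKdVSolution F T U) {m : ℕ} (hm : 2 ≤ m)
    (B K : ℝ) : ∃ L, ∀ c d M, uIcc c d ⊆ Icc 0 T → (∀ t ∈ uIcc c d, hNorm (m + 1) (U t) ≤ M) →
      (∀ t ∈ uIcc c d, hNorm m (U t) ≤ B) → l2Norm (iteratedDeriv (m + 1) (U c)) ≤ K →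
      l2Norm (iteratedDeriv (m + 1) (U d)) ≤ L := by
  obtain ⟨p, hp, hFp⟩ := exists_hNorm_eval_le (m := m) (by lia) h.eval_zero B
  obtain ⟨D, hD, hcomm⟩ := h.exists_l2Norm_transportCommutator_succ_le hm B
  obtain ⟨L, hL₀, hL⟩ := exists_forall_le_mul_of_abs_sub_le
    (add_nonneg (mul_nonneg (by norm_num : (0 : ℝ) ≤ 5) hp) (mul_nonneg zero_le_four hD)) T
  refine ⟨√(L * (1 + K ^ 2)), fun c d M hcd hM hB hK => Real.le_sqrt_of_sq_le ?_⟩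
  have hgrowth := hL (fun t => l2Norm (iteratedDeriv (m + 1) (U t)) ^ 2) _ 0 c d hcd
    (fun t => sq_nonneg _) (bddAbove_image_sq (fun t => l2Norm_nonneg _) fun t ht =>
      (l2Norm_iteratedDeriv_le_hNorm le_rfl (U t)).trans (hM t ht))
    (fun t _ => by rw [sub_self, abs_zero]) fun q hq r hr A hA₀ hA => ?_
  · refine hgrowth.trans ?_
    rw [mul_zero, add_zero]
    gcongr
    exact l2Norm_nonneg _
  · have hqr : uIcc q r ⊆ uIcc c d := uIcc_subset_uIcc hq hr
    have hY (t : ℝ) (ht : t ∈ uIcc q r) : l2Norm (iteratedDeriv (m + 1) (U t)) ≤ √A :=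
      Real.le_sqrt_of_sq_le (hA t ht)
    refine (h.abs_l2Norm_iteratedDeriv_succ_sq_sub_le (p := p) (Y := √A) (r := D * (1 + √A))
      (hqr.trans hcd) (fun t ht => (hNorm_mono hm _).trans (hFp _ (h.isSchwartz t) (hB t (hqr ht))))
      hY fun t ht => hcomm t _ (hB t (hqr ht)) (hY t ht)).trans ?_
    have hsq := Real.sq_sqrt hA₀
    have hsqrt : √A * (1 + √A) ≤ 2 * (1 + A) := by linarith [sq_nonneg (√A - 1)]
    gcongr
    rw [hsq, mul_left_comm √A]
    linarith [mul_le_mul_of_nonneg_left hsqrt hD]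

theorem exists_hNorm_succ_le (h : IsGKdVSolution F T U) {m : ℕ} (hm : 2 ≤ m) (B K : ℝ) :
    ∃ L, ∀ c d M, uIcc c d ⊆ Icc 0 T → (∀ t ∈ uIcc c d, hNorm (m + 1) (U t) ≤ M) →
      (∀ t ∈ uIcc c d, hNorm m (U t) ≤ B) → hNorm (m + 1) (U c) ≤ K → hNorm (m + 1) (U d) ≤ L := by
  obtain ⟨L, hL⟩ := h.exists_l2Norm_iteratedDeriv_succ_le hm B K
  exact ⟨B + L, fun c d M hcd hM hB hK => (hNorm_succ_le m _).trans (add_le_add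
    (hB d right_mem_uIcc)
    (hL c d M hcd hM hB ((l2Norm_iteratedDeriv_le_hNorm le_rfl _).trans hK)))⟩

theorem exists_hNorm_four_le (h : IsGKdVSolution F T U) (B K : ℝ) :
    ∃ L, ∀ c d M, uIcc c d ⊆ Icc 0 T → (∀ t ∈ uIcc c d, hNorm 4 (U t) ≤ M) →
      (∀ t ∈ uIcc c d, ∀ x, |U t x| ≤ B) → hNorm 4 (U c) ≤ K → hNorm 4 (U d) ≤ L := by
  obtain ⟨L₂, hL₂⟩ := h.exists_hNorm_two_le B K
  obtain ⟨L₃, hL₃⟩ := h.exists_hNorm_succ_le le_rfl L₂ K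
  obtain ⟨L₄, hL₄⟩ := h.exists_hNorm_succ_le (m := 3) (by norm_num) L₃ K
  refine ⟨L₄, fun c d M hcd hM hB hK => ?_⟩
  have hct {t : ℝ} (ht : t ∈ uIcc c d) : uIcc c t ⊆ uIcc c d := uIcc_subset_uIcc_left ht
  have htwo (t : ℝ) (ht : t ∈ uIcc c d) : hNorm 2 (U t) ≤ L₂ :=
    hL₂ c t M ((hct ht).trans hcd) (fun τ hτ => hM τ (hct ht hτ)) (fun τ hτ => hB τ (hct ht hτ))
      ((hNorm_mono (by norm_num) _).trans hK)
  have hthree (t : ℝ) (ht : t ∈ uIcc c d) : hNorm 3 (U t) ≤ L₃ :=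
    hL₃ c t M ((hct ht).trans hcd)
      (fun τ hτ => (hNorm_mono (by norm_num) _).trans (hM τ (hct ht hτ)))
      (fun τ hτ => htwo τ (hct ht hτ)) ((hNorm_mono (by norm_num) _).trans hK)
  exact hL₄ c d M hcd hM hthree hK

theorem exists_forall_hNorm_le_of_hNorm_four_le (h : IsGKdVSolution F T U) {M : ℝ}
    (hM : ∀ t ∈ Icc 0 T, hNorm 4 (U t) ≤ M) (m : ℕ) : ∃ K, ∀ t ∈ Icc 0 T, hNorm m (U t) ≤ K := by
  have hlarge (n : ℕ) : ∃ K, ∀ t ∈ Icc 0 T, hNorm (n + 4) (U t) ≤ K := by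
    induction n with
    | zero => exact ⟨M, by simpa only [zero_add] using hM⟩
    | succ n ih =>
      obtain ⟨B, hB⟩ := ih
      rw [add_right_comm]
      suffices H : BddAbove ((fun t => hNorm (n + 4 + 1) (U t)) '' Icc 0 T) by
        obtain ⟨K, hK⟩ := H
        exact ⟨K, fun t ht => hK (mem_image_of_mem _ ht)⟩
      refine bddAbove_image_Icc_of_isClosed_le
        (fun K => isClosed_setOf_hNorm_le h.smooth h.isSchwartz _ isClosed_Icc K) fun K => ?_
      obtain ⟨L, hL⟩ := h.exists_hNorm_succ_le (m := n + 4) (by lia) B K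
      refine ⟨L, fun c hc d hd ⟨M', hM'⟩ => hL c d M' (uIcc_subset_Icc hc hd)
        (fun t ht => hM' (mem_image_of_mem _ ht)) fun t ht => hB t (uIcc_subset_Icc hc hd ht)⟩
  obtain ⟨K, hK⟩ := hlarge m
  exact ⟨K, fun t ht => (hNorm_mono (by lia) _).trans (hK t ht)⟩

/-- No continuity in time of the Sobolev norms is assumed: they are only lower semicontinuous, so
that their boundedness needs the Baire argument of `bddAbove_image_Icc_of_isClosed_le`. -/
theorem exists_forall_hNorm_le_of_propagation (h : IsGKdVSolution F T U)
    (hB : ∀ K, ∃ B, ∀ c d M, uIcc c d ⊆ Icc 0 T → (∀ t ∈ uIcc c d, hNorm 4 (U t) ≤ M) →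
      hNorm 4 (U c) ≤ K → ∀ x, |U d x| ≤ B) (m : ℕ) : ∃ K, ∀ t ∈ Icc 0 T, hNorm m (U t) ≤ K := by
  suffices H : BddAbove ((fun t => hNorm 4 (U t)) '' Icc 0 T) by
    obtain ⟨M, hM⟩ := H
    exact h.exists_forall_hNorm_le_of_hNorm_four_le (fun t ht => hM (mem_image_of_mem _ ht)) m
  refine bddAbove_image_Icc_of_isClosed_le
    (fun K => isClosed_setOf_hNorm_le h.smooth h.isSchwartz _ isClosed_Icc K) fun K => ?_
  obtain ⟨B, hB⟩ := hB K
  obtain ⟨L, hL⟩ := h.exists_hNorm_four_le B K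
  refine ⟨L, fun c hc d hd ⟨M, hM⟩ hK => ?_⟩
  have hcd := uIcc_subset_Icc hc hd
  have hbound (t : ℝ) (ht : t ∈ uIcc c d) : hNorm 4 (U t) ≤ M := hM (mem_image_of_mem _ ht)
  refine hL c d M hcd hbound (fun t ht => ?_) hK
  have hct : uIcc c t ⊆ uIcc c d := uIcc_subset_uIcc_left ht
  exact hB c t M (hct.trans hcd) (fun τ hτ => hbound τ (hct hτ)) hK

theorem exists_forall_hNorm_le_of_forall_abs_le (h : IsGKdVSolution F T U) {B : ℝ}
    (hB : ∀ t ∈ Icc 0 T, ∀ x, |U t x| ≤ B) (m : ℕ) : ∃ K, ∀ t ∈ Icc 0 T, hNorm m (U t) ≤ K :=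
  h.exists_forall_hNorm_le_of_propagation
    (fun _ => ⟨B, fun _ d _ hcd _ _ => hB d (hcd right_mem_uIcc)⟩) m

end IsGKdVSolution

section KdV

open Polynomial

variable {T : ℝ} {u : ℝ → ℝ → ℝ}

theorem abs_le_l2Norm_add_l2Norm_deriv {f : ℝ → ℝ} (hf : IsSchwartz f) (x : ℝ) :
    |f x| ≤ l2Norm f + l2Norm (deriv f) := by
  have hf₀ := l2Norm_nonneg f
  have hf₁ := l2Norm_nonneg (deriv f)
  refine abs_le_of_sq_le_sq ?_ (add_nonneg hf₀ hf₁)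
  linarith [sq_le_l2Norm_mul_l2Norm_deriv hf x, mul_nonneg hf₀ hf₁, sq_nonneg (l2Norm f),
    sq_nonneg (l2Norm (deriv f))]

theorem abs_integral_pow_three_le {f : ℝ → ℝ} (hf : IsSchwartz f) {K : ℝ} (hK : l2Norm f ≤ K) :
    |∫ x, 1 / 6 * f x ^ 3| ≤ 1 / 6 * (K + l2Norm (deriv f)) * K ^ 2 := by
  have hf₁ := l2Norm_nonneg (deriv f)
  have hK₀ : 0 ≤ K := (l2Norm_nonneg f).trans hK
  have hbound (x : ℝ) : |1 / 6 * f x| ≤ 1 / 6 * (K + l2Norm (deriv f)) := by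
    rw [abs_mul, abs_of_pos (a := (1 / 6 : ℝ)) (by norm_num)]
    gcongr
    exact (abs_le_l2Norm_add_l2Norm_deriv hf x).trans (by gcongr)
  calc |∫ x, 1 / 6 * f x ^ 3| ≤ ∫ x, |1 / 6 * f x * f x ^ 2| := by
        simp only [mul_assoc, ← pow_succ']
        exact abs_integral_le_integral_abs
    _ ≤ 1 / 6 * (K + l2Norm (deriv f)) * l2Norm f ^ 2 :=
        integral_abs_mul_sq_le (hf.const_mul _) hf hbound
    _ ≤ 1 / 6 * (K + l2Norm (deriv f)) * K ^ 2 := by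
        gcongr
        exact l2Norm_nonneg f

theorem le_of_sq_le_add_mul {K z : ℝ} (hK : 0 ≤ K)
    (h : z ^ 2 ≤ K ^ 2 + 1 / 3 * (K + z) * K ^ 2 + 1 / 3 * (K + K) * K ^ 2) :
    z ≤ 1 + K + K ^ 2 := by
  by_contra! hz
  nlinarith [pow_nonneg hK 3, mul_nonneg hK (sub_nonneg.2 hz.le),
    mul_nonneg (sq_nonneg K) (sub_nonneg.2 hz.le)]

theorem IsGKdVSolution.abs_le_of_kdv (h : IsGKdVSolution X T u) {c d K M : ℝ}
    (hcd : uIcc c d ⊆ Icc 0 T) (hM : ∀ t ∈ uIcc c d, hNorm 4 (u t) ≤ M) (hK : hNorm 4 (u c) ≤ K)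
    (x : ℝ) : |u d x| ≤ K + (1 + K + K ^ 2) := by
  have hK₀ : l2Norm (u c) ≤ K := (l2Norm_le_hNorm 4 _).trans hK
  have hK₁ : l2Norm (deriv (u c)) ≤ K := by
    simpa only [iteratedDeriv_one] using
      (l2Norm_iteratedDeriv_le_hNorm (n := 1) (by norm_num) (u c)).trans hK
  have hmass : l2Norm (u d) ≤ K := (h.l2Norm_eq hcd hM).trans_le hK₀
  have henergy := h.l2Norm_deriv_sq_sub_integral_eq (G := C (1 / 6) * X ^ 3)
    (by
      rw [derivative_C_mul_X_pow, derivative_C_mul_X_pow]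
      norm_num) (by simp) (by simp) hcd hM
  simp only [eval_mul, eval_C, eval_pow, eval_X] at henergy
  have hpotc := abs_le.1 (abs_integral_pow_three_le (h.isSchwartz c) hK₀)
  have hpotd := abs_le.1 (abs_integral_pow_three_le (h.isSchwartz d) hmass)
  have hpotK : 1 / 6 * (K + l2Norm (deriv (u c))) * K ^ 2 ≤ 1 / 6 * (K + K) * K ^ 2 := by gcongr
  have hsq := pow_le_pow_left₀ (l2Norm_nonneg _) hK₁ 2
  refine (abs_le_l2Norm_add_l2Norm_deriv (h.isSchwartz d) x).trans (add_le_add hmass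
    (le_of_sq_le_add_mul ((l2Norm_nonneg _).trans hK₀) ?_))
  linarith

theorem IsGKdVSolution.exists_forall_hNorm_le_of_kdv (h : IsGKdVSolution X T u) (m : ℕ) :
    ∃ K, ∀ t ∈ Icc 0 T, hNorm m (u t) ≤ K :=
  h.exists_forall_hNorm_le_of_propagation
    (fun K => ⟨K + (1 + K + K ^ 2), fun _ _ _ hcd hM hK => h.abs_le_of_kdv hcd hM hK⟩) m

end KdV

end SobolevBounds

/-! ### Quantitative bounds on the lifespan -/

section Quantitative

open Set

theorem abs_hNorm_sq_sub_hNorm_sq_le {m : ℕ} {f g : ℝ → ℝ} {C : ℝ}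
    (h : ∀ n ≤ m, |l2Norm (iteratedDeriv n f) ^ 2 - l2Norm (iteratedDeriv n g) ^ 2| ≤ C) :
    |hNorm m f ^ 2 - hNorm m g ^ 2| ≤ (m + 1) * C := by
  rw [hNorm_sq, hNorm_sq, ← Finset.sum_sub_distrib]
  refine (Finset.abs_sum_le_sum_abs _ _).trans ((Finset.sum_le_card_nsmul _ _ C fun n hn =>
    h n (Finset.mem_range_succ_iff.1 hn)).trans_eq ?_)
  rw [Finset.card_range, nsmul_eq_mul, Nat.cast_succ]

/-- The constant in the energy inequality for the `Hᵐ` norm of a solution. -/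
noncomputable def growthConst (m : ℕ) : ℝ := (m + 1) * (5 + 2 * 2 ^ m)

theorem growthConst_pos (m : ℕ) : 0 < growthConst m := by
  unfold growthConst
  positivity

namespace IsGKdVSolution

variable {F : Polynomial ℝ} {T : ℝ} {U : ℝ → ℝ → ℝ} {m : ℕ}

theorem abs_l2Norm_iteratedDeriv_sq_sub_le (h : IsGKdVSolution F T U) {c d K P : ℝ} {n : ℕ}
    (hm : 2 ≤ m) (hn : n ≤ m) (hcd : uIcc c d ⊆ Icc 0 T) (hK : ∀ t ∈ uIcc c d, hNorm m (U t) ≤ K)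
    (hP : ∀ t ∈ uIcc c d, hNorm m (fun x => F.eval (U t x)) ≤ P) :
    |l2Norm (iteratedDeriv n (U d)) ^ 2 - l2Norm (iteratedDeriv n (U c)) ^ 2| ≤
      (5 + 2 * 2 ^ m) * (P * K ^ 2 * |d - c|) := by
  have hU := h.isSchwartz
  have hF := h.isSchwartz_eval
  have hP₀ : 0 ≤ P := (hNorm_nonneg _ _).trans (hP c left_mem_uIcc)
  rcases n with _ | n
  · simp only [iteratedDeriv_zero]
    refine (abs_l2Norm_sq_sub_le_of_timeDeriv_eq (b := fun t x => F.eval (U t x))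
      (g := fun _ _ => 0) (Y := K) (Z := K) (B := P) (p := P) (r := 0) h.smooth hU hF
      (fun _ => IsSchwartz.zero) (fun t ht x => by rw [h.timeDeriv_eq t (hcd ht), add_zero])
      (fun t ht => (l2Norm_le_hNorm m _).trans (hK t ht)) (fun t ht => ?_)
      (fun t ht x => (abs_le_hNorm (by lia) (hF t) x).trans (hP t ht)) (fun t ht x => ?_)
      (fun t _ => by simp [l2Norm])).trans ?_
    · simpa only [iteratedDeriv_one] using
        (l2Norm_iteratedDeriv_le_hNorm (n := 1) (by lia) (U t)).trans (hK t ht)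
    · simpa only [iteratedDeriv_one] using
        (abs_iteratedDeriv_le_hNorm (n := 1) hm (hF t) x).trans (hP t ht)
    · rw [mul_zero, mul_zero, add_zero]
      exact le_mul_of_one_le_left (by positivity) (by linarith [pow_pos two_pos (M₀ := ℝ) m])
  · refine (h.abs_l2Norm_iteratedDeriv_succ_sq_sub_le (p := P) (Y := K) (r := 2 ^ m * (P * K)) hcd
      (fun t ht => (hNorm_mono hm _).trans (hP t ht))
      (fun t ht => (l2Norm_iteratedDeriv_le_hNorm hn _).trans (hK t ht)) fun t ht => ?_).trans_eq
      (by ring)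
    refine (l2Norm_transportCommutator_le_hNorm hn hm (hF t) (hU t)).trans ?_
    have hU₀ := hNorm_nonneg m (U t)
    have hFU₀ := hNorm_nonneg m fun x => F.eval (U t x)
    gcongr
    · exact one_le_two
    · exact hP t ht
    · exact hK t ht

theorem abs_hNorm_sq_sub_le (h : IsGKdVSolution F T U) {c d K P : ℝ} (hm : 2 ≤ m)
    (hcd : uIcc c d ⊆ Icc 0 T) (hK : ∀ t ∈ uIcc c d, hNorm m (U t) ≤ K)
    (hP : ∀ t ∈ uIcc c d, hNorm m (fun x => F.eval (U t x)) ≤ P) :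
    |hNorm m (U d) ^ 2 - hNorm m (U c) ^ 2| ≤ growthConst m * (P * K ^ 2 * |d - c|) := by
  rw [growthConst, mul_assoc]
  exact abs_hNorm_sq_sub_hNorm_sq_le fun n hn =>
    h.abs_l2Norm_iteratedDeriv_sq_sub_le hm hn hcd hK hP

theorem continuousOn_hNorm_sq (h : IsGKdVSolution F T U) (hm : 2 ≤ m) {M : ℝ}
    (hM : ∀ t ∈ Icc 0 T, hNorm m (U t) ≤ M) :
    ContinuousOn (fun t => hNorm m (U t) ^ 2) (Icc 0 T) := by
  obtain ⟨P, hP₀, hP⟩ := exists_hNorm_eval_le (m := m) (by lia) h.eval_zero M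
  have hC : 0 ≤ growthConst m * (P * M ^ 2) :=
    mul_nonneg (growthConst_pos m).le (by positivity)
  refine (LipschitzOnWith.of_dist_le_mul (K := ⟨_, hC⟩) fun d hd c hc => ?_).continuousOn
  have hcd := uIcc_subset_Icc hc hd
  exact (h.abs_hNorm_sq_sub_le hm hcd (fun t ht => hM t (hcd ht))
    fun t ht => hP _ (h.isSchwartz t) (hM t (hcd ht))).trans_eq (mul_assoc _ _ _).symm

theorem hNorm_le_two_mul (h : IsGKdVSolution F T U) (hm : 2 ≤ m) {M P : ℝ}
    (hM : ∀ t ∈ Icc 0 T, hNorm m (U t) ≤ M) (h₀ : 0 < hNorm m (U 0))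
    (hP : ∀ t, hNorm m (U t) ≤ 2 * hNorm m (U 0) → hNorm m (fun x => F.eval (U t x)) ≤ P)
    (hT : growthConst m * P * T ≤ 1 / 2) {t : ℝ} (ht : t ∈ Icc 0 T) :
    hNorm m (U t) ≤ 2 * hNorm m (U 0) := by
  set z := hNorm m (U 0)
  have hsq {τ : ℝ} (hτ : hNorm m (U τ) ^ 2 ≤ (2 * z) ^ 2) : hNorm m (U τ) ≤ 2 * z :=
    le_of_sq_le_sq hτ (by positivity)
  refine hsq (lt_of_continuousOn_of_forall_le_imp_lt (f := fun t => hNorm m (U t) ^ 2)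
    (h.continuousOn_hNorm_sq hm hM) ?_ (fun d hd hτ => ?_) ht).le
  · exact pow_lt_pow_left₀ (by linarith) h₀.le two_ne_zero
  · have hd₀ : uIcc 0 d = Icc 0 d := uIcc_of_le hd.1
    have hdT : uIcc 0 d ⊆ Icc 0 T := hd₀.trans_subset (Icc_subset_Icc_right hd.2)
    have hK (τ : ℝ) (hτd : τ ∈ uIcc 0 d) : hNorm m (U τ) ≤ 2 * z := hsq (hτ τ (hd₀ ▸ hτd))
    have hP₀ : 0 ≤ P := (hNorm_nonneg _ _).trans (hP 0 (by linarith))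
    have hgrowth := (le_abs_self _).trans
      (h.abs_hNorm_sq_sub_le hm hdT hK fun τ hτd => hP τ (hK τ hτd))
    have hG := (growthConst_pos m).le
    calc hNorm m (U d) ^ 2 ≤ z ^ 2 + growthConst m * (P * (2 * z) ^ 2 * |d - 0|) :=
          sub_le_iff_le_add'.1 hgrowth
      _ ≤ z ^ 2 + growthConst m * (P * (2 * z) ^ 2 * T) := by
        rw [sub_zero, abs_of_nonneg hd.1]
        gcongr
        exact hd.2
      _ = z ^ 2 + growthConst m * P * T * (2 * z) ^ 2 := by ring
      _ ≤ z ^ 2 + 1 / 2 * (2 * z) ^ 2 := by gcongr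
      _ < (2 * z) ^ 2 := by linarith [pow_pos h₀ 2]

end IsGKdVSolution

/-- The polynomial `F(y) = ∑_{j=1}^k a_j yʲ` of the gKdV equation. -/
noncomputable def gKdVPolynomial (k : ℕ) (a : ℕ → ℝ) : Polynomial ℝ :=
  ∑ j ∈ Finset.Icc 1 k, Polynomial.C (a j) * Polynomial.X ^ j

theorem eval_gKdVPolynomial (k : ℕ) (a : ℕ → ℝ) (y : ℝ) :
    (gKdVPolynomial k a).eval y = ∑ j ∈ Finset.Icc 1 k, a j * y ^ j := by
  simp [gKdVPolynomial, Polynomial.eval_finsetSum]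

theorem eval_zero_gKdVPolynomial (k : ℕ) (a : ℕ → ℝ) : (gKdVPolynomial k a).eval 0 = 0 := by
  rw [eval_gKdVPolynomial]
  refine Finset.sum_eq_zero fun j hj => ?_
  rw [zero_pow (Nat.one_le_iff_ne_zero.1 (Finset.mem_Icc.1 hj).1), mul_zero]

theorem gKdVPolynomial_one_one : gKdVPolynomial 1 1 = Polynomial.X := by
  simp [gKdVPolynomial]

/-- The numerical factor `c_s`, for `m = s + 1`, in the smallness condition on `T`. -/
noncomputable def lifespanConst (k m : ℕ) : ℝ :=
  (2 * growthConst m * (2 * algebraConst m) ^ k)⁻¹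

theorem lifespanConst_pos (k m : ℕ) : 0 < lifespanConst k m := by
  have hG := growthConst_pos m
  have hc := one_le_algebraConst m
  unfold lifespanConst
  positivity

theorem lifespanConst_antitone (m : ℕ) : Antitone fun k => lifespanConst k m := fun j k hjk => by
  have hG := growthConst_pos m
  have hc := one_le_algebraConst m
  have h2c : 1 ≤ 2 * algebraConst m := by linarith
  exact inv_anti₀ (by positivity) (by gcongr)

theorem hNorm_eval_gKdVPolynomial_le {m : ℕ} {k : ℕ} {a : ℕ → ℝ} {A K : ℝ} {f : ℝ → ℝ} (hm : 1 ≤ m)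
    (hA : 0 ≤ A) (ha : ∀ j ∈ Finset.Icc 1 k, |a j| ≤ A) (hf : IsSchwartz f) (hK : hNorm m f ≤ K) :
    hNorm m (fun x => (gKdVPolynomial k a).eval (f x)) ≤
      algebraConst m ^ k * (A * ∑ j ∈ Finset.Icc 1 k, K ^ j) := by
  have hf₀ := hNorm_nonneg m f
  have hc := one_le_algebraConst m
  simp only [eval_gKdVPolynomial]
  refine (hNorm_sum_mul_pow_le hm hf ha).trans ?_
  gcongr

theorem sum_Icc_two_mul_pow_le (k : ℕ) {z : ℝ} (hz : 0 ≤ z) :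
    ∑ j ∈ Finset.Icc 1 k, (2 * z) ^ j ≤ 2 ^ k * ∑ j ∈ Finset.Icc 1 k, z ^ j := by
  rw [Finset.mul_sum]
  refine Finset.sum_le_sum fun j hj => ?_
  rw [mul_pow]
  gcongr
  · exact one_le_two
  · exact (Finset.mem_Icc.1 hj).2

theorem IsGKdVSolution.hNorm_le_two_mul_of_le_lifespanConst {k m : ℕ} {a : ℕ → ℝ} {A M T : ℝ}
    {U : ℝ → ℝ → ℝ} (h : IsGKdVSolution (gKdVPolynomial k a) T U) (hm : 2 ≤ m) (hA : 0 ≤ A)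
    (ha : ∀ j ∈ Finset.Icc 1 k, |a j| ≤ A) (hM : ∀ t ∈ Icc 0 T, hNorm m (U t) ≤ M)
    (h₀ : 0 < hNorm m (U 0))
    (hT : T * (A * ∑ j ∈ Finset.Icc 1 k, hNorm m (U 0) ^ j) ≤ lifespanConst k m)
    {t : ℝ} (ht : t ∈ Icc 0 T) : hNorm m (U t) ≤ 2 * hNorm m (U 0) := by
  have hG := growthConst_pos m
  have hc := one_le_algebraConst m
  have hT₀ : 0 ≤ T := ht.1.trans ht.2
  refine h.hNorm_le_two_mul hm hM h₀ (fun t ht =>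
    hNorm_eval_gKdVPolynomial_le (by lia) hA ha (h.isSchwartz t) ht) ?_ ht
  calc growthConst m * (algebraConst m ^ k *
        (A * ∑ j ∈ Finset.Icc 1 k, (2 * hNorm m (U 0)) ^ j)) * T
      ≤ growthConst m * (algebraConst m ^ k *
        (A * (2 ^ k * ∑ j ∈ Finset.Icc 1 k, hNorm m (U 0) ^ j))) * T := by
        gcongr
        exact sum_Icc_two_mul_pow_le k h₀.le
    _ = growthConst m * (2 * algebraConst m) ^ k *
        (T * (A * ∑ j ∈ Finset.Icc 1 k, hNorm m (U 0) ^ j)) := by ring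
    _ ≤ growthConst m * (2 * algebraConst m) ^ k * lifespanConst k m := by gcongr
    _ = 1 / 2 := by
      unfold lifespanConst
      field_simp

end Quantitative

/-! ### Difference of two solutions -/

section Difference

open Set

theorem le_add_two_mul_of_sq_le {ι : Type*} {s : Set ι} {z : ι → ℝ} {z₀ r : ℝ}
    (hz : ∀ i, 0 ≤ z i) (hz₀ : 0 ≤ z₀) (hr : 0 ≤ r) (hbdd : BddAbove (z '' s))
    (H : ∀ Y, (∀ i ∈ s, z i ≤ Y) → ∀ i ∈ s, z i ^ 2 ≤ z₀ ^ 2 + 2 * (Y * r)) {i : ι} (hi : i ∈ s) :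
    z i ≤ z₀ + 2 * r := by
  set Y := sSup (z '' s)
  have hY (j : ι) (hj : j ∈ s) : z j ≤ Y := le_csSup hbdd (mem_image_of_mem z hj)
  have hY₀ : 0 ≤ Y := (hz i).trans (hY i hi)
  have hle : Y ≤ √(z₀ ^ 2 + 2 * (Y * r)) := csSup_le ⟨z i, mem_image_of_mem z hi⟩ <| by
    rintro _ ⟨j, hj, rfl⟩
    exact Real.le_sqrt_of_sq_le (H Y hY j hj)
  have hsq : Y ^ 2 ≤ z₀ ^ 2 + 2 * (Y * r) :=
    (Real.le_sqrt hY₀ (by positivity)).1 hle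
  exact (hY i hi).trans (by nlinarith)

variable {w g : ℝ → ℝ → ℝ} {c d M Y r : ℝ} {m : ℕ}

theorem abs_hNorm_sq_sub_le_of_timeDeriv_eq (hw : SpacetimeSmooth w) (hws : ∀ t, IsSchwartz (w t))
    (hgs : ∀ t, IsSchwartz (g t))
    (heq : ∀ t ∈ uIcc c d, ∀ x, timeDeriv w t x = -(iteratedDeriv 3 (w t) x + g t x))
    (hM : ∀ t ∈ uIcc c d, hNorm (m + 1) (w t) ≤ M) (hY : ∀ t ∈ uIcc c d, hNorm m (w t) ≤ Y)
    (hr : ∀ t ∈ uIcc c d, hNorm m (g t) ≤ r) :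
    |hNorm m (w d) ^ 2 - hNorm m (w c) ^ 2| ≤ (m + 1) * (2 * (Y * r) * |d - c|) := by
  refine abs_hNorm_sq_sub_hNorm_sq_le fun n hn => ?_
  refine (abs_l2Norm_sq_sub_le_of_timeDeriv_eq (v := fun t => iteratedDeriv n (w t))
    (b := fun _ _ => 0) (g := fun t => iteratedDeriv n (g t)) (Y := Y) (Z := M) (B := 0) (p := 0)
    (r := r) (hw.iteratedDeriv n) (fun t => (hws t).iteratedDeriv n) (fun _ => IsSchwartz.zero)
    (fun t => (hgs t).iteratedDeriv n) (fun t ht x => ?_)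
    (fun t ht => (l2Norm_iteratedDeriv_le_hNorm hn _).trans (hY t ht)) (fun t ht => ?_)
    (fun _ _ _ => by simp) (fun t _ x => by simp)
    fun t ht => (l2Norm_iteratedDeriv_le_hNorm hn _).trans (hr t ht)).trans_eq (by ring)
  · rw [timeDeriv_iteratedDeriv_eq_of_timeDeriv_eq hw (hws t) (hgs t) (heq t ht), zero_mul,
      add_zero]
  · rw [← iteratedDeriv_succ]
    exact (l2Norm_iteratedDeriv_le_hNorm (by lia) _).trans (hM t ht)

theorem hNorm_le_add_of_timeDeriv_eq (hw : SpacetimeSmooth w) (hws : ∀ t, IsSchwartz (w t))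
    (hgs : ∀ t, IsSchwartz (g t))
    (heq : ∀ t ∈ uIcc c d, ∀ x, timeDeriv w t x = -(iteratedDeriv 3 (w t) x + g t x))
    (hM : ∀ t ∈ uIcc c d, hNorm (m + 1) (w t) ≤ M) (hr : ∀ t ∈ uIcc c d, hNorm m (g t) ≤ r) :
    hNorm m (w d) ≤ hNorm m (w c) + 2 * ((m + 1) * r * |d - c|) := by
  have hr₀ : 0 ≤ r := (hNorm_nonneg _ _).trans (hr c left_mem_uIcc)
  refine le_add_two_mul_of_sq_le (s := uIcc c d) (z := fun t => hNorm m (w t))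
    (fun t => hNorm_nonneg _ _) (hNorm_nonneg _ _) (by positivity) ⟨M, ?_⟩ (fun Y hY t ht => ?_)
    right_mem_uIcc
  · rintro _ ⟨t, ht, rfl⟩
    exact (hNorm_mono m.le_succ _).trans (hM t ht)
  · have hsub : uIcc c t ⊆ uIcc c d := uIcc_subset_uIcc_left ht
    have hY₀ : 0 ≤ Y := (hNorm_nonneg _ _).trans (hY t ht)
    have hgrowth := (le_abs_self _).trans (abs_hNorm_sq_sub_le_of_timeDeriv_eq hw hws hgs
      (fun τ hτ => heq τ (hsub hτ)) (fun τ hτ => hM τ (hsub hτ)) (fun τ hτ => hY τ (hsub hτ))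
      fun τ hτ => hr τ (hsub hτ))
    calc hNorm m (w t) ^ 2 ≤ hNorm m (w c) ^ 2 + (m + 1) * (2 * (Y * r) * |t - c|) :=
          sub_le_iff_le_add'.1 hgrowth
      _ ≤ hNorm m (w c) ^ 2 + (m + 1) * (2 * (Y * r) * |d - c|) := by
        gcongr _ + _ * (_ * ?_)
        exact abs_sub_left_of_mem_uIcc ht
      _ = hNorm m (w c) ^ 2 + 2 * (Y * ((m + 1) * r * |d - c|)) := by ring

theorem IsGKdVSolution.hNorm_sub_le_add {F G : Polynomial ℝ} {T K L R : ℝ} {u U : ℝ → ℝ → ℝ}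
    (hu : IsGKdVSolution F T u) (hU : IsGKdVSolution G T U)
    (hK : ∀ t ∈ Icc 0 T, hNorm (m + 1) (u t) ≤ K) (hL : ∀ t ∈ Icc 0 T, hNorm (m + 1) (U t) ≤ L)
    (hr : ∀ t ∈ Icc 0 T, hNorm m (fun x => F.eval (u t x) * deriv (u t) x) ≤ r)
    (hR : ∀ t ∈ Icc 0 T, hNorm m (fun x => G.eval (U t x) * deriv (U t) x) ≤ R)
    {t : ℝ} (ht : t ∈ Icc 0 T) :
    hNorm m (fun x => u t x - U t x) ≤
      hNorm m (fun x => u 0 x - U 0 x) + 2 * ((m + 1) * (r + R) * t) := by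
  have hus := hu.isSchwartz
  have hUs := hU.isSchwartz
  have hfs (t : ℝ) : IsSchwartz fun x => F.eval (u t x) * deriv (u t) x :=
    (hu.isSchwartz_eval t).mul (hus t).deriv
  have hgs (t : ℝ) : IsSchwartz fun x => G.eval (U t x) * deriv (U t) x :=
    (hU.isSchwartz_eval t).mul (hUs t).deriv
  have hsub : uIcc 0 t ⊆ Icc 0 T := uIcc_subset_Icc ⟨le_rfl, ht.1.trans ht.2⟩ ht
  refine (hNorm_le_add_of_timeDeriv_eq (w := fun t x => u t x - U t x)
    (g := fun t x => F.eval (u t x) * deriv (u t) x - G.eval (U t x) * deriv (U t) x)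
    (hu.smooth.sub hU.smooth) (fun t => (hus t).sub (hUs t)) (fun t => (hfs t).sub (hgs t))
    (fun τ hτ x => ?_)
    (fun τ hτ => (hNorm_sub_le _ (hus τ) (hUs τ)).trans
      (add_le_add (hK τ (hsub hτ)) (hL τ (hsub hτ))))
    fun τ hτ => (hNorm_sub_le _ (hfs τ) (hgs τ)).trans
      (add_le_add (hr τ (hsub hτ)) (hR τ (hsub hτ)))).trans_eq ?_
  · have hdiff := ((hu.smooth.hasDerivAt τ x).sub (hU.smooth.hasDerivAt τ x)).deriv
    have hiter : iteratedDeriv 3 (fun x => u τ x - U τ x) x =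
        iteratedDeriv 3 (u τ) x - iteratedDeriv 3 (U τ) x :=
      iteratedDeriv_fun_sub (hus τ).contDiff.contDiffAt (hUs τ).contDiff.contDiffAt
    rw [hiter]
    refine hdiff.trans ?_
    rw [hu.timeDeriv_eq τ (hsub hτ), hU.timeDeriv_eq τ (hsub hτ)]
    ring
  · rw [sub_zero, abs_of_nonneg ht.1]

end Difference

/-! ### Proximity of KdV and gKdV solutions -/

section Proximity

open Set

variable {k s : ℕ} {a : ℕ → ℝ} {A B c C ε T : ℝ}

/-- The constant in the bound `‖F(f) f'‖_{Hˢ} ≤ D · max (ε²) (ε^{k+1})` for `‖f‖_{Hˢ⁺¹} ≤ c ε` and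
`F` of degree at most `k` with coefficients bounded by `A`. -/
noncomputable def nonlinearConst (k s : ℕ) (A c : ℝ) : ℝ :=
  algebraConst s ^ (k + 1) * (A * ∑ j ∈ Finset.Icc 1 k, c ^ (j + 1))

theorem nonlinearConst_nonneg (k s : ℕ) (hA : 0 ≤ A) (hc : 0 ≤ c) : 0 ≤ nonlinearConst k s A c := by
  have halg := one_le_algebraConst s
  unfold nonlinearConst
  positivity

theorem hNorm_eval_mul_deriv_le {f : ℝ → ℝ} {K : ℝ} (hs : 1 ≤ s) (hA : 0 ≤ A)
    (ha : ∀ j ∈ Finset.Icc 1 k, |a j| ≤ A) (hf : IsSchwartz f) (hK : hNorm (s + 1) f ≤ K) :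
    hNorm s (fun x => (gKdVPolynomial k a).eval (f x) * deriv f x) ≤ nonlinearConst k s A K := by
  have halg := one_le_algebraConst s
  have hK₀ : 0 ≤ K := (hNorm_nonneg _ _).trans hK
  calc hNorm s (fun x => (gKdVPolynomial k a).eval (f x) * deriv f x)
      ≤ algebraConst s * (hNorm s (fun x => (gKdVPolynomial k a).eval (f x)) * hNorm s (deriv f)) :=
        hNorm_mul_le hs (hf.eval (eval_zero_gKdVPolynomial k a)) hf.deriv
    _ ≤ algebraConst s * (algebraConst s ^ k * (A * ∑ j ∈ Finset.Icc 1 k, K ^ j) * K) := by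
        gcongr
        · exact hNorm_nonneg _ _
        · exact hNorm_eval_gKdVPolynomial_le hs hA ha hf ((hNorm_mono s.le_succ f).trans hK)
        · exact (hNorm_deriv_le s f).trans hK
    _ = nonlinearConst k s A K := by
        simp only [nonlinearConst, pow_succ _ (_ : ℕ), ← Finset.sum_mul]
        ring

theorem pow_le_max_pow_pow {m n i : ℕ} (hε : 0 ≤ ε) (hmi : m ≤ i) (hin : i ≤ n) :
    ε ^ i ≤ max (ε ^ m) (ε ^ n) := by
  rcases le_total ε 1 with h | h
  · exact (pow_le_pow_of_le_one hε h hmi).trans (le_max_left _ _)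
  · exact (pow_le_pow_right₀ h hin).trans (le_max_right _ _)

theorem nonlinearConst_mul_le (k s : ℕ) (hA : 0 ≤ A) (hc : 0 ≤ c) (hε : 0 ≤ ε) :
    nonlinearConst k s A (c * ε) ≤ nonlinearConst k s A c * max (ε ^ 2) (ε ^ (k + 1)) := by
  have halg := one_le_algebraConst s
  simp only [nonlinearConst, mul_assoc]
  rw [Finset.sum_mul]
  gcongr with j hj
  rw [mul_pow]
  obtain ⟨h1j, hjk⟩ := Finset.mem_Icc.1 hj
  gcongr
  exact pow_le_max_pow_pow hε (by lia) (by lia)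

theorem IsGKdVSolution.hNorm_eval_mul_deriv_le {U : ℝ → ℝ → ℝ} {M : ℝ}
    (h : IsGKdVSolution (gKdVPolynomial k a) T U) (hs : 1 ≤ s) (hA : 0 ≤ A)
    (ha : ∀ j ∈ Finset.Icc 1 k, |a j| ≤ A) (hM : ∀ t ∈ Icc 0 T, hNorm (s + 1) (U t) ≤ M)
    (h₀ : 0 < hNorm (s + 1) (U 0))
    (hT : T * (A * ∑ j ∈ Finset.Icc 1 k, hNorm (s + 1) (U 0) ^ j) ≤ lifespanConst k (s + 1))
    (hc : 0 ≤ c) (hε : 0 ≤ ε) (hUε : hNorm (s + 1) (U 0) ≤ c * ε) {t : ℝ} (ht : t ∈ Icc 0 T) :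
    hNorm s (fun x => (gKdVPolynomial k a).eval (U t x) * deriv (U t) x) ≤
      nonlinearConst k s A (2 * c) * max (ε ^ 2) (ε ^ (k + 1)) := by
  have hU : hNorm (s + 1) (U t) ≤ 2 * c * ε :=
    (h.hNorm_le_two_mul_of_le_lifespanConst (by lia) hA ha hM h₀ hT ht).trans (by linarith)
  exact (GKdV.hNorm_eval_mul_deriv_le hs hA ha (h.isSchwartz t) hU).trans
    (nonlinearConst_mul_le k s hA (by positivity) hε)

/-- The constant `C̃ₛ` in the proximity estimate, with `c₀` and `c` bounding the initial data of KdV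
and gKdV relative to `ε`, and `C` the initial distance relative to `max (ε²) (ε^{k+1})`. -/
noncomputable def proximityConst (k s : ℕ) (A c₀ c C T : ℝ) : ℝ :=
  C + 2 * ((s + 1) * (nonlinearConst 1 s 1 (2 * c₀) + nonlinearConst k s A (2 * c)) * T)

theorem proximityConst_pos {c₀ : ℝ} (k s : ℕ) (hA : 0 ≤ A) (hc₀ : 0 ≤ c₀) (hc : 0 ≤ c) (hC : 0 < C)
    (hT : 0 ≤ T) : 0 < proximityConst k s A c₀ c C T := by
  have hD₀ := nonlinearConst_nonneg 1 s zero_le_one (mul_nonneg zero_le_two hc₀)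
  have hD := nonlinearConst_nonneg k s hA (mul_nonneg zero_le_two hc)
  unfold proximityConst
  positivity

theorem hNorm_sub_le_proximityConst {u U : ℝ → ℝ → ℝ} {c₀ : ℝ}
    (hu : IsGKdVSolution Polynomial.X T u) (hU : IsGKdVSolution (gKdVPolynomial k a) T U)
    (hB : ∀ t ∈ Icc 0 T, ∀ x, |u t x - U t x| ≤ B) (hk : 1 ≤ k) (hs : 1 ≤ s) (hA : 0 ≤ A)
    (ha : ∀ j ∈ Finset.Icc 1 k, |a j| ≤ A)
    (hu₀ : 0 < hNorm (s + 1) (u 0)) (hU₀ : 0 < hNorm (s + 1) (U 0))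
    (hTu : T * hNorm (s + 1) (u 0) ≤ lifespanConst k (s + 1))
    (hTU : T * (A * ∑ j ∈ Finset.Icc 1 k, hNorm (s + 1) (U 0) ^ j) ≤ lifespanConst k (s + 1))
    (hc₀ : 0 ≤ c₀) (hc : 0 ≤ c) (hε : 0 ≤ ε)
    (huε : hNorm (s + 1) (u 0) ≤ c₀ * ε) (hUε : hNorm (s + 1) (U 0) ≤ c * ε)
    (hdist : hNorm s (fun x => u 0 x - U 0 x) ≤ C * max (ε ^ 2) (ε ^ (k + 1)))
    {t : ℝ} (ht : t ∈ Icc 0 T) :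
    hNorm s (fun x => u t x - U t x) ≤
      proximityConst k s A c₀ c C T * max (ε ^ 2) (ε ^ (k + 1)) := by
  obtain ⟨K, hK⟩ := hu.exists_forall_hNorm_le_of_kdv (s + 1)
  have hUbdd (τ : ℝ) (hτ : τ ∈ Icc 0 T) (x : ℝ) : |U τ x| ≤ K + B := by
    have hux := (abs_le_hNorm (by lia) (hu.isSchwartz τ) x).trans (hK τ hτ)
    have htri := abs_sub (u τ x) (u τ x - U τ x)
    rw [sub_sub_cancel] at htri
    exact htri.trans (add_le_add hux (hB τ hτ x))
  obtain ⟨L, hL⟩ := hU.exists_forall_hNorm_le_of_forall_abs_le hUbdd (s + 1)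
  set μ := max (ε ^ 2) (ε ^ (k + 1))
  have hμ : max (ε ^ 2) (ε ^ (1 + 1)) ≤ μ := (max_self _).trans_le (le_max_left _ _)
  have hD := nonlinearConst_nonneg 1 s zero_le_one (mul_nonneg zero_le_two hc₀)
  have hD' := nonlinearConst_nonneg k s hA (mul_nonneg zero_le_two hc)
  have hu' : IsGKdVSolution (gKdVPolynomial 1 1) T u := gKdVPolynomial_one_one.symm ▸ hu
  have hTu' : T * (1 * ∑ j ∈ Finset.Icc 1 1, hNorm (s + 1) (u 0) ^ j) ≤
      lifespanConst 1 (s + 1) := by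
    simpa using hTu.trans (lifespanConst_antitone (s + 1) hk)
  calc hNorm s (fun x => u t x - U t x)
      ≤ hNorm s (fun x => u 0 x - U 0 x) + 2 * ((s + 1) * (nonlinearConst 1 s 1 (2 * c₀) * μ +
          nonlinearConst k s A (2 * c) * μ) * t) :=
        hu'.hNorm_sub_le_add hU hK hL
          (fun τ hτ => (hu'.hNorm_eval_mul_deriv_le hs zero_le_one (by simp) hK hu₀ hTu' hc₀ hε huε
            hτ).trans (mul_le_mul_of_nonneg_left hμ hD))
          (fun τ hτ => hU.hNorm_eval_mul_deriv_le hs hA ha hL hU₀ hTU hc hε hUε hτ) ht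
    _ ≤ C * μ + 2 * ((s + 1) * (nonlinearConst 1 s 1 (2 * c₀) * μ +
          nonlinearConst k s A (2 * c) * μ) * T) := by
        gcongr
        exact ht.2
    _ = proximityConst k s A c₀ c C T * μ := by
        unfold proximityConst
        ring

theorem isGKdVSolution_of_isSchwartzSolution {F : Polynomial ℝ} {T : ℝ} {U : ℝ → SchwartzMap ℝ ℝ}
    (h₀ : F.eval 0 = 0) (h : IsSchwartzSolution (fun y => F.eval y) T U) :
    IsGKdVSolution F T fun t => U t where
  smooth := h.1
  isSchwartz t := by fun_prop
  eval_zero := h₀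
  timeDeriv_eq t ht x := by
    rw [timeDeriv]
    linarith [h.2 t ht x]

theorem coefA_nonneg (k : ℕ) (a : ℕ → ℝ) : 0 ≤ coefA k a := NNReal.coe_nonneg _

theorem abs_le_coefA {k j : ℕ} (a : ℕ → ℝ) (hj : j ∈ Finset.Icc 1 k) : |a j| ≤ coefA k a := by
  have hsup : (j : NNReal) * ‖a j‖₊ ≤ (Finset.Icc 1 k).sup fun i => (i : NNReal) * ‖a i‖₊ :=
    Finset.le_sup (f := fun i : ℕ => (i : NNReal) * ‖a i‖₊) hj
  have hone : (1 : NNReal) ≤ j := Nat.one_le_cast.2 (Finset.mem_Icc.1 hj).1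
  exact NNReal.coe_le_coe.2 ((le_mul_of_one_le_left zero_le hone).trans hsup)

theorem abs_le_linfNorm {f : ℝ → ℝ} (hf : IsSchwartz f) (x : ℝ) : |f x| ≤ linfNorm f := by
  obtain ⟨B, -, hB⟩ := hf.exists_abs_le
  refine le_ciSup (f := fun x => |f x|) ⟨B, ?_⟩ x
  rintro _ ⟨y, rfl⟩
  exact hB y

theorem linfNorm_le_hNorm {f : ℝ → ℝ} {m : ℕ} (hm : 1 ≤ m) (hf : IsSchwartz f) :
    linfNorm f ≤ hNorm m f :=
  ciSup_le fun x => abs_le_hNorm hm hf x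

theorem iSup_linfNorm_le_and_iSup_hNorm_le {ι : Type*} {w : ι → ℝ → ℝ} {m : ℕ} {R : ℝ}
    (hm : 1 ≤ m) (hw : ∀ i, IsSchwartz (w i)) (hR : 0 ≤ R)
    (H : ∀ B, (∀ i x, |w i x| ≤ B) → ∀ i, hNorm m (w i) ≤ R) :
    (⨆ i, linfNorm (w i)) ≤ (⨆ i, hNorm m (w i)) ∧ (⨆ i, hNorm m (w i)) ≤ R := by
  have hle (i : ι) : linfNorm (w i) ≤ hNorm m (w i) := linfNorm_le_hNorm hm (hw i)
  by_cases hbdd : BddAbove (range fun i => linfNorm (w i))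
  · obtain ⟨B, hB⟩ := hbdd
    have hbound := H B fun i x => (abs_le_linfNorm (hw i) x).trans (hB ⟨i, rfl⟩)
    have hbdd' : BddAbove (range fun i => hNorm m (w i)) := ⟨R, forall_mem_range.2 hbound⟩
    exact ⟨Real.iSup_le (fun i => (hle i).trans (le_ciSup hbdd' i))
      (Real.iSup_nonneg fun i => hNorm_nonneg _ _), Real.iSup_le hbound hR⟩
  · -- Both suprema are then unbounded, and the real supremum of an unbounded family is `0`.
    have hbdd' : ¬BddAbove (range fun i => hNorm m (w i)) := fun ⟨B, hB⟩ =>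
      hbdd ⟨B, forall_mem_range.2 fun i => (hle i).trans (hB ⟨i, rfl⟩)⟩
    rw [Real.iSup_of_not_bddAbove hbdd, Real.iSup_of_not_bddAbove hbdd']
    exact ⟨le_rfl, hR⟩

end Proximity

end GKdV

open GKdV in
theorem kdv_gkdv_Hs_proximity_general (k s : ℕ) (hs : 1 ≤ s) :
    ∃ cs : ℝ, 0 < cs ∧
      ∀ a : ℕ → ℝ, (∃ j ∈ Finset.Icc 1 k, a j ≠ 0) →
        ∀ c₀ C₀ C T : ℝ, 0 < c₀ → 0 < C₀ → 0 < C → 0 < T →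
          ∃ Ct : ℝ, 0 < Ct ∧
            ∀ ε : ℝ, 0 < ε →
              ∀ u U : ℝ → SchwartzMap ℝ ℝ,
                IsSchwartzSolution (fun y => y) T u →
                IsSchwartzSolution (fun y => ∑ j ∈ Finset.Icc 1 k, a j * y ^ j) T U →
                u 0 ≠ 0 → U 0 ≠ 0 →
                T ≤ cs * min
                      (coefA k a * ∑ j ∈ Finset.Icc 1 k, hNorm (s + 1) (⇑(U 0)) ^ j)⁻¹
                      (hNorm (s + 1) (⇑(u 0)))⁻¹ →
                hNorm (s + 1) (⇑(u 0)) ≤ c₀ * ε →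
                hNorm (s + 1) (⇑(U 0)) ≤ C₀ * ε →
                hNorm s (fun x => u 0 x - U 0 x) ≤ C * max (ε ^ 2) (ε ^ (k + 1)) →
                (⨆ t : Set.Icc (0 : ℝ) T, linfNorm (fun x => u (t : ℝ) x - U (t : ℝ) x))
                    ≤ (⨆ t : Set.Icc (0 : ℝ) T,
                        hNorm s (fun x => u (t : ℝ) x - U (t : ℝ) x)) ∧
                  (⨆ t : Set.Icc (0 : ℝ) T, hNorm s (fun x => u (t : ℝ) x - U (t : ℝ) x))
                    ≤ Ct * max (ε ^ 2) (ε ^ (k + 1)) := by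
  have hcs := lifespanConst_pos k (s + 1)
  refine ⟨lifespanConst k (s + 1), hcs, fun a ⟨j, hj, _⟩ c₀ C₀ C T hc₀ hC₀ hC hT => ?_⟩
  have hA := coefA_nonneg k a
  have hCt := proximityConst_pos k s hA hc₀.le hC₀.le hC hT.le
  refine ⟨proximityConst k s (coefA k a) c₀ C₀ C T, hCt,
    fun ε hε u U hu hU hu₀ hU₀ hTle huε hUε hdist => ?_⟩
  have hsol : IsGKdVSolution Polynomial.X T fun t => u t :=
    isGKdVSolution_of_isSchwartzSolution Polynomial.eval_X (by simpa only [Polynomial.eval_X])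
  have hSol : IsGKdVSolution (gKdVPolynomial k a) T fun t => U t :=
    isGKdVSolution_of_isSchwartzSolution (eval_zero_gKdVPolynomial k a)
      (by simpa only [eval_gKdVPolynomial])
  have hpos {f : SchwartzMap ℝ ℝ} (hf : f ≠ 0) : 0 < hNorm (s + 1) f :=
    hNorm_pos (by lia) (by fun_prop) (DFunLike.coe_injective.ne hf)
  obtain ⟨hTU, hTu⟩ := le_min_iff.1 (hTle.trans_eq (mul_min_of_nonneg _ _ hcs.le))
  refine iSup_linfNorm_le_and_iSup_hNorm_le hs (fun t => by fun_prop) (by positivity)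
    fun B hB t => hNorm_sub_le_proximityConst hsol hSol (fun τ hτ => hB ⟨τ, hτ⟩)
      (Finset.nonempty_Icc.1 ⟨j, hj⟩) hs hA (fun i hi => abs_le_coefA a hi) (hpos hu₀) (hpos hU₀)
      (mul_le_of_le_mul_inv₀ hcs.le (hNorm_nonneg _ _) hTu)
      (mul_le_of_le_mul_inv₀ hcs.le ?_ hTU) hc₀.le hC₀.le hε.le huε hUε hdist t.2
  exact mul_nonneg hA (Finset.sum_nonneg fun j _ => pow_nonneg (hNorm_nonneg _ _) j)

/-- `H^s` and `L^∞` proximity between the KdV equation and the gKdV equation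
`∂ₜU + ∂ₓ³U + F(U)∂ₓU = 0`, `F(y) = ∑_{j=1}^k a_j yʲ` with `a_k ≠ 0`:
`sup_{t∈[0,T]} ‖u(t) − U(t)‖_{L^∞} ≤ sup_{t∈[0,T]} ‖u(t) − U(t)‖_{H^s}
  ≤ C̃ₛ·max{ε², ε^{k+1}}`. -/
theorem kdv_gkdv_Hs_proximity (k : ℕ) (hk : 1 ≤ k) (s : ℕ) (hs : 1 ≤ s) (M : ℝ) :
    ∃ cs : ℝ, 0 < cs ∧
      ∀ a : ℕ → ℝ, |a k| = M → a k ≠ 0 →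
        ∀ c₀ C₀ C T : ℝ, 0 < c₀ → 0 < C₀ → 0 < C → 0 < T →
          ∃ Ct : ℝ, 0 < Ct ∧
            ∀ ε : ℝ, 0 < ε →
              ∀ u U : ℝ → SchwartzMap ℝ ℝ,
                IsSchwartzSolution (fun y => y) T u →
                IsSchwartzSolution (fun y => ∑ j ∈ Finset.Icc 1 k, a j * y ^ j) T U →
                u 0 ≠ 0 → U 0 ≠ 0 →
                T ≤ cs * min
                      (coefA k a * ∑ j ∈ Finset.Icc 1 k, hNorm (s + 1) (⇑(U 0)) ^ j)⁻¹
                      (hNorm (s + 1) (⇑(u 0)))⁻¹ →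
                hNorm (s + 1) (⇑(u 0)) ≤ c₀ * ε →
                hNorm (s + 1) (⇑(U 0)) ≤ C₀ * ε →
                hNorm s (fun x => u 0 x - U 0 x) ≤ C * max (ε ^ 2) (ε ^ (k + 1)) →
                (⨆ t : Set.Icc (0 : ℝ) T, linfNorm (fun x => u (t : ℝ) x - U (t : ℝ) x))
                    ≤ (⨆ t : Set.Icc (0 : ℝ) T,
                        hNorm s (fun x => u (t : ℝ) x - U (t : ℝ) x)) ∧
                  (⨆ t : Set.Icc (0 : ℝ) T, hNorm s (fun x => u (t : ℝ) x - U (t : ℝ) x))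
                    ≤ Ct * max (ε ^ 2) (ε ^ (k + 1)) := by
  obtain ⟨cs, hcs, H⟩ := kdv_gkdv_Hs_proximity_general k s hs
  exact ⟨cs, hcs, fun a _ ha => H a ⟨k, Finset.right_mem_Icc.2 hk, ha⟩⟩
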